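/- arXiv:1203.2238 — 3 statements merged into one kernel-verified Lean document; each statement's English description precedes it below -/
import Mathlib

section
/- Gradient flow property of the anisoperimetric ratio: let σ be an anisotropy function with 1-homogeneous extension Φ(ρ cos θ, ρ sin θ) = ρσ(θ), let x be a smooth closed curve with A(x) > 0, and define the anisoperimetric ratio Π_σ(x) = L_σ(x)²/(4|W_σ|·A(x)) with L_σ(x) = ∫₀¹ Φ(x'(u)) du and A(x) = (1/2)∫₀¹ det(x(u), x'(u)) du. Then for any smooth 1-periodic variation y : ℝ → ℝ², (d/dε)|_{ε=0} Π_σ(x + εy) = −(L_σ/(2|W_σ|A))·∫₀¹ (k_σ(u) − L_σ/(2A))·(N(u)·y(u))·|x'(u)| du. In particular, if the normal component of y is N·y = k_σ − L_σ/(2A), then (d/dε)|_{ε=0} Π_σ(x + εy) = −(L_σ/(2|W_σ|A))·∫₀¹ (k_σ − L_σ/(2A))²·|x'| du ≤ 0, with equality if and only if k_σ ≡ L_σ/(2A) along the curve. -/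
open Real

/-- The Wulff area `|W_σ| = (1/2)∫₀^{2π} σ(ν)(σ(ν)+σ''(ν)) dν`. -/
noncomputable def wulffArea (σ : ℝ → ℝ) : ℝ :=
  (1 / 2) * ∫ ν in (0:ℝ)..(2 * π), σ ν * (σ ν + deriv (deriv σ) ν)

/-- Anisotropic length `L_σ(Γ) = ∫₀¹ σ(ν(u)) g(u) du` of a curve with speed `g` and
tangent-angle lift `ν`. -/
noncomputable def aLenC (σ : ℝ → ℝ) (g ν : ℝ → ℝ) : ℝ :=
  ∫ u in (0:ℝ)..1, σ (ν u) * g u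

/-- Enclosed area `A = (1/2)∫₀¹ det(x, x') du`, with `x' = g·(cos ν, sin ν)`. -/
noncomputable def areaC (x : ℝ → ℝ × ℝ) (g ν : ℝ → ℝ) : ℝ :=
  (1 / 2) * ∫ u in (0:ℝ)..1,
    ((x u).1 * (g u * Real.sin (ν u)) - (x u).2 * (g u * Real.cos (ν u)))

/-- The anisotropic curvature `k_σ = (σ(ν)+σ''(ν))·k` with `k = ν'/g`. -/
noncomputable def anisoCurv (σ : ℝ → ℝ) (g ν : ℝ → ℝ) (u : ℝ) : ℝ :=
  (σ (ν u) + deriv (deriv σ) (ν u)) * (deriv ν u / g u)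

/-!
Write `T = (cos θ, sin θ)` and `N = (-sin θ, cos θ)`. The differential of `Φ` at `ρT` is the pairing
with the Cahn–Hoffman vector `ξ = σT + σ'N`, and `dξ/dθ = (σ + σ'')N`. For a closed curve,
integrating `ξ·y'` by parts therefore gives `δL_σ = -∫ k_σ (N·y) g`, while integrating `det(x, y')`
by parts gives `δA = -∫ (N·y) g`. The quotient rule combines the two into the first variation of
`L_σ²/(4|W_σ|A)`. Taking `k_σ - L_σ/(2A)` as normal velocity turns the integrand into a square.
-/

open Set Filter Topology

section IntegralCalculus

variable {E G : Type*} [NormedAddCommGroup E] [NormedSpace ℝ E]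
  [NormedAddCommGroup G] [NormedSpace ℝ G]

lemma hasDerivAt_integral_of_continuousOn {H H' : ℝ → ℝ → G} {a b ε₀ δ : ℝ} (hδ : 0 < δ)
    (hH : ContinuousOn ↿H (Metric.closedBall ε₀ δ ×ˢ uIcc a b))
    (hH' : ContinuousOn ↿H' (Metric.closedBall ε₀ δ ×ˢ uIcc a b))
    (hderiv : ∀ ε ∈ Metric.closedBall ε₀ δ, ∀ u ∈ uIcc a b,
      HasDerivAt (fun e => H e u) (H' ε u) ε) :
    HasDerivAt (fun ε => ∫ u in a..b, H ε u) (∫ u in a..b, H' ε₀ u) ε₀ := by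
  obtain ⟨C, hC⟩ :=
    ((isCompact_closedBall ε₀ δ).prod isCompact_uIcc).exists_bound_of_continuousOn hH'
  have hslice {f : ℝ → ℝ → G} (hf : ContinuousOn ↿f (Metric.closedBall ε₀ δ ×ˢ uIcc a b))
      {ε : ℝ} (hε : ε ∈ Metric.closedBall ε₀ δ) :
      IntervalIntegrable (f ε) MeasureTheory.volume a b :=
    (hf.comp (f := fun u => (ε, u)) (by fun_prop) fun u hu => ⟨hε, hu⟩).intervalIntegrable
  have hball : Metric.closedBall ε₀ δ ∈ 𝓝 ε₀ := Metric.closedBall_mem_nhds ε₀ hδ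
  have hε₀ : ε₀ ∈ Metric.closedBall ε₀ δ := Metric.mem_closedBall_self hδ.le
  exact (intervalIntegral.hasDerivAt_integral_of_dominated_loc_of_deriv_le
    (bound := fun _ => C) hball
    (eventually_of_mem hball fun ε hε => (hslice hH hε).def'.aestronglyMeasurable)
    (hslice hH hε₀) (hslice hH' hε₀).def'.aestronglyMeasurable
    (.of_forall fun u hu ε hε => hC (ε, u) ⟨hε, uIoc_subset_uIcc hu⟩)
    intervalIntegrable_const
    (.of_forall fun u hu ε hε => hderiv ε hε u (uIoc_subset_uIcc hu))).2

lemma hasDerivAt_integral_comp_add_smul {F : E → G} {c w : ℝ → E} {a b : ℝ}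
    (hc : Continuous c) (hw : Continuous w) (hF : ∀ u ∈ uIcc a b, ContDiffAt ℝ 1 F (c u)) :
    HasDerivAt (fun ε : ℝ => ∫ u in a..b, F (c u + ε • w u))
      (∫ u in a..b, fderiv ℝ F (c u) (w u)) 0 := by
  let γ : ℝ × ℝ → E := fun p => c p.2 + p.1 • w p.2
  have hγ : Continuous γ := by fun_prop
  obtain ⟨δ, hδ, hF⟩ : ∃ δ > 0, ∀ ε ∈ Metric.closedBall (0 : ℝ) δ, ∀ u ∈ uIcc a b,
      ContDiffAt ℝ 1 F (γ (ε, u)) := by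
    refine Metric.nhds_basis_closedBall.eventually_iff.1 ?_
    refine isCompact_uIcc.eventually_forall_of_forall_eventually fun u hu => ?_
    refine hγ.continuousAt.eventually (ContDiffAt.eventually ?_ (by simp))
    simpa [γ] using hF u hu
  have hline (ε u : ℝ) : HasDerivAt (fun e : ℝ => γ (e, u)) (w u) ε := by
    simpa [γ] using ((hasDerivAt_id ε).smul_const (w u)).const_add (c u)
  have key := hasDerivAt_integral_of_continuousOn (ε₀ := 0) (H := fun ε u => F (γ (ε, u)))
    (H' := fun ε u => fderiv ℝ F (γ (ε, u)) (w u)) hδ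
    (fun p hp => ((hF p.1 hp.1 p.2 hp.2).continuousAt.comp hγ.continuousAt).continuousWithinAt)
    (fun p hp => ((((hF p.1 hp.1 p.2 hp.2).continuousAt_fderiv one_ne_zero).comp
      hγ.continuousAt).clm_apply (hw.comp continuous_snd).continuousAt).continuousWithinAt)
    (fun ε hε u hu => ((hF ε hε u hu).differentiableAt
      one_ne_zero).hasFDerivAt.comp_hasDerivAt ε (hline ε u))
  simpa [γ] using key

lemma periodic_deriv {f : ℝ → G} {T : ℝ} (hf : Function.Periodic f T) :
    Function.Periodic (deriv f) T := fun u => by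
  rw [← deriv_comp_add_const, funext hf]

lemma hasDerivAt_fst_comp {f : ℝ → E × G} {f' : E × G} {u : ℝ} (hf : HasDerivAt f f' u) :
    HasDerivAt (fun u => (f u).1) f'.1 u :=
  (hasFDerivAt_fst (𝕜 := ℝ) (E := E) (F := G)).comp_hasDerivAt u hf

lemma hasDerivAt_snd_comp {f : ℝ → E × G} {f' : E × G} {u : ℝ} (hf : HasDerivAt f f' u) :
    HasDerivAt (fun u => (f u).2) f'.2 u :=
  (hasFDerivAt_snd (𝕜 := ℝ) (E := E) (F := G)).comp_hasDerivAt u hf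

lemma integral_eq_of_hasDerivAt_sub [CompleteSpace G] {f h k : ℝ → G} {a b : ℝ}
    (hh : Continuous h) (hk : Continuous k) (hf : ∀ u, HasDerivAt f (h u - k u) u)
    (hab : f a = f b) : ∫ u in a..b, h u = ∫ u in a..b, k u := by
  rw [← sub_eq_zero, ← intervalIntegral.integral_sub (hh.intervalIntegrable a b)
    (hk.intervalIntegrable a b), intervalIntegral.integral_eq_sub_of_hasDerivAt (fun u _ => hf u)
    ((hh.sub hk).intervalIntegrable a b), hab, sub_self]

lemma integral_sq_mul_eq_zero_iff_of_periodic {f g : ℝ → ℝ} {T : ℝ} (hT : 0 < T)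
    (hf : Continuous f) (hg : Continuous g) (hfT : Function.Periodic f T) (hpos : ∀ u, 0 < g u) :
    ∫ u in (0 : ℝ)..T, f u ^ 2 * g u = 0 ↔ ∀ u, f u = 0 := by
  refine ⟨fun h u => ?_, fun h => by simp [h]⟩
  obtain ⟨v, hv, huv⟩ := hfT.exists_mem_Ico₀ hT u
  rw [huv]
  by_contra hne
  have hint : 0 < ∫ u in (0 : ℝ)..T, f u ^ 2 * g u :=
    intervalIntegral.integral_pos hT ((hf.pow 2).mul hg).continuousOn
      (fun u _ => mul_nonneg (sq_nonneg _) (hpos u).le)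
      ⟨v, Ico_subset_Icc_self hv, mul_pos (by positivity) (hpos v)⟩
  exact hint.ne' h

end IntegralCalculus

section HomogeneousExtension

/-- `Φ` is the 1-homogeneous extension of `σ` to the punctured plane, `Φ(ρT) = ρσ(θ)` for
`T = (cos θ, sin θ)` and `ρ > 0`; the value `Φ 0` is left free. -/
def IsHomogeneousExtension (Φ : ℝ × ℝ → ℝ) (σ : ℝ → ℝ) : Prop :=
  ∀ ρ : ℝ, 0 < ρ → ∀ θ : ℝ, Φ (ρ * cos θ, ρ * sin θ) = ρ * σ θ

/-- The Cahn–Hoffman vector `σT + σ'N` at the tangent angle `θ`, with `T = (cos θ, sin θ)` and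
`N = (-sin θ, cos θ)`. It is the gradient of the 1-homogeneous extension of `σ` along the ray
spanned by `T`. -/
noncomputable def cahnHoffman (σ : ℝ → ℝ) (θ : ℝ) : ℝ × ℝ :=
  (σ θ * cos θ - deriv σ θ * sin θ, σ θ * sin θ + deriv σ θ * cos θ)

variable {σ : ℝ → ℝ} {Φ : ℝ × ℝ → ℝ}

lemma polar_ne_zero {ρ : ℝ} (hρ : ρ ≠ 0) (θ : ℝ) : ((ρ * cos θ, ρ * sin θ) : ℝ × ℝ) ≠ 0 := by
  simp only [ne_eq, Prod.mk_eq_zero, mul_eq_zero, hρ, false_or, not_and]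
  intro hcos hsin
  simpa [hcos, hsin] using sin_sq_add_cos_sq θ

lemma hasDerivAt_cahnHoffman (hσ : ContDiff ℝ 2 σ) (θ : ℝ) :
    HasDerivAt (cahnHoffman σ) ((σ θ + deriv (deriv σ) θ) • (-sin θ, cos θ)) θ := by
  have hσ₁ := (hσ.differentiable two_ne_zero θ).hasDerivAt
  have hσ₂ := (hσ.differentiable_deriv_two θ).hasDerivAt
  have hsin := hasDerivAt_sin θ
  have hcos := hasDerivAt_cos θ
  refine (((hσ₁.mul hcos).sub (hσ₂.mul hsin)).prodMk
    ((hσ₁.mul hsin).add (hσ₂.mul hcos))).congr_deriv ?_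
  ext <;> simp only [Prod.smul_fst, Prod.smul_snd, smul_eq_mul] <;> ring

lemma periodic_cahnHoffman (hσ : Function.Periodic σ (2 * π)) :
    Function.Periodic (cahnHoffman σ) (2 * π) := by
  intro θ
  simp only [cahnHoffman, hσ θ, periodic_deriv hσ θ, cos_add_two_pi, sin_add_two_pi]

namespace IsHomogeneousExtension

lemma periodic (hΦ : IsHomogeneousExtension Φ σ) : Function.Periodic σ (2 * π) := fun θ => by
  have h := hΦ 1 one_pos (θ + 2 * π)
  rw [cos_add_two_pi, sin_add_two_pi, hΦ 1 one_pos θ, one_mul, one_mul] at h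
  exact h.symm

lemma antipodal (hΦ : IsHomogeneousExtension Φ σ) :
    IsHomogeneousExtension (fun p => Φ (-p)) (fun θ => σ (θ + π)) := fun ρ hρ θ => by
  simp only [← hΦ ρ hρ (θ + π), cos_add_pi, sin_add_pi, mul_neg, Prod.neg_mk]

lemma contDiffAt_of_mem_slitPlane (hΦ : IsHomogeneousExtension Φ σ) {n : WithTop ℕ∞}
    (hσ : ContDiff ℝ n σ) {p : ℝ × ℝ} (hp : Complex.equivRealProdCLM.symm p ∈ Complex.slitPlane) :
    ContDiffAt ℝ n Φ p := by
  let z := Complex.equivRealProdCLM.symm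
  have hpolar : Φ =ᶠ[𝓝 p] fun q => ‖z q‖ * σ (Complex.log (z q)).im := by
    filter_upwards [z.continuous.continuousAt.eventually_ne (Complex.slitPlane_ne_zero hp)]
      with q hq
    have h := hΦ ‖z q‖ (norm_pos_iff.2 hq) (Complex.arg (z q))
    rw [Complex.norm_mul_cos_arg, Complex.norm_mul_sin_arg] at h
    simpa [z, Complex.log_im] using h
  have hz : ContDiffAt ℝ n z p := z.contDiff.contDiffAt
  have hlog : ContDiffAt ℝ n (fun q => (Complex.log (z q)).im) p :=
    Complex.imCLM.contDiff.contDiffAt.comp p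
      (((Complex.contDiffAt_log hp).restrict_scalars ℝ).comp p hz)
  exact ((hz.norm ℝ (Complex.slitPlane_ne_zero hp)).mul
    (hσ.contDiffAt.comp p hlog)).congr_of_eventuallyEq hpolar

lemma contDiffAt (hΦ : IsHomogeneousExtension Φ σ) {n : WithTop ℕ∞} (hσ : ContDiff ℝ n σ)
    {p : ℝ × ℝ} (hp : p ≠ 0) : ContDiffAt ℝ n Φ p := by
  have hz : Complex.equivRealProdCLM.symm p ≠ 0 := by simpa using hp
  rcases Complex.mem_slitPlane_or_neg_mem_slitPlane hz with h | h
  · exact hΦ.contDiffAt_of_mem_slitPlane hσ h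
  · have hneg := hΦ.antipodal.contDiffAt_of_mem_slitPlane (p := -p)
      (hσ.comp (contDiff_id.add contDiff_const)) (by rwa [map_neg])
    simpa [Function.comp_def] using hneg.comp p contDiff_neg.contDiffAt

/-- Differentiating `Φ(ρT) = ρσ` in `ρ` gives `DΦ T = σ`, and in `θ` gives `DΦ N = σ'`. -/
lemma fderiv_apply (hΦ : IsHomogeneousExtension Φ σ) (hσ : ContDiff ℝ 1 σ) {ρ : ℝ} (hρ : 0 < ρ)
    (θ : ℝ) (v : ℝ × ℝ) :
    fderiv ℝ Φ (ρ * cos θ, ρ * sin θ) v =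
      (cahnHoffman σ θ).1 * v.1 + (cahnHoffman σ θ).2 * v.2 := by
  set D := fderiv ℝ Φ (ρ * cos θ, ρ * sin θ)
  have hD : HasFDerivAt Φ D (ρ * cos θ, ρ * sin θ) :=
    ((hΦ.contDiffAt hσ (polar_ne_zero hρ.ne' θ)).differentiableAt one_ne_zero).hasFDerivAt
  have hradial : D (cos θ, sin θ) = σ θ := by
    have hray : HasDerivAt (fun r => ((r * cos θ, r * sin θ) : ℝ × ℝ)) (cos θ, sin θ) ρ := by
      simpa using ((hasDerivAt_id ρ).mul_const _).prodMk ((hasDerivAt_id ρ).mul_const _)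
    have hσray : HasDerivAt (fun r => r * σ θ) (σ θ) ρ := by
      simpa using (hasDerivAt_id ρ).mul_const (σ θ)
    refine (hD.comp_hasDerivAt ρ hray).unique (hσray.congr_of_eventuallyEq ?_)
    filter_upwards [lt_mem_nhds hρ] with r hr using hΦ r hr θ
  have hangular : D (ρ • (-sin θ, cos θ)) = ρ * deriv σ θ := by
    have hcircle : HasDerivAt (fun t => ((ρ * cos t, ρ * sin t) : ℝ × ℝ))
        (ρ • (-sin θ, cos θ)) θ := by
      simpa using ((hasDerivAt_cos θ).const_mul ρ).prodMk ((hasDerivAt_sin θ).const_mul ρ)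
    have hσcircle := ((hσ.differentiable one_ne_zero θ).hasDerivAt).const_mul ρ
    exact (hD.comp_hasDerivAt θ hcircle).unique
      (hσcircle.congr_of_eventuallyEq (.of_forall fun t => hΦ ρ hρ t))
  have hnormal : D (-sin θ, cos θ) = deriv σ θ := by
    rw [map_smul, smul_eq_mul] at hangular
    exact mul_left_cancel₀ hρ.ne' hangular
  have hframe : v = (v.1 * cos θ + v.2 * sin θ) • (cos θ, sin θ) +
      (-(v.1 * sin θ) + v.2 * cos θ) • (-sin θ, cos θ) := by
    ext <;> simp only [Prod.fst_add, Prod.snd_add, Prod.smul_fst, Prod.smul_snd, smul_eq_mul]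
    · linear_combination (-v.1) * sin_sq_add_cos_sq θ
    · linear_combination (-v.2) * sin_sq_add_cos_sq θ
  rw [hframe, map_add, map_smul, map_smul, hradial, hnormal, ← hframe]
  simp only [cahnHoffman, smul_eq_mul]
  ring

end IsHomogeneousExtension

end HomogeneousExtension

lemma wulffArea_pos {σ : ℝ → ℝ} (hσ : ContDiff ℝ 2 σ) (hpos : ∀ θ, 0 < σ θ)
    (hconv : ∀ θ, 0 < σ θ + deriv (deriv σ) θ) : 0 < wulffArea σ := by
  have hσ₀ := hσ.continuous
  exact mul_pos one_half_pos <| intervalIntegral.intervalIntegral_pos_of_pos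
    (Continuous.intervalIntegrable (by fun_prop) _ _) (fun θ => mul_pos (hpos θ) (hconv θ))
    two_pi_pos

lemma hasDerivAt_signedArea {x y : ℝ → ℝ × ℝ} {a b : ℝ} (hx : ContDiff ℝ 1 x)
    (hy : ContDiff ℝ 1 y) (hxab : x a = x b) (hyab : y a = y b) :
    HasDerivAt (fun ε : ℝ => (1 / 2) * ∫ u in a..b,
        ((x u + ε • y u).1 * (deriv x u + ε • deriv y u).2 -
          (x u + ε • y u).2 * (deriv x u + ε • deriv y u).1))
      (∫ u in a..b, ((y u).1 * (deriv x u).2 - (y u).2 * (deriv x u).1)) 0 := by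
  have hx₀ := hx.continuous
  have hx' := hx.continuous_deriv_one
  have hy₀ := hy.continuous
  have hy' := hy.continuous_deriv_one
  let det : (ℝ × ℝ) × (ℝ × ℝ) → ℝ := fun p => p.1.1 * p.2.2 - p.1.2 * p.2.1
  have hdet : ContDiff ℝ 1 det := by fun_prop
  have hdet' (p q : (ℝ × ℝ) × (ℝ × ℝ)) : fderiv ℝ det p q =
      p.1.1 * q.2.2 + q.1.1 * p.2.2 - (p.1.2 * q.2.1 + q.1.2 * p.2.1) := by
    have hfst : HasFDerivAt (fun p : (ℝ × ℝ) × (ℝ × ℝ) => p.1) _ p := hasFDerivAt_fst (𝕜 := ℝ)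
    have hsnd : HasFDerivAt (fun p : (ℝ × ℝ) × (ℝ × ℝ) => p.2) _ p := hasFDerivAt_snd (𝕜 := ℝ)
    have h : HasFDerivAt det _ p := (hfst.fst.mul hsnd.snd).sub (hfst.snd.mul hsnd.fst)
    rw [h.fderiv]
    simp only [sub_apply, add_apply, smul_apply, ContinuousLinearMap.comp_apply,
      ContinuousLinearMap.coe_snd', smul_eq_mul, ContinuousLinearMap.coe_fst']
    ring
  have hparts : ∫ u in a..b, fderiv ℝ det (x u, deriv x u) (y u, deriv y u) =
      ∫ u in a..b, 2 * ((y u).1 * (deriv x u).2 - (y u).2 * (deriv x u).1) := by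
    simp only [hdet']
    refine integral_eq_of_hasDerivAt_sub (f := fun u => (x u).1 * (y u).2 - (x u).2 * (y u).1)
      (by fun_prop) (by fun_prop) (fun u => ?_) (by simp only [hxab, hyab])
    have hxu := (hx.differentiable one_ne_zero u).hasDerivAt
    have hyu := (hy.differentiable one_ne_zero u).hasDerivAt
    refine (((hasDerivAt_fst_comp hxu).mul (hasDerivAt_snd_comp hyu)).sub
      ((hasDerivAt_snd_comp hxu).mul (hasDerivAt_fst_comp hyu))).congr_deriv ?_
    ring
  refine ((hasDerivAt_integral_comp_add_smul (F := det) (hx₀.prodMk hx') (hy₀.prodMk hy')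
    fun u _ => hdet.contDiffAt).const_mul (1 / 2)).congr_deriv ?_
  rw [hparts, intervalIntegral.integral_const_mul]
  ring

section ClosedCurve

/-- `x` is a closed `C¹` curve of turning number `m`, with speed `g` and `C¹` tangent-angle
lift `ν`. -/
structure IsClosedCurve (x : ℝ → ℝ × ℝ) (g ν : ℝ → ℝ) (m : ℤ) : Prop where
  contDiff : ContDiff ℝ 1 x
  periodic : Function.Periodic x 1
  speed_pos : ∀ u, 0 < g u
  hasDerivAt : ∀ u, HasDerivAt x (g u • (cos (ν u), sin (ν u))) u
  contDiff_angle : ContDiff ℝ 1 ν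
  angle_add_one : ∀ u, ν (u + 1) = ν u + m * (2 * π)

/-- The component `N·v` of `v` along the normal `N = (-sin θ, cos θ)` of tangent angle `θ`. -/
noncomputable def normalComponent (θ : ℝ) (v : ℝ × ℝ) : ℝ :=
  -sin θ * v.1 + cos θ * v.2

/-- The anisoperimetric ratio `L_σ²/(4|W_σ|A)` of the curve `x`. The velocity field `v = x'` is a
separate argument, so that a variation `x + εy` is evaluated with `v = x' + εy'`. -/
noncomputable def anisoperimetricRatio (σ : ℝ → ℝ) (Φ : ℝ × ℝ → ℝ) (x v : ℝ → ℝ × ℝ) : ℝ :=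
  (∫ u in (0 : ℝ)..1, Φ (v u)) ^ 2 /
    (4 * wulffArea σ * ((1 / 2) * ∫ u in (0 : ℝ)..1, ((x u).1 * (v u).2 - (x u).2 * (v u).1)))

/-- The normal velocity `k_σ - L_σ/(2A)` of the gradient flow of the anisoperimetric ratio. -/
noncomputable def gradientVelocity (σ : ℝ → ℝ) (x : ℝ → ℝ × ℝ) (g ν : ℝ → ℝ) (u : ℝ) : ℝ :=
  anisoCurv σ g ν u - aLenC σ g ν / (2 * areaC x g ν)

variable {σ : ℝ → ℝ} {Φ : ℝ × ℝ → ℝ} {x y : ℝ → ℝ × ℝ} {g ν : ℝ → ℝ} {m : ℤ}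

namespace IsClosedCurve

lemma deriv_eq (hx : IsClosedCurve x g ν m) (u : ℝ) :
    deriv x u = (g u * cos (ν u), g u * sin (ν u)) :=
  (hx.hasDerivAt u).deriv

lemma speed_eq (hx : IsClosedCurve x g ν m) (u : ℝ) :
    g u = (deriv x u).1 * cos (ν u) + (deriv x u).2 * sin (ν u) := by
  rw [hx.deriv_eq]
  linear_combination (-g u) * sin_sq_add_cos_sq (ν u)

lemma continuous_angle (hx : IsClosedCurve x g ν m) : Continuous ν :=
  hx.contDiff_angle.continuous

lemma continuous_speed (hx : IsClosedCurve x g ν m) : Continuous g := by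
  have hx' := hx.contDiff.continuous_deriv_one
  have hν := hx.continuous_angle
  rw [funext hx.speed_eq]
  fun_prop

lemma periodic_comp_angle {E : Type*} {f : ℝ → E} (hx : IsClosedCurve x g ν m)
    (hf : Function.Periodic f (2 * π)) : Function.Periodic (fun u => f (ν u)) 1 := fun u => by
  simp only [hx.angle_add_one, hf.int_mul m (ν u)]

lemma periodic_speed (hx : IsClosedCurve x g ν m) : Function.Periodic g 1 := fun u => by
  simp only [hx.speed_eq, periodic_deriv hx.periodic u,
    hx.periodic_comp_angle cos_periodic u, hx.periodic_comp_angle sin_periodic u]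

lemma periodic_deriv_angle (hx : IsClosedCurve x g ν m) : Function.Periodic (deriv ν) 1 :=
  fun u => by rw [← deriv_comp_add_const, funext hx.angle_add_one, deriv_add_const]

lemma periodic_anisoCurv (hx : IsClosedCurve x g ν m) (hσ : Function.Periodic σ (2 * π)) :
    Function.Periodic (anisoCurv σ g ν) 1 := fun u => by
  simp only [anisoCurv, hx.periodic_speed u, hx.periodic_deriv_angle u,
    hx.periodic_comp_angle hσ u, hx.periodic_comp_angle (periodic_deriv (periodic_deriv hσ)) u]

lemma continuous_anisoCurv (hx : IsClosedCurve x g ν m) (hσ : ContDiff ℝ 2 σ) :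
    Continuous (anisoCurv σ g ν) := by
  have hσ₀ := hσ.continuous
  have hν := hx.continuous_angle
  have hν' := hx.contDiff_angle.continuous_deriv_one
  have hg := hx.continuous_speed
  have hg₀ : ∀ u, g u ≠ 0 := fun u => (hx.speed_pos u).ne'
  unfold anisoCurv
  fun_prop (disch := assumption)

lemma aLenC_pos (hx : IsClosedCurve x g ν m) (hσ : Continuous σ) (hpos : ∀ θ, 0 < σ θ) :
    0 < aLenC σ g ν :=
  intervalIntegral.intervalIntegral_pos_of_pos
    (((hσ.comp hx.continuous_angle).mul hx.continuous_speed).intervalIntegrable _ _)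
    (fun u => mul_pos (hpos _) (hx.speed_pos u)) one_pos

lemma aLenC_eq (hx : IsClosedCurve x g ν m) (hΦ : IsHomogeneousExtension Φ σ) :
    aLenC σ g ν = ∫ u in (0 : ℝ)..1, Φ (deriv x u) := by
  simp only [aLenC, hx.deriv_eq, hΦ _ (hx.speed_pos _), mul_comm]

lemma areaC_eq (hx : IsClosedCurve x g ν m) :
    areaC x g ν = (1 / 2) *
      ∫ u in (0 : ℝ)..1, ((x u).1 * (deriv x u).2 - (x u).2 * (deriv x u).1) := by
  simp only [areaC, hx.deriv_eq]

lemma hasDerivAt_cahnHoffman_dot (hx : IsClosedCurve x g ν m) (hσ : ContDiff ℝ 2 σ)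
    (hy : ContDiff ℝ 1 y) (u : ℝ) :
    HasDerivAt (fun u => (cahnHoffman σ (ν u)).1 * (y u).1 + (cahnHoffman σ (ν u)).2 * (y u).2)
      ((cahnHoffman σ (ν u)).1 * (deriv y u).1 + (cahnHoffman σ (ν u)).2 * (deriv y u).2 -
        -(anisoCurv σ g ν u * normalComponent (ν u) (y u) * g u)) u := by
  have hν' := (hx.contDiff_angle.differentiable one_ne_zero u).hasDerivAt
  have hξ := (hasDerivAt_cahnHoffman hσ (ν u)).scomp u hν'
  have hy' := (hy.differentiable one_ne_zero u).hasDerivAt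
  refine (((hasDerivAt_fst_comp hξ).mul (hasDerivAt_fst_comp hy')).add
    ((hasDerivAt_snd_comp hξ).mul (hasDerivAt_snd_comp hy'))).congr_deriv ?_
  have hg : deriv ν u / g u * g u = deriv ν u := div_mul_cancel₀ _ (hx.speed_pos u).ne'
  simp only [anisoCurv, normalComponent, Prod.smul_fst, Prod.smul_snd, smul_eq_mul,
    Function.comp_apply]
  linear_combination (-(σ (ν u) + deriv (deriv σ) (ν u)) *
    (-sin (ν u) * (y u).1 + cos (ν u) * (y u).2)) * hg

lemma hasDerivAt_length (hx : IsClosedCurve x g ν m) (hσ : ContDiff ℝ 2 σ)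
    (hΦ : IsHomogeneousExtension Φ σ) (hy : ContDiff ℝ 1 y) (hyper : Function.Periodic y 1) :
    HasDerivAt (fun ε : ℝ => ∫ u in (0 : ℝ)..1, Φ (deriv x u + ε • deriv y u))
      (-∫ u in (0 : ℝ)..1, anisoCurv σ g ν u * normalComponent (ν u) (y u) * g u) 0 := by
  have hσ₁ : ContDiff ℝ 1 σ := hσ.of_le one_le_two
  have hy₀ := hy.continuous
  have hy' := hy.continuous_deriv_one
  have hν := hx.continuous_angle
  have hg := hx.continuous_speed
  have hk := hx.continuous_anisoCurv hσ
  have hne (u : ℝ) : deriv x u ≠ 0 := by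
    rw [hx.deriv_eq]
    exact polar_ne_zero (hx.speed_pos u).ne' _
  refine (hasDerivAt_integral_comp_add_smul hx.contDiff.continuous_deriv_one hy'
    fun u _ => hΦ.contDiffAt hσ₁ (hne u)).congr_deriv ?_
  simp only [hx.deriv_eq, hΦ.fderiv_apply hσ₁ (hx.speed_pos _)]
  rw [← intervalIntegral.integral_neg]
  refine integral_eq_of_hasDerivAt_sub (by fun_prop) (by unfold normalComponent; fun_prop)
    (hx.hasDerivAt_cahnHoffman_dot hσ hy) ?_
  have hξ₁ := hx.periodic_comp_angle (periodic_cahnHoffman hΦ.periodic)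
  simp only [← hξ₁.eq, ← hyper.eq]

lemma hasDerivAt_area (hx : IsClosedCurve x g ν m) (hy : ContDiff ℝ 1 y)
    (hyper : Function.Periodic y 1) :
    HasDerivAt (fun ε : ℝ => (1 / 2) * ∫ u in (0 : ℝ)..1,
        ((x u + ε • y u).1 * (deriv x u + ε • deriv y u).2 -
          (x u + ε • y u).2 * (deriv x u + ε • deriv y u).1))
      (-∫ u in (0 : ℝ)..1, normalComponent (ν u) (y u) * g u) 0 := by
  refine (hasDerivAt_signedArea hx.contDiff hy (by simpa using hx.periodic.eq.symm)
    (by simpa using hyper.eq.symm)).congr_deriv ?_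
  rw [← intervalIntegral.integral_neg]
  refine intervalIntegral.integral_congr fun u _ => ?_
  simp only [hx.deriv_eq, normalComponent]
  ring

theorem hasDerivAt_anisoperimetricRatio (hx : IsClosedCurve x g ν m) (hσ : ContDiff ℝ 2 σ)
    (hΦ : IsHomogeneousExtension Φ σ) (hW : wulffArea σ ≠ 0) (hA : areaC x g ν ≠ 0)
    (hy : ContDiff ℝ 1 y) (hyper : Function.Periodic y 1) :
    HasDerivAt (fun ε : ℝ => anisoperimetricRatio σ Φ (fun u => x u + ε • y u)
        (fun u => deriv x u + ε • deriv y u))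
      (-(aLenC σ g ν / (2 * wulffArea σ * areaC x g ν)) * ∫ u in (0 : ℝ)..1,
        gradientVelocity σ x g ν u * normalComponent (ν u) (y u) * g u) 0 := by
  have hk := hx.continuous_anisoCurv hσ
  have hν := hx.continuous_angle
  have hg := hx.continuous_speed
  have hy₀ := hy.continuous
  have hL₀ : ∫ u in (0 : ℝ)..1, Φ (deriv x u + (0 : ℝ) • deriv y u) = aLenC σ g ν := by
    simp only [zero_smul, add_zero, hx.aLenC_eq hΦ]
  have hA₀ : (1 / 2) * ∫ u in (0 : ℝ)..1,
      ((x u + (0 : ℝ) • y u).1 * (deriv x u + (0 : ℝ) • deriv y u).2 -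
        (x u + (0 : ℝ) • y u).2 * (deriv x u + (0 : ℝ) • deriv y u).1) = areaC x g ν := by
    simp only [zero_smul, add_zero, hx.areaC_eq]
  have hsplit : ∫ u in (0 : ℝ)..1, gradientVelocity σ x g ν u * normalComponent (ν u) (y u) * g u =
      (∫ u in (0 : ℝ)..1, anisoCurv σ g ν u * normalComponent (ν u) (y u) * g u) -
        aLenC σ g ν / (2 * areaC x g ν) *
          ∫ u in (0 : ℝ)..1, normalComponent (ν u) (y u) * g u := by
    unfold normalComponent
    rw [← intervalIntegral.integral_const_mul, ← intervalIntegral.integral_sub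
      (Continuous.intervalIntegrable (by fun_prop) _ _)
      (Continuous.intervalIntegrable (by fun_prop) _ _)]
    simp only [gradientVelocity, sub_mul, mul_assoc]
  refine (((hx.hasDerivAt_length hσ hΦ hy hyper).pow 2).div
    ((hx.hasDerivAt_area hy hyper).const_mul (4 * wulffArea σ)) ?_).congr_deriv ?_
  · rw [hA₀]
    exact mul_ne_zero (mul_ne_zero four_ne_zero hW) hA
  · rw [hsplit, Pi.pow_apply, hL₀, hA₀]
    push_cast
    field_simp
    ring

lemma integral_gradientVelocity_sq_eq_zero_iff (hx : IsClosedCurve x g ν m)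
    (hσ : ContDiff ℝ 2 σ) (hσper : Function.Periodic σ (2 * π)) :
    ∫ u in (0 : ℝ)..1, gradientVelocity σ x g ν u ^ 2 * g u = 0 ↔
      ∀ u, anisoCurv σ g ν u = aLenC σ g ν / (2 * areaC x g ν) := by
  have hper : Function.Periodic (gradientVelocity σ x g ν) 1 := fun u => by
    simp only [gradientVelocity, hx.periodic_anisoCurv hσper u]
  have hcont : Continuous (gradientVelocity σ x g ν) :=
    (hx.continuous_anisoCurv hσ).sub continuous_const
  rw [integral_sq_mul_eq_zero_iff_of_periodic one_pos hcont hx.continuous_speed hper hx.speed_pos]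
  simp only [gradientVelocity, sub_eq_zero]

end IsClosedCurve

end ClosedCurve

theorem anisoperimetric_ratio_gradient_flow_general {σ : ℝ → ℝ} {Φ : ℝ × ℝ → ℝ}
    {x : ℝ → ℝ × ℝ} {g ν : ℝ → ℝ} {m : ℤ} (hσ : ContDiff ℝ 2 σ) (hpos : ∀ θ, 0 < σ θ)
    (hW : 0 < wulffArea σ) (hΦ : IsHomogeneousExtension Φ σ) (hx : IsClosedCurve x g ν m)
    (hA : 0 < areaC x g ν) :
    (∀ y : ℝ → ℝ × ℝ, ContDiff ℝ 1 y → Function.Periodic y 1 →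
      HasDerivAt (fun ε : ℝ => anisoperimetricRatio σ Φ (fun u => x u + ε • y u)
          (fun u => deriv x u + ε • deriv y u))
        (-(aLenC σ g ν / (2 * wulffArea σ * areaC x g ν)) * ∫ u in (0 : ℝ)..1,
          gradientVelocity σ x g ν u * normalComponent (ν u) (y u) * g u) 0) ∧
    (∀ y : ℝ → ℝ × ℝ, ContDiff ℝ 1 y → Function.Periodic y 1 →
      (∀ u, normalComponent (ν u) (y u) = gradientVelocity σ x g ν u) →
      HasDerivAt (fun ε : ℝ => anisoperimetricRatio σ Φ (fun u => x u + ε • y u)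
          (fun u => deriv x u + ε • deriv y u))
        (-(aLenC σ g ν / (2 * wulffArea σ * areaC x g ν)) * ∫ u in (0 : ℝ)..1,
          gradientVelocity σ x g ν u ^ 2 * g u) 0) ∧
    -(aLenC σ g ν / (2 * wulffArea σ * areaC x g ν)) *
        (∫ u in (0 : ℝ)..1, gradientVelocity σ x g ν u ^ 2 * g u) ≤ 0 ∧
    (-(aLenC σ g ν / (2 * wulffArea σ * areaC x g ν)) *
        (∫ u in (0 : ℝ)..1, gradientVelocity σ x g ν u ^ 2 * g u) = 0 ↔
      ∀ u, anisoCurv σ g ν u = aLenC σ g ν / (2 * areaC x g ν)) := by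
  have hL := hx.aLenC_pos hσ.continuous hpos
  have hfactor : 0 < aLenC σ g ν / (2 * wulffArea σ * areaC x g ν) := by positivity
  have hvariation := fun y => hx.hasDerivAt_anisoperimetricRatio (y := y) hσ hΦ hW.ne' hA.ne'
  refine ⟨hvariation, fun y hy hyper hN => ?_, ?_, ?_⟩
  · simpa only [hN, ← sq] using hvariation y hy hyper
  · exact mul_nonpos_of_nonpos_of_nonneg (neg_nonpos.2 hfactor.le) <|
      intervalIntegral.integral_nonneg zero_le_one fun u _ =>
        mul_nonneg (sq_nonneg _) (hx.speed_pos u).le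
  · rw [mul_eq_zero_iff_left (neg_ne_zero.2 hfactor.ne'),
      hx.integral_gradientVelocity_sq_eq_zero_iff hσ hΦ.periodic]

/-- Gradient flow property of the anisoperimetric ratio
`Π_σ(x) = L_σ(x)²/(4|W_σ|·A(x))`: for every smooth 1-periodic variation `y`,
`(d/dε)|₀ Π_σ(x+εy) = −(L_σ/(2|W_σ|A))·∫₀¹ (k_σ − L_σ/(2A))·(N·y)·g du`; in particular,
if `N·y = k_σ − L_σ/(2A)` then the derivative equals
`−(L_σ/(2|W_σ|A))·∫₀¹ (k_σ − L_σ/(2A))²·g du ≤ 0` with equality iff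
`k_σ ≡ L_σ/(2A)` along the curve. -/
theorem anisoperimetric_ratio_gradient_flow
    (σ : ℝ → ℝ)
    (hσs : ContDiff ℝ (⊤ : ℕ∞) σ) (hσper : ∀ ν, σ (ν + 2 * π) = σ ν)
    (hσpos : ∀ ν, 0 < σ ν) (hσconv : ∀ ν, 0 < σ ν + deriv (deriv σ) ν)
    (Φ : ℝ × ℝ → ℝ)
    (hΦ : ∀ ρ : ℝ, 0 < ρ → ∀ θ : ℝ, Φ (ρ * Real.cos θ, ρ * Real.sin θ) = ρ * σ θ)
    -- a smooth closed curve `x` with speed `g` and smooth tangent-angle lift `ν`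
    (x : ℝ → ℝ × ℝ) (g ν : ℝ → ℝ)
    (hx : ContDiff ℝ (⊤ : ℕ∞) x)
    (hxper : ∀ u, x (u + 1) = x u)
    (hg : ∀ u, 0 < g u)
    (htang : ∀ u, HasDerivAt x (g u • ((Real.cos (ν u), Real.sin (ν u)) : ℝ × ℝ)) u)
    (hν : ContDiff ℝ (⊤ : ℕ∞) ν)
    (hνper : ∀ u, ν (u + 1) = ν u + 2 * π)
    (hA : 0 < areaC x g ν) :
    (∀ y : ℝ → ℝ × ℝ, ContDiff ℝ (⊤ : ℕ∞) y → (∀ u, y (u + 1) = y u) →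
      HasDerivAt (fun ε : ℝ =>
          (∫ u in (0:ℝ)..1, Φ (deriv x u + ε • deriv y u)) ^ 2 /
            (4 * wulffArea σ * ((1 / 2) * ∫ u in (0:ℝ)..1,
              ((x u + ε • y u).1 * (deriv x u + ε • deriv y u).2 -
                (x u + ε • y u).2 * (deriv x u + ε • deriv y u).1))))
        (-(aLenC σ g ν / (2 * wulffArea σ * areaC x g ν)) *
          ∫ u in (0:ℝ)..1,
            (anisoCurv σ g ν u - aLenC σ g ν / (2 * areaC x g ν)) *
              ((-Real.sin (ν u)) * (y u).1 + Real.cos (ν u) * (y u).2) * g u) 0) ∧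
    (∀ y : ℝ → ℝ × ℝ, ContDiff ℝ (⊤ : ℕ∞) y → (∀ u, y (u + 1) = y u) →
      (∀ u, (-Real.sin (ν u)) * (y u).1 + Real.cos (ν u) * (y u).2 =
        anisoCurv σ g ν u - aLenC σ g ν / (2 * areaC x g ν)) →
      HasDerivAt (fun ε : ℝ =>
          (∫ u in (0:ℝ)..1, Φ (deriv x u + ε • deriv y u)) ^ 2 /
            (4 * wulffArea σ * ((1 / 2) * ∫ u in (0:ℝ)..1,
              ((x u + ε • y u).1 * (deriv x u + ε • deriv y u).2 -
                (x u + ε • y u).2 * (deriv x u + ε • deriv y u).1))))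
        (-(aLenC σ g ν / (2 * wulffArea σ * areaC x g ν)) *
          ∫ u in (0:ℝ)..1,
            (anisoCurv σ g ν u - aLenC σ g ν / (2 * areaC x g ν)) ^ 2 * g u) 0 ∧
      (-(aLenC σ g ν / (2 * wulffArea σ * areaC x g ν)) *
          ∫ u in (0:ℝ)..1,
            (anisoCurv σ g ν u - aLenC σ g ν / (2 * areaC x g ν)) ^ 2 * g u) ≤ 0 ∧
      ((-(aLenC σ g ν / (2 * wulffArea σ * areaC x g ν)) *
          ∫ u in (0:ℝ)..1,
            (anisoCurv σ g ν u - aLenC σ g ν / (2 * areaC x g ν)) ^ 2 * g u) = 0 ↔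
        ∀ u : ℝ, anisoCurv σ g ν u = aLenC σ g ν / (2 * areaC x g ν))) := by
  have hcurve : IsClosedCurve x g ν 1 :=
    ⟨hx.of_le (by simp), hxper, hg, htang, hν.of_le (by simp), by simpa using hνper⟩
  have hσ : ContDiff ℝ 2 σ := contDiff_infty.1 hσs 2
  obtain ⟨hvariation, hflow, hnonpos, hzero⟩ := anisoperimetric_ratio_gradient_flow_general hσ
    hσpos (wulffArea_pos hσ hσpos hσconv) hΦ hcurve hA
  exact ⟨fun y hy => hvariation y (hy.of_le (by simp)),
    fun y hy hyper hN => ⟨hflow y (hy.of_le (by simp)) hyper hN, hnonpos, hzero⟩⟩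
end

section
/- The isoperimetric ratio gradient flow does not increase the length when started from a convex curve: let x : ℝ × [0,T) → ℝ² be a smooth family of closed curves evolving by the isoperimetric ratio gradient flow ∂_t x = (k − L(t)/(2A(t)))·N, and suppose the initial curve is convex, i.e. k(u, 0) > 0 for all u. Then (d/dt) L(t) = −∫₀¹ k(u,t)² |∂_u x(u,t)| du + π·L(t)/A(t) ≤ 0 for all t ∈ [0,T); in particular, t ↦ L(t) is nonincreasing on [0,T). -/
open Real

/-- Enclosed area `A(t) = (1/2)∫₀¹ det(x(u,t), ∂_u x(u,t)) du`, with
`∂_u x = g·(cos νf, sin νf)`. -/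
noncomputable def areaF (x : ℝ → ℝ → ℝ × ℝ) (g νf : ℝ → ℝ → ℝ) (t : ℝ) : ℝ :=
  (1 / 2) * ∫ u in (0:ℝ)..1,
    ((x u t).1 * (g u t * Real.sin (νf u t)) - (x u t).2 * (g u t * Real.cos (νf u t)))

/-- Total length `L(t) = ∫₀¹ |∂_u x(u,t)| du`. -/
noncomputable def lenF (g : ℝ → ℝ → ℝ) (t : ℝ) : ℝ :=
  ∫ u in (0:ℝ)..1, g u t

/-!
Write `k` for the curvature and `s` for arclength. Along a flow with normal speed `k - c(t)`, the
length satisfies `L' = -∫ k² ds + 2π c`, because `∫ k ds = 2π`. The curvature satisfies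
`k_t = k_ss + k² (k - c)`, so the minimum principle preserves convexity, and for `c ≤ L / (2A)` the
sign of `L'` follows from Gage's inequality `π L / A ≤ ∫ k² ds` for convex curves.

For Gage's inequality, a continuity argument gives a chord that bisects the area and has opposite
tangent directions at its ends. Let `P` be the support function with respect to the midpoint of
this chord. On each half, Wirtinger's inequality in the tangent angle, applied to `P - P(v)`, gives
Bonnesen's inequality `A + π P(v)² ≤ 2 P(v) l`, where `A = ∫ P ds` is twice the area of the half,
that is the full area, and `l` is the length of the half. Integrating over the half gives
`π ∫ P² ds ≤ A l`, and expanding `0 ≤ ∫ (k - (π / A) P)² ds` with `∫ k P ds = l` gives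
`π l / A ≤ ∫ k² ds` there; the two halves add up.
-/

section

open Set Filter MeasureTheory Function
open scoped Topology

section Calculus

theorem second_deriv_nonneg_of_isLocalMin {f f' : ℝ → ℝ} {f'' x : ℝ} (hmin : IsLocalMin f x)
    (hf : ∀ᶠ u in 𝓝 x, HasDerivAt f (f' u) u) (hf' : HasDerivAt f' f'' x) : 0 ≤ f'' := by
  by_contra! hneg
  have hderiv : deriv f =ᶠ[𝓝 x] f' := hf.mono fun u hu => hu.deriv
  have hf'x : deriv f x = 0 := hmin.deriv_eq_zero
  have hf''x : deriv (deriv f) x = f'' := hderiv.deriv_eq.trans hf'.deriv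
  have hmax : IsLocalMax f x :=
    isLocalMax_of_deriv_deriv_neg (hf''x ▸ hneg) hf'x hf.self_of_nhds.continuousAt
  have hconst : f =ᶠ[𝓝 x] fun _ => f x := by
    filter_upwards [hmin, hmax] with u hle hge using le_antisymm hge hle
  have hzero : deriv (deriv f) x = 0 := by simp [hconst.deriv.deriv_eq]
  linarith

theorem hasDerivWithinAt_nonpos_of_isMinOn {f : ℝ → ℝ} {f' a t : ℝ} (hat : a < t)
    (hmin : IsMinOn f (Icc a t) t) (hf : HasDerivWithinAt f f' (Icc a t) t) : f' ≤ 0 := by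
  have hcone : a - t ∈ posTangentConeAt (Icc a t) t :=
    sub_mem_posTangentConeAt_of_segment_subset (by rw [segment_symm, segment_eq_Icc hat.le])
  have hslope : 0 ≤ (a - t) * f' := by
    simpa using hmin.localize.hasFDerivWithinAt_nonneg hf.hasFDerivWithinAt hcone
  exact nonpos_of_mul_nonneg_right hslope (sub_neg.2 hat)

variable {E : Type*} [NormedAddCommGroup E] [NormedSpace ℝ E]

theorem hasDerivWithinAt_intervalIntegral_of_norm_deriv_le {F F' : ℝ → ℝ → E} {s : Set ℝ}
    (hs : Convex ℝ s) {a b t C : ℝ} (hF : ∀ r ∈ s, IntervalIntegrable (F · r) volume a b)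
    (hF' : ∀ u ∈ uIoc a b, ∀ r ∈ s, HasDerivWithinAt (F u) (F' u r) s r)
    (hC : ∀ u ∈ uIoc a b, ∀ r ∈ s, ‖F' u r‖ ≤ C) (ht : t ∈ s) :
    HasDerivWithinAt (fun r => ∫ u in a..b, F u r) (∫ u in a..b, F' u t) s t := by
  rw [hasDerivWithinAt_iff_tendsto_slope]
  have hmem : ∀ᶠ r in 𝓝[s \ {t}] t, r ∈ s := by
    filter_upwards [self_mem_nhdsWithin] with r hr using hr.1
  have hslope : (fun r => ∫ u in a..b, slope (F u) t r) =ᶠ[𝓝[s \ {t}] t]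
      slope (fun r => ∫ u in a..b, F u r) t := by
    filter_upwards [hmem] with r hr
    simp only [slope_def_module, intervalIntegral.integral_smul]
    rw [intervalIntegral.integral_sub (hF r hr) (hF t ht)]
  refine (intervalIntegral.tendsto_integral_filter_of_dominated_convergence (fun _ => C)
    ?_ ?_ intervalIntegrable_const ?_).congr' hslope
  · filter_upwards [hmem] with r hr
    simp only [slope_def_module]
    exact ((hF r hr).sub (hF t ht)).aestronglyMeasurable_restrict_uIoc.const_smul _
  · filter_upwards [self_mem_nhdsWithin] with r hr
    refine Eventually.of_forall fun u hu => ?_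
    have hle : ‖F u r - F u t‖ ≤ C * ‖r - t‖ :=
      hs.norm_image_sub_le_of_norm_hasDerivWithin_le (hF' u hu) (hC u hu) ht hr.1
    have hpos : 0 < ‖r - t‖ := norm_pos_iff.2 (sub_ne_zero.2 hr.2)
    rwa [slope_def_module, norm_smul, norm_inv, inv_mul_le_iff₀ hpos, mul_comm]
  · refine Eventually.of_forall fun u hu => ?_
    exact hasDerivWithinAt_iff_tendsto_slope.1 (hF' u hu t ht)

theorem hasDerivWithinAt_intervalIntegral_of_continuousOn {F F' : ℝ → ℝ → E} {a b p q t : ℝ}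
    (hF : ∀ r ∈ Ico p q, IntervalIntegrable (F · r) volume a b)
    (hF' : ∀ u ∈ uIcc a b, ∀ r ∈ Ico p q, HasDerivWithinAt (F u) (F' u r) (Ico p q) r)
    (hcont : ContinuousOn (uncurry F') (uIcc a b ×ˢ Ico p q)) (ht : t ∈ Ico p q) :
    HasDerivWithinAt (fun r => ∫ u in a..b, F u r) (∫ u in a..b, F' u t) (Ico p q) t := by
  obtain ⟨τ, htτ, hτq⟩ := exists_between ht.2
  have hsub : Icc p τ ⊆ Ico p q := Icc_subset_Ico_right hτq
  obtain ⟨C, hC⟩ := (isCompact_uIcc.prod isCompact_Icc).exists_bound_of_continuousOn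
    (hcont.mono (prod_mono_right hsub))
  have hIcc : HasDerivWithinAt (fun r => ∫ u in a..b, F u r) (∫ u in a..b, F' u t) (Icc p τ) t :=
    hasDerivWithinAt_intervalIntegral_of_norm_deriv_le (convex_Icc p τ)
      (fun r hr => hF r (hsub hr))
      (fun u hu r hr => (hF' u (uIoc_subset_uIcc hu) r (hsub hr)).mono hsub)
      (fun u hu r hr => hC (u, r) ⟨uIoc_subset_uIcc hu, hr⟩) ⟨ht.1, htτ.le⟩
  refine hIcc.mono_of_mem_nhdsWithin ?_
  filter_upwards [self_mem_nhdsWithin, nhdsWithin_le_nhds (Iio_mem_nhds htτ)] with r hr hrτ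
  exact ⟨hr.1, hrτ.le⟩

variable {I : Set ℝ} {u t : ℝ}

theorem hasDerivAt_slice_fst {F : ℝ × ℝ → E} {F' : ℝ × ℝ →L[ℝ] E} (ht : t ∈ I)
    (hF : HasFDerivWithinAt F F' (univ ×ˢ I) (u, t)) :
    HasDerivAt (fun v => F (v, t)) (F' (1, 0)) u := by
  have hslice : HasDerivWithinAt (fun v : ℝ => (v, t)) ((1 : ℝ), (0 : ℝ)) univ u :=
    ((hasDerivAt_id u).prodMk (hasDerivAt_const u t)).hasDerivWithinAt
  exact hasDerivWithinAt_univ.1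
    (hF.comp_hasDerivWithinAt u hslice fun _ _ => mk_mem_prod trivial ht)

theorem hasDerivWithinAt_slice_snd {F : ℝ × ℝ → E} {F' : ℝ × ℝ →L[ℝ] E}
    (hF : HasFDerivWithinAt F F' (univ ×ˢ I) (u, t)) :
    HasDerivWithinAt (fun r => F (u, r)) (F' (0, 1)) I t :=
  hF.comp_hasDerivWithinAt t
    ((hasDerivAt_const t u).prodMk (hasDerivAt_id t)).hasDerivWithinAt fun _ hr => ⟨trivial, hr⟩

variable {F Fu Ft : ℝ → ℝ → E} {n : WithTop ℕ∞}

theorem contDiffOn_partial_fst (hI : UniqueDiffOn ℝ I)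
    (hF : ContDiffOn ℝ (n + 1) (uncurry F) (univ ×ˢ I))
    (hFu : ∀ u, ∀ t ∈ I, HasDerivAt (F · t) (Fu u t) u) :
    ContDiffOn ℝ n (uncurry Fu) (univ ×ˢ I) := by
  refine ((hF.fderivWithin (uniqueDiffOn_univ.prod hI) le_rfl).clm_apply
    (contDiffOn_const (c := ((1 : ℝ), (0 : ℝ))))).congr ?_
  rintro ⟨u, t⟩ ⟨hu, ht⟩
  have hdiff := hF.differentiableOn (by simp) (u, t) ⟨hu, ht⟩
  exact (hFu u t ht).unique (hasDerivAt_slice_fst ht hdiff.hasFDerivWithinAt)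

theorem contDiffOn_partial_snd (hI : UniqueDiffOn ℝ I)
    (hF : ContDiffOn ℝ (n + 1) (uncurry F) (univ ×ˢ I))
    (hFt : ∀ u, ∀ t ∈ I, HasDerivWithinAt (F u) (Ft u t) I t) :
    ContDiffOn ℝ n (uncurry Ft) (univ ×ˢ I) := by
  refine ((hF.fderivWithin (uniqueDiffOn_univ.prod hI) le_rfl).clm_apply
    (contDiffOn_const (c := ((0 : ℝ), (1 : ℝ))))).congr ?_
  rintro ⟨u, t⟩ ⟨hu, ht⟩
  have hdiff := hF.differentiableOn (by simp) (u, t) ⟨hu, ht⟩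
  exact (hI t ht).eq_deriv _ (hFt u t ht) (hasDerivWithinAt_slice_snd hdiff.hasFDerivWithinAt)

theorem exists_hasDerivAt_mixed_partial (hI : Convex ℝ I) (hint : (interior I).Nonempty)
    (hF : ContDiffOn ℝ 2 (uncurry F) (univ ×ˢ I))
    (hFu : ∀ u, ∀ t ∈ I, HasDerivAt (F · t) (Fu u t) u)
    (hFt : ∀ u, ∀ t ∈ I, HasDerivWithinAt (F u) (Ft u t) I t) (ht : t ∈ I) :
    ∃ M, HasDerivAt (Ft · t) M u ∧ HasDerivWithinAt (Fu u) M I t := by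
  have hs : UniqueDiffOn ℝ (univ ×ˢ I : Set (ℝ × ℝ)) :=
    uniqueDiffOn_univ.prod (uniqueDiffOn_convex hI hint)
  have hdiff : ∀ p ∈ univ ×ˢ I, HasFDerivWithinAt (uncurry F)
      (fderivWithin ℝ (uncurry F) (univ ×ˢ I) p) (univ ×ˢ I) p := fun p hp =>
    (hF.differentiableOn (by simp) p hp).hasFDerivWithinAt
  have hdiff₂ : HasFDerivWithinAt (fderivWithin ℝ (uncurry F) (univ ×ˢ I))
      (fderivWithin ℝ (fderivWithin ℝ (uncurry F) (univ ×ˢ I)) (univ ×ˢ I) (u, t))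
      (univ ×ˢ I) (u, t) :=
    (((hF.fderivWithin hs (m := 1) (by norm_num)).differentiableOn (by simp)) (u, t)
      ⟨trivial, ht⟩).hasFDerivWithinAt
  have hdir : ∀ v : ℝ × ℝ, HasFDerivWithinAt
      (fun p => fderivWithin ℝ (uncurry F) (univ ×ˢ I) p v)
      ((fderivWithin ℝ (fderivWithin ℝ (uncurry F) (univ ×ˢ I)) (univ ×ˢ I) (u, t)).flip v)
      (univ ×ˢ I) (u, t) := fun v =>
    (hdiff₂.clm_apply (hasFDerivWithinAt_const v _ _)).congr_fderiv (by ext <;> simp)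
  have hclosure : (u, t) ∈ closure (interior (univ ×ˢ I)) := by
    rw [interior_prod_eq, interior_univ, closure_prod_eq, closure_univ,
      hI.closure_interior_eq_closure_of_nonempty_interior hint]
    exact ⟨trivial, subset_closure ht⟩
  have hsymm := (hF (u, t) ⟨trivial, ht⟩).isSymmSndFDerivWithinAt (by simp) hs hclosure
    ⟨trivial, ht⟩
  refine ⟨_, (hasDerivAt_slice_fst ht (hdir (0, 1))).congr_of_eventuallyEq ?_,
    ((hasDerivWithinAt_slice_snd (hdir (1, 0))).congr ?_ ?_).congr_deriv (hsymm (0, 1) (1, 0))⟩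
  · exact Eventually.of_forall fun v => (uniqueDiffOn_convex hI hint t ht).eq_deriv _
      (hFt v t ht) (hasDerivWithinAt_slice_snd (hdiff (v, t) ⟨trivial, ht⟩))
  · exact fun r hr => (hFu u r hr).unique (hasDerivAt_slice_fst hr (hdiff (u, r) ⟨trivial, hr⟩))
  · exact (hFu u t ht).unique (hasDerivAt_slice_fst ht (hdiff (u, t) ⟨trivial, ht⟩))

end Calculus

section MinimumPrinciple

variable {X : Type*} [TopologicalSpace X] {S : Set X} {τ : ℝ} {f f' : X → ℝ → ℝ}

theorem nonneg_of_hasDerivWithinAt_at_spatial_min {K : ℝ} (hS : IsCompact S)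
    (hf : ContinuousOn (uncurry f) (S ×ˢ Icc 0 τ))
    (hderiv : ∀ x ∈ S, ∀ t ∈ Icc 0 τ, HasDerivWithinAt (f x) (f' x t) (Icc 0 τ) t)
    (hf' : ∀ x ∈ S, ∀ t ∈ Icc 0 τ, IsMinOn (f · t) S x → f x t < 0 → K * f x t < f' x t)
    (hinit : ∀ x ∈ S, 0 ≤ f x 0) : ∀ x ∈ S, ∀ t ∈ Icc 0 τ, 0 ≤ f x t := by
  intro x₁ hx₁ t₁ ht₁
  let w : X → ℝ → ℝ := fun x t => exp (-K * t) * f x t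
  have hexp : Continuous fun p : X × ℝ => exp (-K * p.2) := by fun_prop
  obtain ⟨⟨x, t⟩, ⟨hx, ht⟩, hmin⟩ := (hS.prod isCompact_Icc).exists_isMinOn
    ⟨(x₁, t₁), hx₁, ht₁⟩ (hexp.continuousOn.mul hf : ContinuousOn (uncurry w) (S ×ˢ Icc 0 τ))
  have hw_min : ∀ y ∈ S, ∀ r ∈ Icc 0 τ, w x t ≤ w y r := fun y hy r hr => hmin (mk_mem_prod hy hr)
  suffices hnonneg : 0 ≤ f x t by
    have := (mul_nonneg (exp_pos (-K * t)).le hnonneg).trans (hw_min x₁ hx₁ t₁ ht₁)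
    exact nonneg_of_mul_nonneg_right this (exp_pos _)
  by_contra! hneg
  have ht0 : 0 < t := ht.1.lt_of_ne fun h0 => (hinit x hx).not_gt (h0 ▸ hneg)
  have hspace : IsMinOn (f · t) S x := fun y hy =>
    le_of_mul_le_mul_left (hw_min y hy t ht) (exp_pos _)
  have hsub : Icc 0 t ⊆ Icc 0 τ := Icc_subset_Icc_right ht.2
  have hw' : HasDerivWithinAt (w x) (exp (-K * t) * (f' x t - K * f x t)) (Icc 0 t) t := by
    have hexp' : HasDerivAt (fun r => exp (-K * r)) (exp (-K * t) * -K) t := by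
      simpa using ((hasDerivAt_id t).const_mul (-K)).exp
    exact (hexp'.hasDerivWithinAt.mul ((hderiv x hx t ht).mono hsub)).congr_deriv (by ring)
  have hle := hasDerivWithinAt_nonpos_of_isMinOn ht0 (fun r hr => hw_min x hx r (hsub hr)) hw'
  have hpos : 0 < exp (-K * t) * (f' x t - K * f x t) :=
    mul_pos (exp_pos _) (sub_pos.2 (hf' x hx t ht hspace hneg))
  linarith

theorem pos_of_hasDerivWithinAt_at_spatial_min {b : X → ℝ → ℝ} (hS : IsCompact S)
    (hf : ContinuousOn (uncurry f) (S ×ˢ Icc 0 τ)) (hb : ContinuousOn (uncurry b) (S ×ˢ Icc 0 τ))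
    (hderiv : ∀ x ∈ S, ∀ t ∈ Icc 0 τ, HasDerivWithinAt (f x) (f' x t) (Icc 0 τ) t)
    (hf' : ∀ x ∈ S, ∀ t ∈ Icc 0 τ, IsMinOn (f · t) S x → b x t * f x t ≤ f' x t)
    (hinit : ∀ x ∈ S, 0 < f x 0) : ∀ x ∈ S, ∀ t ∈ Icc 0 τ, 0 < f x t := by
  intro x₁ hx₁ t₁ ht₁
  have h0 : (0 : ℝ) ∈ Icc 0 τ := ⟨le_rfl, ht₁.1.trans ht₁.2⟩
  obtain ⟨M, hM⟩ := (hS.prod isCompact_Icc).exists_bound_of_continuousOn hb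
  have hf0 : ContinuousOn (f · 0) S :=
    hf.comp (f := fun x => (x, (0 : ℝ))) (by fun_prop) fun x hx => mk_mem_prod hx h0
  obtain ⟨x₀, hx₀, hx₀_min⟩ := hS.exists_isMinOn ⟨x₁, hx₁⟩ hf0
  let δ := f x₀ 0
  have hδ : 0 < δ := hinit x₀ hx₀
  let K := M + 1
  -- The barrier `δ exp (-K t)` decays faster than `f` can at a spatial minimum.
  let barrier : ℝ → ℝ := fun t => δ * exp (-K * t)
  have hbarrier_pos : ∀ t, 0 < barrier t := fun t => mul_pos hδ (exp_pos _)
  have hbarrier' : ∀ t, HasDerivAt barrier (-K * barrier t) t := fun t =>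
    ((((hasDerivAt_id t).const_mul (-K)).exp).const_mul δ).congr_deriv (by simp [barrier]; ring)
  have hbarrier_cont : Continuous fun p : X × ℝ => barrier p.2 := by fun_prop
  have hnonneg := nonneg_of_hasDerivWithinAt_at_spatial_min (f := fun x t => f x t - barrier t)
    (K := K) hS (hf.sub hbarrier_cont.continuousOn)
    (fun x hx t ht => (hderiv x hx t ht).sub (hbarrier' t).hasDerivWithinAt) ?_ ?_ x₁ hx₁ t₁ ht₁
  · linarith [hbarrier_pos t₁]
  · intro x hx t ht hmin hneg
    have hfmin : IsMinOn (f · t) S x := fun y hy => by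
      have := hmin hy
      simpa using this
    have hbound := abs_le.1 (hM (x, t) ⟨hx, ht⟩)
    simp only [uncurry_apply_pair] at hbound
    have hupper : 0 < (K - b x t) * (barrier t - f x t) :=
      mul_pos (by linarith) (by linarith)
    have hlower : 0 < (K + b x t) * barrier t := mul_pos (by linarith) (hbarrier_pos t)
    linarith [hf' x hx t ht hfmin]
  · intro x hx
    simpa [barrier] using hx₀_min hx

end MinimumPrinciple

section Wirtinger

variable {q S ν κ : ℝ → ℝ} {a b : ℝ}

theorem hasDerivAt_sq_mul_tan {l m u : ℝ} (hq : HasDerivAt q (S u * κ u) u)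
    (hν : HasDerivAt ν (κ u) u) (hcos : cos (l * (ν u - m)) ≠ 0) :
    HasDerivAt (fun v => l * q v ^ 2 * tan (l * (ν v - m)))
      ((2 * l * q u * S u * tan (l * (ν u - m)) +
        l ^ 2 * q u ^ 2 * (1 + tan (l * (ν u - m)) ^ 2)) * κ u) u := by
  have htan := (hasDerivAt_tan hcos).comp u ((hν.sub_const m).const_mul l)
  refine (((hq.pow 2).const_mul l).mul htan).congr_deriv ?_
  have hsec : 1 / cos (l * (ν u - m)) ^ 2 = 1 + tan (l * (ν u - m)) ^ 2 := by
    rw [one_div, ← inv_one_add_tan_sq hcos, inv_inv]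
  simp only [hsec, comp_apply, Pi.pow_apply]
  push_cast
  ring

theorem sub_sq_mul_tan_le_integral {l m : ℝ} (hl : l ∈ Ioo 0 1) (hab : a ≤ b)
    (hq : ∀ u, HasDerivAt q (S u * κ u) u) (hν : ∀ u, HasDerivAt ν (κ u) u) (hS : Continuous S)
    (hκ : Continuous κ) (hκ0 : ∀ u, 0 ≤ κ u) (hm : ∀ u ∈ Icc a b, |ν u - m| ≤ π / 2) :
    l * q a ^ 2 * tan (l * (ν a - m)) - l * q b ^ 2 * tan (l * (ν b - m)) ≤
      ∫ u in a..b, (S u ^ 2 - l ^ 2 * q u ^ 2) * κ u := by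
  have hqc : Continuous q := continuous_iff_continuousAt.2 fun u => (hq u).continuousAt
  have hνc : Continuous ν := continuous_iff_continuousAt.2 fun u => (hν u).continuousAt
  -- Taking `l < 1` keeps `tan (l * (ν u - m))` finite up to the ends of the half turn.
  have hcos : ∀ u ∈ Icc a b, cos (l * (ν u - m)) ≠ 0 := fun u hu => by
    have hlt : |l * (ν u - m)| < π / 2 := by
      rw [abs_mul, abs_of_pos hl.1]
      nlinarith [abs_nonneg (ν u - m), hm u hu, hl.1, hl.2, pi_pos]
    exact (cos_pos_of_mem_Ioo (abs_lt.1 hlt)).ne'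
  have htan : ContinuousOn (fun u => tan (l * (ν u - m))) (Icc a b) :=
    continuousOn_tan.comp (f := fun u => l * (ν u - m)) (by fun_prop) hcos
  have hint : IntervalIntegrable (fun u => (2 * l * q u * S u * tan (l * (ν u - m)) +
      l ^ 2 * q u ^ 2 * (1 + tan (l * (ν u - m)) ^ 2)) * κ u) volume a b :=
    ContinuousOn.intervalIntegrable_of_Icc hab (by fun_prop)
  have hftc := intervalIntegral.integral_eq_sub_of_hasDerivAt
    (fun u hu => hasDerivAt_sq_mul_tan (hq u) (hν u) (hcos u (uIcc_of_le hab ▸ hu))) hint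
  rw [← neg_sub, ← hftc, ← intervalIntegral.integral_neg]
  refine intervalIntegral.integral_mono_on hab hint.neg
    (Continuous.intervalIntegrable (by fun_prop) _ _) fun u _ => ?_
  have hsq : 0 ≤ (S u + l * q u * tan (l * (ν u - m))) ^ 2 * κ u :=
    mul_nonneg (sq_nonneg _) (hκ0 u)
  linarith

theorem mul_integral_sq_le_integral_deriv_sq_of_half_turn {l v : ℝ} (hl : l ∈ Ioo 0 1)
    (hv : v ∈ Icc a b) (hq : ∀ u, HasDerivAt q (S u * κ u) u) (hν : ∀ u, HasDerivAt ν (κ u) u)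
    (hS : Continuous S) (hκ : Continuous κ) (hκ0 : ∀ u, 0 ≤ κ u) (hνab : ν b = ν a + π)
    (hqab : q b = q a) (hqv : q v = 0) :
    l ^ 2 * ∫ u in a..b, q u ^ 2 * κ u ≤ ∫ u in a..b, S u ^ 2 * κ u := by
  have hqc : Continuous q := continuous_iff_continuousAt.2 fun u => (hq u).continuousAt
  have hmono : Monotone ν := monotone_of_hasDerivAt_nonneg hν hκ0
  have hνv := And.intro (hmono hv.1) (hmono hv.2)
  have hleft := sub_sq_mul_tan_le_integral (m := ν v - π / 2) hl hv.1 hq hν hS hκ hκ0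
    fun u hu => abs_le.2 ⟨by linarith [hmono hu.1], by linarith [hmono hu.2]⟩
  have hright := sub_sq_mul_tan_le_integral (m := ν v + π / 2) hl hv.2 hq hν hS hκ hκ0
    fun u hu => abs_le.2 ⟨by linarith [hmono hu.1], by linarith [hmono hu.2]⟩
  have hjoin := intervalIntegral.integral_add_adjacent_intervals (μ := volume)
    (f := fun u => (S u ^ 2 - l ^ 2 * q u ^ 2) * κ u) (a := a) (b := v) (c := b)
    (Continuous.intervalIntegrable (by fun_prop) _ _)
    (Continuous.intervalIntegrable (by fun_prop) _ _)
  have hsplit : ∫ u in a..b, (S u ^ 2 - l ^ 2 * q u ^ 2) * κ u =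
      (∫ u in a..b, S u ^ 2 * κ u) - l ^ 2 * ∫ u in a..b, q u ^ 2 * κ u := by
    rw [← intervalIntegral.integral_const_mul, ← intervalIntegral.integral_sub
      (Continuous.intervalIntegrable (by fun_prop) _ _)
      (Continuous.intervalIntegrable (by fun_prop) _ _)]
    congr with u
    ring
  -- The two centres differ by `π`, as do the end angles, so the boundary terms at `a`, `b` cancel.
  have hends : ν b - (ν v + π / 2) = ν a - (ν v - π / 2) := by rw [hνab]; ring
  rw [hqv] at hleft hright
  rw [hends, hqab] at hright
  linarith

theorem integral_sq_le_integral_deriv_sq_of_half_turn {v : ℝ} (hv : v ∈ Icc a b)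
    (hq : ∀ u, HasDerivAt q (S u * κ u) u) (hν : ∀ u, HasDerivAt ν (κ u) u) (hS : Continuous S)
    (hκ : Continuous κ) (hκ0 : ∀ u, 0 ≤ κ u) (hνab : ν b = ν a + π) (hqab : q b = q a)
    (hqv : q v = 0) :
    ∫ u in a..b, q u ^ 2 * κ u ≤ ∫ u in a..b, S u ^ 2 * κ u := by
  have hlim : Tendsto (fun l : ℝ => l ^ 2 * ∫ u in a..b, q u ^ 2 * κ u) (𝓝[<] 1)
      (𝓝 (∫ u in a..b, q u ^ 2 * κ u)) := by
    refine Tendsto.mono_left ?_ nhdsWithin_le_nhds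
    exact Continuous.tendsto' (by fun_prop) _ _ (by simp)
  refine le_of_tendsto hlim ?_
  filter_upwards [Ioo_mem_nhdsLT one_pos] with l hl
  exact mul_integral_sq_le_integral_deriv_sq_of_half_turn hl hv hq hν hS hκ hκ0 hνab hqab hqv

end Wirtinger

section PlaneCurves

/-- The unit tangent vector with tangent angle `θ`. -/
noncomputable def tangentDir (θ : ℝ) : ℝ × ℝ := (cos θ, sin θ)

/-- The unit normal vector with tangent angle `θ`, pointing to the left. -/
noncomputable def normalDir (θ : ℝ) : ℝ × ℝ := (-sin θ, cos θ)

theorem hasDerivAt_tangentDir (θ : ℝ) : HasDerivAt tangentDir (normalDir θ) θ :=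
  (hasDerivAt_cos θ).prodMk (hasDerivAt_sin θ)

theorem hasDerivAt_normalDir (θ : ℝ) : HasDerivAt normalDir (-tangentDir θ) θ :=
  (hasDerivAt_sin θ).neg.prodMk (hasDerivAt_cos θ)

theorem tangentDir_add_two_pi (θ : ℝ) : tangentDir (θ + 2 * π) = tangentDir θ := by
  simp [tangentDir]

theorem smul_tangentDir_add_smul_normalDir_inj {θ a b c d : ℝ} :
    a • tangentDir θ + b • normalDir θ = c • tangentDir θ + d • normalDir θ ↔ a = c ∧ b = d := by
  refine ⟨fun h => ?_, by rintro ⟨rfl, rfl⟩; rfl⟩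
  simp only [tangentDir, normalDir, Prod.smul_mk, Prod.mk_add_mk, smul_eq_mul, Prod.mk.injEq] at h
  constructor
  · linear_combination cos θ * h.1 + sin θ * h.2 + (c - a) * sin_sq_add_cos_sq θ
  · linear_combination cos θ * h.2 - sin θ * h.1 + (d - b) * sin_sq_add_cos_sq θ

/-- A plane curve `x` with continuous positive speed `g`, tangent angle `ν` and turning rate
`κ = ν'`; its signed curvature is `κ / g`. -/
structure IsRegularCurve (x : ℝ → ℝ × ℝ) (g ν κ : ℝ → ℝ) : Prop where
  hasDerivAt_curve : ∀ u, HasDerivAt x (g u • tangentDir (ν u)) u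
  hasDerivAt_angle : ∀ u, HasDerivAt ν (κ u) u
  continuous_speed : Continuous g
  continuous_turning : Continuous κ
  speed_pos : ∀ u, 0 < g u

/-- The distance from `o` to the tangent line of `x` at `x u`, signed so that it is positive when
`o` lies to the left. -/
noncomputable def supportFn (x : ℝ → ℝ × ℝ) (ν : ℝ → ℝ) (o : ℝ × ℝ) (u : ℝ) : ℝ :=
  ((x u).1 - o.1) * sin (ν u) - ((x u).2 - o.2) * cos (ν u)

/-- The component of `x u - o` along the tangent direction. -/
noncomputable def tangentialFn (x : ℝ → ℝ × ℝ) (ν : ℝ → ℝ) (o : ℝ × ℝ) (u : ℝ) : ℝ :=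
  ((x u).1 - o.1) * cos (ν u) + ((x u).2 - o.2) * sin (ν u)

/-- The signed area swept out from the origin along the arc of `x` over `[a, b]`, in the form
`½ ∫ det (x, x')` used by `areaF`. -/
noncomputable def sectorArea (x : ℝ → ℝ × ℝ) (g ν : ℝ → ℝ) (a b : ℝ) : ℝ :=
  (1 / 2) * ∫ u in a..b, ((x u).1 * (g u * sin (ν u)) - (x u).2 * (g u * cos (ν u)))

/-- The signed area between the arc of `x` over `[a, b]` and its chord. -/
noncomputable def segmentArea (x : ℝ → ℝ × ℝ) (g ν : ℝ → ℝ) (a b : ℝ) : ℝ :=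
  sectorArea x g ν a b - (1 / 2) * ((x a).1 * (x b).2 - (x a).2 * (x b).1)

variable {x : ℝ → ℝ × ℝ} {g ν κ : ℝ → ℝ} {a b : ℝ} {o : ℝ × ℝ}

theorem supportFn_midpoint_of_half_turn (hν : ν b = ν a + π) :
    supportFn x ν (midpoint ℝ (x a) (x b)) b = supportFn x ν (midpoint ℝ (x a) (x b)) a := by
  simp only [supportFn, hν, sin_add_pi, cos_add_pi, midpoint_eq_smul_add, Prod.smul_fst,
    Prod.smul_snd, Prod.fst_add, Prod.snd_add, smul_eq_mul, invOf_eq_inv]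
  ring

theorem tangentialFn_midpoint_of_half_turn (hν : ν b = ν a + π) :
    tangentialFn x ν (midpoint ℝ (x a) (x b)) b =
      tangentialFn x ν (midpoint ℝ (x a) (x b)) a := by
  simp only [tangentialFn, hν, sin_add_pi, cos_add_pi, midpoint_eq_smul_add, Prod.smul_fst,
    Prod.smul_snd, Prod.fst_add, Prod.snd_add, smul_eq_mul, invOf_eq_inv]
  ring

namespace IsRegularCurve

theorem continuous_curve (h : IsRegularCurve x g ν κ) : Continuous x :=
  continuous_iff_continuousAt.2 fun u => (h.hasDerivAt_curve u).continuousAt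

theorem continuous_angle (h : IsRegularCurve x g ν κ) : Continuous ν :=
  continuous_iff_continuousAt.2 fun u => (h.hasDerivAt_angle u).continuousAt

theorem hasDerivAt_fst (h : IsRegularCurve x g ν κ) (u : ℝ) :
    HasDerivAt (fun v => (x v).1) (g u * cos (ν u)) u :=
  (ContinuousLinearMap.fst ℝ ℝ ℝ).hasFDerivAt.comp_hasDerivAt u (h.hasDerivAt_curve u)

theorem hasDerivAt_snd (h : IsRegularCurve x g ν κ) (u : ℝ) :
    HasDerivAt (fun v => (x v).2) (g u * sin (ν u)) u :=
  (ContinuousLinearMap.snd ℝ ℝ ℝ).hasFDerivAt.comp_hasDerivAt u (h.hasDerivAt_curve u)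

theorem hasDerivAt_supportFn (h : IsRegularCurve x g ν κ) (o : ℝ × ℝ) (u : ℝ) :
    HasDerivAt (supportFn x ν o) (tangentialFn x ν o u * κ u) u := by
  refine (((h.hasDerivAt_fst u).sub_const o.1).mul (h.hasDerivAt_angle u).sin).sub
    (((h.hasDerivAt_snd u).sub_const o.2).mul (h.hasDerivAt_angle u).cos) |>.congr_deriv ?_
  rw [tangentialFn]
  ring

theorem hasDerivAt_tangentialFn (h : IsRegularCurve x g ν κ) (o : ℝ × ℝ) (u : ℝ) :
    HasDerivAt (tangentialFn x ν o) (g u - supportFn x ν o u * κ u) u := by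
  refine (((h.hasDerivAt_fst u).sub_const o.1).mul (h.hasDerivAt_angle u).cos).add
    (((h.hasDerivAt_snd u).sub_const o.2).mul (h.hasDerivAt_angle u).sin) |>.congr_deriv ?_
  rw [supportFn]
  linear_combination g u * sin_sq_add_cos_sq (ν u)

theorem continuous_supportFn (h : IsRegularCurve x g ν κ) (o : ℝ × ℝ) :
    Continuous (supportFn x ν o) :=
  continuous_iff_continuousAt.2 fun u => (h.hasDerivAt_supportFn o u).continuousAt

theorem continuous_tangentialFn (h : IsRegularCurve x g ν κ) (o : ℝ × ℝ) :
    Continuous (tangentialFn x ν o) :=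
  continuous_iff_continuousAt.2 fun u => (h.hasDerivAt_tangentialFn o u).continuousAt

theorem continuous_curvature (h : IsRegularCurve x g ν κ) : Continuous fun u => κ u / g u :=
  h.continuous_turning.div h.continuous_speed fun u => (h.speed_pos u).ne'

theorem integral_turning (h : IsRegularCurve x g ν κ) : ∫ u in a..b, κ u = ν b - ν a :=
  intervalIntegral.integral_eq_sub_of_hasDerivAt (fun u _ => h.hasDerivAt_angle u)
    (h.continuous_turning.intervalIntegrable _ _)

theorem integral_supportFn_mul_turning (h : IsRegularCurve x g ν κ)
    (hS : tangentialFn x ν o b = tangentialFn x ν o a) :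
    ∫ u in a..b, supportFn x ν o u * κ u = ∫ u in a..b, g u := by
  have hP := h.continuous_supportFn o
  have hκ := h.continuous_turning
  have hg := h.continuous_speed.intervalIntegrable (μ := volume) a b
  have hPκ : IntervalIntegrable (fun u => supportFn x ν o u * κ u) volume a b :=
    Continuous.intervalIntegrable (by fun_prop) _ _
  have hftc := intervalIntegral.integral_eq_sub_of_hasDerivAt
    (fun u _ => h.hasDerivAt_tangentialFn o u) (hg.sub hPκ)
  rw [intervalIntegral.integral_sub hg hPκ, hS] at hftc
  linarith

theorem integral_supportFn_sq_mul_turning (h : IsRegularCurve x g ν κ)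
    (hP : supportFn x ν o b = supportFn x ν o a)
    (hS : tangentialFn x ν o b = tangentialFn x ν o a) :
    ∫ u in a..b, supportFn x ν o u ^ 2 * κ u =
      (∫ u in a..b, tangentialFn x ν o u ^ 2 * κ u) + ∫ u in a..b, supportFn x ν o u * g u := by
  have hPc := h.continuous_supportFn o
  have hSc := h.continuous_tangentialFn o
  have hκ := h.continuous_turning
  have hg := h.continuous_speed
  have hftc := intervalIntegral.integral_eq_sub_of_hasDerivAt (a := a) (b := b)
    (f' := fun u => tangentialFn x ν o u ^ 2 * κ u - supportFn x ν o u ^ 2 * κ u +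
      supportFn x ν o u * g u)
    (fun u _ => ((h.hasDerivAt_supportFn o u).mul (h.hasDerivAt_tangentialFn o u)).congr_deriv
      (by ring)) (Continuous.intervalIntegrable (by fun_prop) _ _)
  rw [intervalIntegral.integral_add (Continuous.intervalIntegrable (by fun_prop) _ _)
      (Continuous.intervalIntegrable (by fun_prop) _ _),
    intervalIntegral.integral_sub (Continuous.intervalIntegrable (by fun_prop) _ _)
      (Continuous.intervalIntegrable (by fun_prop) _ _), Pi.mul_apply, Pi.mul_apply, hP, hS] at hftc
  linarith

theorem integral_supportFn_sub_sq_mul_turning (h : IsRegularCurve x g ν κ)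
    (hS : tangentialFn x ν o b = tangentialFn x ν o a) (c : ℝ) :
    ∫ u in a..b, (supportFn x ν o u - c) ^ 2 * κ u =
      (∫ u in a..b, supportFn x ν o u ^ 2 * κ u) - 2 * c * (∫ u in a..b, g u) +
        c ^ 2 * (ν b - ν a) := by
  have hPc := h.continuous_supportFn o
  have hκ := h.continuous_turning
  rw [← h.integral_supportFn_mul_turning hS, ← h.integral_turning,
    ← intervalIntegral.integral_const_mul, ← intervalIntegral.integral_const_mul,
    ← intervalIntegral.integral_sub (Continuous.intervalIntegrable (by fun_prop) _ _)
      (Continuous.intervalIntegrable (by fun_prop) _ _),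
    ← intervalIntegral.integral_add (Continuous.intervalIntegrable (by fun_prop) _ _)
      (Continuous.intervalIntegrable (by fun_prop) _ _)]
  congr with u
  ring

theorem bonnesen_inequality_of_half_turn (h : IsRegularCurve x g ν κ) (hκ : ∀ u, 0 ≤ κ u)
    (hν : ν b = ν a + π) (hP : supportFn x ν o b = supportFn x ν o a)
    (hS : tangentialFn x ν o b = tangentialFn x ν o a) {v : ℝ} (hv : v ∈ Icc a b) :
    (∫ u in a..b, supportFn x ν o u * g u) + π * supportFn x ν o v ^ 2 ≤
      2 * supportFn x ν o v * ∫ u in a..b, g u := by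
  have hwirt := integral_sq_le_integral_deriv_sq_of_half_turn
    (q := fun u => supportFn x ν o u - supportFn x ν o v) hv
    (fun u => (h.hasDerivAt_supportFn o u).sub_const _) h.hasDerivAt_angle
    (h.continuous_tangentialFn o) h.continuous_turning hκ hν (by rw [hP]) (sub_self _)
  rw [h.integral_supportFn_sub_sq_mul_turning hS, h.integral_supportFn_sq_mul_turning hP hS,
    hν] at hwirt
  linarith

theorem pi_mul_integral_supportFn_sq_le_of_half_turn (h : IsRegularCurve x g ν κ)
    (hκ : ∀ u, 0 ≤ κ u) (hab : a ≤ b) (hν : ν b = ν a + π)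
    (hP : supportFn x ν o b = supportFn x ν o a)
    (hS : tangentialFn x ν o b = tangentialFn x ν o a) :
    π * ∫ u in a..b, supportFn x ν o u ^ 2 * g u ≤
      (∫ u in a..b, supportFn x ν o u * g u) * ∫ u in a..b, g u := by
  have hPc := h.continuous_supportFn o
  have hg := h.continuous_speed
  set A := ∫ u in a..b, supportFn x ν o u * g u
  set l := ∫ u in a..b, g u
  have hmono : ∫ u in a..b, (A * g u + π * (supportFn x ν o u ^ 2 * g u)) ≤
      ∫ u in a..b, 2 * l * (supportFn x ν o u * g u) := by
    refine intervalIntegral.integral_mono_on hab (Continuous.intervalIntegrable (by fun_prop) _ _)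
      (Continuous.intervalIntegrable (by fun_prop) _ _) fun v hv => ?_
    have hbonnesen := mul_le_mul_of_nonneg_right (h.bonnesen_inequality_of_half_turn hκ hν hP hS hv)
      (h.speed_pos v).le
    linarith
  rw [intervalIntegral.integral_add (Continuous.intervalIntegrable (by fun_prop) _ _)
      (Continuous.intervalIntegrable (by fun_prop) _ _), intervalIntegral.integral_const_mul,
    intervalIntegral.integral_const_mul, intervalIntegral.integral_const_mul] at hmono
  linarith

theorem integral_curvature_sub_sq (h : IsRegularCurve x g ν κ)
    (hS : tangentialFn x ν o b = tangentialFn x ν o a) (r : ℝ) :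
    ∫ u in a..b, (κ u / g u - r * supportFn x ν o u) ^ 2 * g u =
      (∫ u in a..b, (κ u / g u) ^ 2 * g u) - 2 * r * (∫ u in a..b, g u) +
        r ^ 2 * ∫ u in a..b, supportFn x ν o u ^ 2 * g u := by
  have hPc := h.continuous_supportFn o
  have hg := h.continuous_speed
  have hκ := h.continuous_turning
  have hk := h.continuous_curvature
  rw [← h.integral_supportFn_mul_turning hS, ← intervalIntegral.integral_const_mul,
    ← intervalIntegral.integral_const_mul,
    ← intervalIntegral.integral_sub (Continuous.intervalIntegrable (by fun_prop) _ _)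
      (Continuous.intervalIntegrable (by fun_prop) _ _),
    ← intervalIntegral.integral_add (Continuous.intervalIntegrable (by fun_prop) _ _)
      (Continuous.intervalIntegrable (by fun_prop) _ _)]
  congr with u
  have := (h.speed_pos u).ne'
  field_simp
  ring

theorem gage_inequality_of_half_turn (h : IsRegularCurve x g ν κ) (hκ : ∀ u, 0 ≤ κ u) (hab : a ≤ b)
    (hν : ν b = ν a + π) (hP : supportFn x ν o b = supportFn x ν o a)
    (hS : tangentialFn x ν o b = tangentialFn x ν o a)
    (hA : 0 < ∫ u in a..b, supportFn x ν o u * g u) :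
    π * ∫ u in a..b, g u ≤
      (∫ u in a..b, supportFn x ν o u * g u) * ∫ u in a..b, (κ u / g u) ^ 2 * g u := by
  have hsupport := h.pi_mul_integral_supportFn_sq_le_of_half_turn hκ hab hν hP hS
  set A := ∫ u in a..b, supportFn x ν o u * g u
  have hsq : 0 ≤ ∫ u in a..b, (κ u / g u - π / A * supportFn x ν o u) ^ 2 * g u :=
    intervalIntegral.integral_nonneg hab fun u _ => mul_nonneg (sq_nonneg _) (h.speed_pos u).le
  rw [h.integral_curvature_sub_sq hS] at hsq
  have hscaled : 0 ≤ A * (∫ u in a..b, (κ u / g u) ^ 2 * g u) - 2 * π * (∫ u in a..b, g u) +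
      π / A * (π * ∫ u in a..b, supportFn x ν o u ^ 2 * g u) := by
    refine (mul_nonneg hA.le hsq).trans_eq ?_
    field_simp
  have hle := mul_le_mul_of_nonneg_left hsupport (div_pos pi_pos hA).le
  rw [← mul_assoc (π / A) A, div_mul_cancel₀ _ hA.ne'] at hle
  linarith

theorem integral_supportFn_mul_speed (h : IsRegularCurve x g ν κ) :
    ∫ u in a..b, supportFn x ν o u * g u = 2 * sectorArea x g ν a b -
      (o.1 * ((x b).2 - (x a).2) - o.2 * ((x b).1 - (x a).1)) := by
  have hx := h.continuous_curve
  have hν := h.continuous_angle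
  have hg := h.continuous_speed
  rw [← intervalIntegral.integral_eq_sub_of_hasDerivAt (fun u _ => h.hasDerivAt_snd u)
      (Continuous.intervalIntegrable (by fun_prop) _ _),
    ← intervalIntegral.integral_eq_sub_of_hasDerivAt (fun u _ => h.hasDerivAt_fst u)
      (Continuous.intervalIntegrable (by fun_prop) _ _), sectorArea, ← mul_assoc,
    mul_one_div_cancel two_ne_zero, one_mul, ← intervalIntegral.integral_const_mul,
    ← intervalIntegral.integral_const_mul,
    ← intervalIntegral.integral_sub (Continuous.intervalIntegrable (by fun_prop) _ _)
      (Continuous.intervalIntegrable (by fun_prop) _ _),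
    ← intervalIntegral.integral_sub (Continuous.intervalIntegrable (by fun_prop) _ _)
      (Continuous.intervalIntegrable (by fun_prop) _ _)]
  congr with u
  rw [supportFn]
  ring

theorem pi_mul_length_le_segmentArea_mul (h : IsRegularCurve x g ν κ) (hκ : ∀ u, 0 ≤ κ u)
    (hab : a ≤ b) (hν : ν b = ν a + π) (hA : 0 < segmentArea x g ν a b) :
    π * ∫ u in a..b, g u ≤ 2 * segmentArea x g ν a b * ∫ u in a..b, (κ u / g u) ^ 2 * g u := by
  have harea : ∫ u in a..b, supportFn x ν (midpoint ℝ (x a) (x b)) u * g u =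
      2 * segmentArea x g ν a b := by
    rw [h.integral_supportFn_mul_speed, segmentArea]
    simp only [midpoint_eq_smul_add, Prod.smul_fst, Prod.smul_snd, Prod.fst_add, Prod.snd_add,
      smul_eq_mul, invOf_eq_inv]
    ring
  rw [← harea]
  exact h.gage_inequality_of_half_turn hκ hab hν (supportFn_midpoint_of_half_turn hν)
    (tangentialFn_midpoint_of_half_turn hν) (by linarith)

theorem continuous_areaIntegrand (h : IsRegularCurve x g ν κ) :
    Continuous fun u => (x u).1 * (g u * sin (ν u)) - (x u).2 * (g u * cos (ν u)) := by
  have hx := h.continuous_curve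
  have hν := h.continuous_angle
  have hg := h.continuous_speed
  fun_prop

theorem sectorArea_add (h : IsRegularCurve x g ν κ) (a b c : ℝ) :
    sectorArea x g ν a b + sectorArea x g ν b c = sectorArea x g ν a c := by
  rw [sectorArea, sectorArea, ← mul_add, intervalIntegral.integral_add_adjacent_intervals
    (h.continuous_areaIntegrand.intervalIntegrable _ _)
    (h.continuous_areaIntegrand.intervalIntegrable _ _), sectorArea]

theorem continuous_segmentArea_comp (h : IsRegularCurve x g ν κ) {β : ℝ → ℝ} (hβ : Continuous β) :
    Continuous fun u => segmentArea x g ν u (β u) := by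
  have hx := h.continuous_curve
  have hprim : Continuous (sectorArea x g ν 0) :=
    (intervalIntegral.continuous_primitive
      (fun _ _ => h.continuous_areaIntegrand.intervalIntegrable _ _) 0).const_mul _
  have hsector : ∀ u, sectorArea x g ν u (β u) = sectorArea x g ν 0 (β u) - sectorArea x g ν 0 u :=
    fun u => eq_sub_of_add_eq' (h.sectorArea_add 0 u (β u))
  simp only [segmentArea, hsector]
  fun_prop

end IsRegularCurve

/-- A regular curve that is periodic with period `1` and has turning number one. -/
structure IsClosedCurve_s17 (x : ℝ → ℝ × ℝ) (g ν κ : ℝ → ℝ) : Prop extends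
    IsRegularCurve x g ν κ where
  curve_add_one : ∀ u, x (u + 1) = x u
  angle_add_one : ∀ u, ν (u + 1) = ν u + 2 * π

namespace IsClosedCurve_s17

theorem speed_add_one (h : IsClosedCurve_s17 x g ν κ) (u : ℝ) : g (u + 1) = g u := by
  have hshift := (h.hasDerivAt_curve (u + 1)).comp_add_const u 1
  simp only [h.curve_add_one, h.angle_add_one, tangentDir_add_two_pi] at hshift
  have heq := hshift.unique (h.hasDerivAt_curve u)
  exact (smul_tangentDir_add_smul_normalDir_inj.1 (congrArg (· + (0 : ℝ) • normalDir (ν u)) heq)).1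

theorem turning_add_one (h : IsClosedCurve_s17 x g ν κ) (u : ℝ) : κ (u + 1) = κ u := by
  have hshift := (h.hasDerivAt_angle (u + 1)).comp_add_const u 1
  simp only [h.angle_add_one] at hshift
  exact hshift.unique ((h.hasDerivAt_angle u).add_const _)

theorem integral_turning_eq_two_pi (h : IsClosedCurve_s17 x g ν κ) :
    ∫ u in (0 : ℝ)..1, κ u = 2 * π := by
  have := h.angle_add_one 0
  rw [zero_add] at this
  rw [h.integral_turning, this, add_sub_cancel_left]

theorem sectorArea_add_one (h : IsClosedCurve_s17 x g ν κ) (a : ℝ) :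
    sectorArea x g ν a (a + 1) = sectorArea x g ν 0 1 := by
  have hper : Periodic
      (fun u => (x u).1 * (g u * sin (ν u)) - (x u).2 * (g u * cos (ν u))) 1 := fun u => by
    simp only [h.curve_add_one, h.speed_add_one, h.angle_add_one, sin_add_two_pi, cos_add_two_pi]
  rw [sectorArea, hper.intervalIntegral_add_eq a 0, zero_add, sectorArea]

theorem segmentArea_add_segmentArea (h : IsClosedCurve_s17 x g ν κ) (a b : ℝ) :
    segmentArea x g ν a b + segmentArea x g ν b (a + 1) = sectorArea x g ν 0 1 := by
  rw [← h.sectorArea_add_one a, ← h.sectorArea_add a b (a + 1), segmentArea, segmentArea,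
    h.curve_add_one]
  ring

theorem exists_continuous_halfTurn (h : IsClosedCurve_s17 x g ν κ) (hκ : ∀ u, 0 < κ u) :
    ∃ β : ℝ → ℝ, Continuous β ∧ (∀ u, u ≤ β u) ∧ (∀ u, ν (β u) = ν u + π) ∧
      ∀ u, β (β u) = u + 1 := by
  have hmono : StrictMono ν := strictMono_of_hasDerivAt_pos h.hasDerivAt_angle hκ
  have hex : ∀ u, ∃ v, ν v = ν u + π := fun u => by
    have hmem : ν u + π ∈ Icc (ν u) (ν (u + 1)) := by
      rw [h.angle_add_one]
      constructor <;> linarith [pi_pos]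
    obtain ⟨v, -, hv⟩ := intermediate_value_Icc (le_add_of_nonneg_right zero_le_one)
      h.continuous_angle.continuousOn hmem
    exact ⟨v, hv⟩
  choose β hβ using hex
  have hββ : ∀ u, β (β u) = u + 1 := fun u => hmono.injective <| by
    rw [hβ, hβ, h.angle_add_one]
    ring
  have hβ_mono : Monotone β := fun u v huv => by
    rw [← hmono.le_iff_le, hβ, hβ]
    exact add_le_add_left (hmono.monotone huv) π
  have hβ_surj : Surjective β := fun u => ⟨β (u - 1), by rw [hββ, sub_add_cancel]⟩
  refine ⟨β, hβ_mono.continuous_of_surjective hβ_surj, fun u => ?_, hβ, hββ⟩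
  rw [← hmono.le_iff_le, hβ]
  exact le_add_of_nonneg_right pi_pos.le

theorem exists_bisecting_halfTurn (h : IsClosedCurve_s17 x g ν κ) (hκ : ∀ u, 0 < κ u) :
    ∃ a b, a ≤ b ∧ b ≤ a + 1 ∧ ν b = ν a + π ∧
      segmentArea x g ν a b = sectorArea x g ν 0 1 / 2 := by
  obtain ⟨β, hβ_cont, hβ_le, hβ, hββ⟩ := h.exists_continuous_halfTurn hκ
  let H : ℝ → ℝ := fun u => segmentArea x g ν u (β u)
  have hH : Continuous H := h.continuous_segmentArea_comp hβ_cont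
  have hsum : H 0 + H (β 0) = sectorArea x g ν 0 1 := by
    simp only [H, hββ]
    exact h.segmentArea_add_segmentArea 0 (β 0)
  suffices ∃ a, H a = sectorArea x g ν 0 1 / 2 by
    obtain ⟨a, ha⟩ := this
    exact ⟨a, β a, hβ_le a, hββ a ▸ hβ_le (β a), hβ a, ha⟩
  rcases le_total (H 0) (sectorArea x g ν 0 1 / 2) with hle | hge
  · exact mem_range_of_exists_le_of_exists_ge hH ⟨0, hle⟩ ⟨β 0, by linarith⟩
  · exact mem_range_of_exists_le_of_exists_ge hH ⟨β 0, by linarith⟩ ⟨0, hge⟩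

theorem gage_inequality (h : IsClosedCurve_s17 x g ν κ) (hκ : ∀ u, 0 < κ u)
    (hA : 0 < sectorArea x g ν 0 1) :
    π * ∫ u in (0 : ℝ)..1, g u ≤
      sectorArea x g ν 0 1 * ∫ u in (0 : ℝ)..1, (κ u / g u) ^ 2 * g u := by
  obtain ⟨a, b, hab, hba, hν, hseg⟩ := h.exists_bisecting_halfTurn hκ
  have hseg' : segmentArea x g ν b (a + 1) = sectorArea x g ν 0 1 / 2 := by
    linarith [h.segmentArea_add_segmentArea a b]
  have hfirst := h.pi_mul_length_le_segmentArea_mul (fun u => (hκ u).le) hab hν (by linarith)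
  have hsecond := h.pi_mul_length_le_segmentArea_mul (fun u => (hκ u).le) hba
    (by rw [h.angle_add_one, hν]; ring) (by linarith)
  have hjoin : ∀ f : ℝ → ℝ, Continuous f → Periodic f 1 →
      (∫ u in a..b, f u) + ∫ u in b..(a + 1), f u = ∫ u in (0 : ℝ)..1, f u := fun f hf hper => by
    rw [intervalIntegral.integral_add_adjacent_intervals (hf.intervalIntegrable _ _)
      (hf.intervalIntegrable _ _), hper.intervalIntegral_add_eq a 0, zero_add]
  rw [← hjoin g h.continuous_speed h.speed_add_one,
    ← hjoin (fun u => (κ u / g u) ^ 2 * g u)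
      ((h.continuous_curvature.pow 2).mul h.continuous_speed)
      fun u => by simp only [h.turning_add_one, h.speed_add_one]]
  rw [hseg] at hfirst
  rw [hseg'] at hsecond
  linarith

end IsClosedCurve_s17

end PlaneCurves

section CurvatureFlow

/-- A `C²` family of closed curves on `[0, T)` moving along its inward normal with speed `k - c`,
where `k = κ / g` is the signed curvature and the forcing term `c` depends on time only. Taking
`c = 0` gives the curve shortening flow, and `c = L / (2 A)` the isoperimetric ratio gradient
flow. -/
structure IsCurvatureFlow (T : ℝ) (x : ℝ → ℝ → ℝ × ℝ) (g ν κ : ℝ → ℝ → ℝ) (c : ℝ → ℝ) : Prop where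
  contDiffOn_curve : ContDiffOn ℝ 2 (uncurry x) (univ ×ˢ Ico 0 T)
  contDiffOn_angle : ContDiffOn ℝ 2 (uncurry ν) (univ ×ˢ Ico 0 T)
  curve_add_one : ∀ u, ∀ t ∈ Ico 0 T, x (u + 1) t = x u t
  angle_add_one : ∀ u, ∀ t ∈ Ico 0 T, ν (u + 1) t = ν u t + 2 * π
  speed_pos : ∀ u, ∀ t ∈ Ico 0 T, 0 < g u t
  hasDerivAt_curve : ∀ u, ∀ t ∈ Ico 0 T, HasDerivAt (x · t) (g u t • tangentDir (ν u t)) u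
  hasDerivAt_angle : ∀ u, ∀ t ∈ Ico 0 T, HasDerivAt (ν · t) (κ u t) u
  hasDerivWithinAt_curve : ∀ u, ∀ t ∈ Ico 0 T,
    HasDerivWithinAt (x u) ((κ u t / g u t - c t) • normalDir (ν u t)) (Ico 0 T) t

/-- The arclength derivative `∂_s k = ∂_u k / |∂_u x|` of the curvature `k = κ / g`. -/
noncomputable def curvatureArcDeriv (g κ : ℝ → ℝ → ℝ) (u t : ℝ) : ℝ :=
  deriv (fun v => κ v t / g v t) u / g u t

namespace IsCurvatureFlow

variable {T : ℝ} {x : ℝ → ℝ → ℝ × ℝ} {g ν κ : ℝ → ℝ → ℝ} {c : ℝ → ℝ} {t : ℝ}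

theorem contDiffOn_turning (h : IsCurvatureFlow T x g ν κ c) :
    ContDiffOn ℝ 1 (uncurry κ) (univ ×ˢ Ico 0 T) :=
  contDiffOn_partial_fst (uniqueDiffOn_Ico 0 T) (h.contDiffOn_angle.of_le (by norm_num))
    h.hasDerivAt_angle

theorem contDiffOn_speed (h : IsCurvatureFlow T x g ν κ c) :
    ContDiffOn ℝ 1 (uncurry g) (univ ×ˢ Ico 0 T) := by
  have hxu : ContDiffOn ℝ 1 (uncurry fun u t => g u t • tangentDir (ν u t)) (univ ×ˢ Ico 0 T) :=
    contDiffOn_partial_fst (uniqueDiffOn_Ico 0 T) (h.contDiffOn_curve.of_le (by norm_num))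
      h.hasDerivAt_curve
  have hν := h.contDiffOn_angle.of_le one_le_two
  refine ((hxu.fst.mul hν.cos).add (hxu.snd.mul hν.sin)).congr ?_
  rintro ⟨u, t⟩ -
  simp only [uncurry_apply_pair, tangentDir, Prod.smul_mk, smul_eq_mul]
  linear_combination -g u t * sin_sq_add_cos_sq (ν u t)

theorem contDiffOn_curvature (h : IsCurvatureFlow T x g ν κ c) :
    ContDiffOn ℝ 1 (uncurry fun u t => κ u t / g u t) (univ ×ˢ Ico 0 T) :=
  h.contDiffOn_turning.div h.contDiffOn_speed fun p hp => (h.speed_pos p.1 p.2 hp.2).ne'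

theorem continuousOn_normalVelocity (h : IsCurvatureFlow T x g ν κ c) :
    ContinuousOn (uncurry fun u t => κ u t / g u t - c t) (univ ×ˢ Ico 0 T) := by
  have hxt : ContDiffOn ℝ 1 (uncurry fun u t => (κ u t / g u t - c t) • normalDir (ν u t))
      (univ ×ˢ Ico 0 T) :=
    contDiffOn_partial_snd (uniqueDiffOn_Ico 0 T) (h.contDiffOn_curve.of_le (by norm_num))
      h.hasDerivWithinAt_curve
  have hν := h.contDiffOn_angle.of_le one_le_two
  refine ((hxt.snd.mul hν.cos).sub (hxt.fst.mul hν.sin)).continuousOn.congr ?_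
  rintro ⟨u, t⟩ -
  simp only [uncurry_apply_pair, normalDir, Prod.smul_mk, smul_eq_mul]
  linear_combination -(κ u t / g u t - c t) * sin_sq_add_cos_sq (ν u t)

theorem isClosedCurve (h : IsCurvatureFlow T x g ν κ c) (ht : t ∈ Ico 0 T) :
    IsClosedCurve_s17 (x · t) (g · t) (ν · t) (κ · t) where
  hasDerivAt_curve u := h.hasDerivAt_curve u t ht
  hasDerivAt_angle u := h.hasDerivAt_angle u t ht
  continuous_speed := h.contDiffOn_speed.continuousOn.comp_continuous (f := fun u => (u, t))
    (by fun_prop) fun _ => ⟨trivial, ht⟩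
  continuous_turning := h.contDiffOn_turning.continuousOn.comp_continuous (f := fun u => (u, t))
    (by fun_prop) fun _ => ⟨trivial, ht⟩
  speed_pos u := h.speed_pos u t ht
  curve_add_one u := h.curve_add_one u t ht
  angle_add_one u := h.angle_add_one u t ht

theorem hasDerivAt_curvature (h : IsCurvatureFlow T x g ν κ c) (u : ℝ) (ht : t ∈ Ico 0 T) :
    HasDerivAt (fun v => κ v t / g v t) (g u t * curvatureArcDeriv g κ u t) u := by
  have hdiff := h.contDiffOn_curvature.differentiableOn one_ne_zero (u, t) ⟨trivial, ht⟩
  rw [curvatureArcDeriv, mul_div_cancel₀ _ (h.speed_pos u t ht).ne']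
  exact (hasDerivAt_slice_fst ht hdiff.hasFDerivWithinAt).differentiableAt.hasDerivAt

theorem hasDerivWithinAt_speed_and_angle (h : IsCurvatureFlow T x g ν κ c) (u : ℝ)
    (ht : t ∈ Ico 0 T) :
    HasDerivWithinAt (g u) (-((κ u t / g u t - c t) * κ u t)) (Ico 0 T) t ∧
      HasDerivWithinAt (ν u) (curvatureArcDeriv g κ u t) (Ico 0 T) t := by
  have hI : (interior (Ico 0 T)).Nonempty := by simpa using ht.1.trans_lt ht.2
  obtain ⟨xut, hxtu, hxut⟩ := exists_hasDerivAt_mixed_partial (u := u) (convex_Ico 0 T) hI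
    h.contDiffOn_curve h.hasDerivAt_curve h.hasDerivWithinAt_curve ht
  obtain ⟨gt, hgt⟩ : ∃ gt, HasDerivWithinAt (g u) gt (Ico 0 T) t :=
    ⟨_, hasDerivWithinAt_slice_snd (h.contDiffOn_speed.differentiableOn one_ne_zero (u, t)
      ⟨trivial, ht⟩).hasFDerivWithinAt⟩
  obtain ⟨νt, hνt⟩ : ∃ νt, HasDerivWithinAt (ν u) νt (Ico 0 T) t :=
    ⟨_, hasDerivWithinAt_slice_snd (h.contDiffOn_angle.differentiableOn two_ne_zero (u, t)
      ⟨trivial, ht⟩).hasFDerivWithinAt⟩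
  have hxtu_eq := hxtu.unique <| ((h.hasDerivAt_curvature u ht).sub_const (c t)).smul
    ((hasDerivAt_normalDir _).scomp u (h.hasDerivAt_angle u t ht))
  have hxut_eq := (uniqueDiffOn_Ico 0 T t ht).eq_deriv _ hxut <| hgt.smul
    ((hasDerivAt_tangentDir _).scomp_hasDerivWithinAt t hνt)
  have hframe : gt • tangentDir (ν u t) + (g u t * νt) • normalDir (ν u t) =
      (-((κ u t / g u t - c t) * κ u t)) • tangentDir (ν u t) +
        (g u t * curvatureArcDeriv g κ u t) • normalDir (ν u t) := by
    have := hxut_eq.symm.trans hxtu_eq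
    linear_combination (norm := module) this
  obtain ⟨hgt_eq, hνt_eq⟩ := smul_tangentDir_add_smul_normalDir_inj.1 hframe
  exact ⟨hgt_eq ▸ hgt, mul_left_cancel₀ (h.speed_pos u t ht).ne' hνt_eq ▸ hνt⟩

theorem exists_hasDerivWithinAt_curvature (h : IsCurvatureFlow T x g ν κ c) (u : ℝ)
    (ht : t ∈ Ico 0 T) :
    ∃ M, HasDerivAt (curvatureArcDeriv g κ · t) M u ∧
      HasDerivWithinAt (fun r => κ u r / g u r)
        (M / g u t + κ u t / g u t * (κ u t / g u t - c t) * (κ u t / g u t)) (Ico 0 T) t := by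
  have hI : (interior (Ico 0 T)).Nonempty := by simpa using ht.1.trans_lt ht.2
  obtain ⟨M, hM, hκt⟩ := exists_hasDerivAt_mixed_partial (u := u) (convex_Ico 0 T) hI
    h.contDiffOn_angle h.hasDerivAt_angle
    (fun v r hr => (h.hasDerivWithinAt_speed_and_angle v hr).2) ht
  have hg := (h.speed_pos u t ht).ne'
  refine ⟨M, hM, (hκt.div (h.hasDerivWithinAt_speed_and_angle u ht).1 hg).congr_deriv ?_⟩
  field_simp
  ring

theorem nonneg_deriv_curvatureArcDeriv_of_isMin (h : IsCurvatureFlow T x g ν κ c) {u M : ℝ}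
    (ht : t ∈ Ico 0 T) (hM : HasDerivAt (curvatureArcDeriv g κ · t) M u)
    (hmin : IsLocalMin (fun v => κ v t / g v t) u) : 0 ≤ M := by
  have hg := h.speed_pos u t ht
  have hcrit : curvatureArcDeriv g κ u t = 0 := by
    simpa [hg.ne'] using hmin.hasDerivAt_eq_zero (h.hasDerivAt_curvature u ht)
  have hgu := hasDerivAt_slice_fst ht (h.contDiffOn_speed.differentiableOn one_ne_zero (u, t)
    ⟨trivial, ht⟩).hasFDerivWithinAt
  have hsecond := second_deriv_nonneg_of_isLocalMin hmin
    (Eventually.of_forall fun v => h.hasDerivAt_curvature v ht) (hgu.mul hM)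
  rw [hcrit, mul_zero, zero_add] at hsecond
  exact nonneg_of_mul_nonneg_right hsecond hg

theorem curvature_pos (h : IsCurvatureFlow T x g ν κ c) (hinit : ∀ u, 0 < κ u 0 / g u 0) (u : ℝ)
    (ht : t ∈ Ico 0 T) : 0 < κ u t / g u t := by
  have hper : ∀ r ∈ Ico 0 T, Periodic (fun v => κ v r / g v r) 1 := fun r hr v => by
    simp only [(h.isClosedCurve hr).turning_add_one v, (h.isClosedCurve hr).speed_add_one v]
  have hsub : Icc 0 t ⊆ Ico 0 T := Icc_subset_Ico_right ht.2
  have hprod : Icc (0 : ℝ) 1 ×ˢ Icc 0 t ⊆ univ ×ˢ Ico 0 T := prod_mono (subset_univ _) hsub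
  choose! M hM hk using fun v r (hr : r ∈ Ico 0 T) => h.exists_hasDerivWithinAt_curvature v hr
  obtain ⟨v, hv, huv⟩ := (hper t ht).exists_mem_Ico₀ one_pos u
  rw [huv]
  refine pos_of_hasDerivWithinAt_at_spatial_min (f := fun v r => κ v r / g v r)
    (b := fun v r => κ v r / g v r * (κ v r / g v r - c r)) isCompact_Icc
    (h.contDiffOn_curvature.continuousOn.mono hprod)
    ((h.contDiffOn_curvature.continuousOn.mul h.continuousOn_normalVelocity).mono hprod)
    (fun w _ r hr => (hk w r (hsub hr)).mono hsub) ?_ (fun w _ => hinit w) v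
    (Ico_subset_Icc_self hv) t ⟨ht.1, le_rfl⟩
  intro w _ r hr hmin
  have hglobal : ∀ y, κ w r / g w r ≤ κ y r / g y r := fun y => by
    obtain ⟨z, hz, hyz⟩ := (hper r (hsub hr)).exists_mem_Ico₀ one_pos y
    exact (hmin (Ico_subset_Icc_self hz)).trans_eq hyz.symm
  have hMw := h.nonneg_deriv_curvatureArcDeriv_of_isMin (hsub hr) (hM w r (hsub hr))
    (Eventually.of_forall hglobal)
  exact le_add_of_nonneg_left (div_nonneg hMw (h.speed_pos w r (hsub hr)).le)

theorem hasDerivWithinAt_lenF (h : IsCurvatureFlow T x g ν κ c) (ht : t ∈ Ico 0 T) :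
    HasDerivWithinAt (lenF g)
      (-(∫ u in (0 : ℝ)..1, (κ u t / g u t) ^ 2 * g u t) + 2 * π * c t) (Ico 0 T) t := by
  have hcont : ContinuousOn (uncurry fun u t => -((κ u t / g u t - c t) * κ u t))
      (univ ×ˢ Ico 0 T) :=
    (h.continuousOn_normalVelocity.mul h.contDiffOn_turning.continuousOn).neg
  have hL := hasDerivWithinAt_intervalIntegral_of_continuousOn (a := 0) (b := 1)
    (fun r hr => (h.isClosedCurve hr).continuous_speed.intervalIntegrable _ _)
    (fun u _ r hr => (h.hasDerivWithinAt_speed_and_angle u hr).1)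
    (hcont.mono (prod_mono_left (subset_univ _))) ht
  have hcurve := h.isClosedCurve ht
  have hk : Continuous fun u => (κ u t / g u t) ^ 2 * g u t :=
    (hcurve.continuous_curvature.pow 2).mul hcurve.continuous_speed
  refine hL.congr_deriv ?_
  have hexpand : ∀ u, -((κ u t / g u t - c t) * κ u t) =
      κ u t * c t - (κ u t / g u t) ^ 2 * g u t := fun u => by
    have := (h.speed_pos u t ht).ne'
    field_simp
    ring
  simp only [hexpand]
  rw [intervalIntegral.integral_sub
    ((hcurve.continuous_turning.mul_const _).intervalIntegrable _ _) (hk.intervalIntegrable _ _),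
    intervalIntegral.integral_mul_const, hcurve.integral_turning_eq_two_pi]
  ring

end IsCurvatureFlow

theorem isoperimetric_flow_length_nonincreasing_convex_general {T : ℝ} {x : ℝ → ℝ → ℝ × ℝ}
    {g ν κ : ℝ → ℝ → ℝ} {c : ℝ → ℝ} (h : IsCurvatureFlow T x g ν κ c)
    (hA : ∀ t ∈ Ico 0 T, 0 < areaF x g ν t)
    (hc : ∀ t ∈ Ico 0 T, c t ≤ lenF g t / (2 * areaF x g ν t))
    (hconv : ∀ u, 0 < κ u 0 / g u 0) :
    (∀ t ∈ Ico 0 T,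
      HasDerivWithinAt (lenF g)
        (-(∫ u in (0 : ℝ)..1, (κ u t / g u t) ^ 2 * g u t) + 2 * π * c t) (Ico 0 T) t ∧
      -(∫ u in (0 : ℝ)..1, (κ u t / g u t) ^ 2 * g u t) + 2 * π * c t ≤ 0) ∧
    AntitoneOn (lenF g) (Ico 0 T) := by
  have hnonpos : ∀ t ∈ Ico 0 T,
      -(∫ u in (0 : ℝ)..1, (κ u t / g u t) ^ 2 * g u t) + 2 * π * c t ≤ 0 := fun t ht => by
    have hκ : ∀ u, 0 < κ u t := fun u =>
      (div_pos_iff_of_pos_right (h.speed_pos u t ht)).1 (h.curvature_pos hconv u ht)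
    have hgage : π * lenF g t ≤ areaF x g ν t * ∫ u in (0 : ℝ)..1, (κ u t / g u t) ^ 2 * g u t :=
      (h.isClosedCurve ht).gage_inequality hκ (hA t ht)
    have hforce : 2 * π * c t ≤ π * lenF g t / areaF x g ν t := by
      refine (mul_le_mul_of_nonneg_left (hc t ht) two_pi_pos.le).trans_eq ?_
      ring
    linarith [(div_le_iff₀' (hA t ht)).2 hgage]
  refine ⟨fun t ht => ⟨h.hasDerivWithinAt_lenF ht, hnonpos t ht⟩, ?_⟩
  refine antitoneOn_of_hasDerivWithinAt_nonpos (convex_Ico 0 T)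
    (fun t ht => (h.hasDerivWithinAt_lenF ht).continuousWithinAt)
    (fun t ht => (h.hasDerivWithinAt_lenF (interior_subset ht)).mono interior_subset)
    fun t ht => hnonpos t (interior_subset ht)

end CurvatureFlow

end

/-- The isoperimetric ratio gradient flow `∂_t x = (k − L/(2A))·N` started from a convex
curve does not increase the length:
`(d/dt) L(t) = −∫₀¹ k² |∂_u x| du + π·L(t)/A(t) ≤ 0`, so `L` is nonincreasing.
Here `k = νu/g` is the signed curvature. -/
theorem isoperimetric_flow_length_nonincreasing_convex
    (T : ℝ) (hT : 0 < T) (x : ℝ → ℝ → ℝ × ℝ) (g νf νu : ℝ → ℝ → ℝ)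
    (hxs : ContDiffOn ℝ (⊤ : ℕ∞) (fun p : ℝ × ℝ => x p.1 p.2)
      ((Set.univ : Set ℝ) ×ˢ Set.Ico (0:ℝ) T))
    (hνs : ContDiffOn ℝ (⊤ : ℕ∞) (fun p : ℝ × ℝ => νf p.1 p.2)
      ((Set.univ : Set ℝ) ×ˢ Set.Ico (0:ℝ) T))
    (hper : ∀ u, ∀ t ∈ Set.Ico (0:ℝ) T, x (u + 1) t = x u t)
    (hνper : ∀ u, ∀ t ∈ Set.Ico (0:ℝ) T, νf (u + 1) t = νf u t + 2 * π)
    (hg : ∀ u, ∀ t ∈ Set.Ico (0:ℝ) T, 0 < g u t)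
    (htang : ∀ u, ∀ t ∈ Set.Ico (0:ℝ) T,
      HasDerivAt (fun u' => x u' t)
        (g u t • ((Real.cos (νf u t), Real.sin (νf u t)) : ℝ × ℝ)) u)
    (hνu : ∀ u, ∀ t ∈ Set.Ico (0:ℝ) T, HasDerivAt (fun u' => νf u' t) (νu u t) u)
    (hinj : ∀ t ∈ Set.Ico (0:ℝ) T, Set.InjOn (fun u => x u t) (Set.Ico 0 1))
    (hA : ∀ t ∈ Set.Ico (0:ℝ) T, 0 < areaF x g νf t)
    -- the isoperimetric ratio gradient flow equation `∂_t x = (k − L/(2A))·N`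
    (hflow : ∀ u, ∀ t ∈ Set.Ico (0:ℝ) T,
      HasDerivWithinAt (fun t' => x u t')
        (((νu u t / g u t - lenF g t / (2 * areaF x g νf t)) •
          ((-Real.sin (νf u t), Real.cos (νf u t)) : ℝ × ℝ)))
        (Set.Ico 0 T) t)
    -- the initial curve is convex
    (hconv : ∀ u, 0 < νu u 0 / g u 0) :
    (∀ t ∈ Set.Ico (0:ℝ) T,
      HasDerivWithinAt (lenF g)
        (-(∫ u in (0:ℝ)..1, (νu u t / g u t) ^ 2 * g u t) +
          π * lenF g t / areaF x g νf t) (Set.Ico 0 T) t ∧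
      -(∫ u in (0:ℝ)..1, (νu u t / g u t) ^ 2 * g u t) +
        π * lenF g t / areaF x g νf t ≤ 0) ∧
    AntitoneOn (lenF g) (Set.Ico 0 T) := by
  have hC2flow : IsCurvatureFlow T x g νf νu fun t => lenF g t / (2 * areaF x g νf t) :=
    ⟨hxs.of_le (by norm_cast), hνs.of_le (by norm_cast), hper, hνper, hg,
      htang, hνu, hflow⟩
  have hforce : ∀ t, 2 * π * (lenF g t / (2 * areaF x g νf t)) = π * lenF g t / areaF x g νf t :=
    fun t => by ring
  simpa only [hforce] using
    isoperimetric_flow_length_nonincreasing_convex_general hC2flow hA (fun _ _ => le_rfl) hconv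
end

section
/- Initial length increase for the anisoperimetric ratio gradient flow started from a modified Wulff shape: let σ be a nonconstant anisotropy function which is not of the form σ(ν) = c₀ + c₁ cos ν + c₂ sin ν (so that the associated Wulff boundaries are not round circles), let a, b > 0 be constants and set σ̄ = a·σ + b. Let x : ℝ × [0,T) → ℝ² be a smooth family of closed curves evolving by the anisoperimetric ratio gradient flow ∂_t x = (k_σ − L_σ(t)/(2A(t)))·N whose initial curve x(·,0) parameterizes the Wulff boundary ∂W_{σ̄}, i.e. the image of x(·,0) equals {−σ̄(ν)(−sin ν, cos ν) + σ̄'(ν)(cos ν, sin ν) : ν ∈ ℝ}. Then (d/dt) L(t)|_{t=0} = (b/a)·(∫_{∂W_{σ̄}} k² ds − π·L(∂W_{σ̄})/|W_{σ̄}|) > 0, where L(t) = ∫₀¹ |∂_u x(u,t)| du. -/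
open Real

/-- The standard parameterization of the Wulff boundary `∂W_σ`:
`w(ν) = −σ(ν)(−sin ν, cos ν) + σ'(ν)(cos ν, sin ν)`. -/
noncomputable def wulffPoint (σ : ℝ → ℝ) (t : ℝ) : ℝ × ℝ :=
  (-σ t) • ((-Real.sin t, Real.cos t) : ℝ × ℝ) +
    (deriv σ t) • ((Real.cos t, Real.sin t) : ℝ × ℝ)

/-- The modified anisotropy `σ̄ = a·σ + b`. -/
noncomputable def modAniso (σ : ℝ → ℝ) (a b : ℝ) : ℝ → ℝ :=
  fun s => a * σ s + b

/-- Anisotropic length `L_σ(t) = ∫₀¹ σ(ν(u,t))|∂_u x(u,t)| du`. -/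
noncomputable def aLenF (σ : ℝ → ℝ) (g νf : ℝ → ℝ → ℝ) (t : ℝ) : ℝ :=
  ∫ u in (0:ℝ)..1, σ (νf u t) * g u t

/-!
With normal velocity `V` the length satisfies `L' = -∫ V dν`. On the boundary of the Wulff shape of
`σ̄ = aσ + b` the tangent angle `ν` is a parameter with `ds = ρ̄ dν`, where `ρ̄ = σ̄ + σ̄''`, and
the anisotropic curvature is `(ρ̄ - b) / (a ρ̄)`; this gives the formula for `L'`.

Its positivity is the strict Gage inequality `π L / A < ∫ 1 / ρ̄ dν`. Convolving `ρ̄` with the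
kernel `(π - s) sin s`, which is the Green function of `h ↦ h + h''` up to a multiple of `2π` and
the first harmonics, expresses the isoperimetric deficit `L² - 4πA` through `ρ̄` and bounds it by
`(∫ |ρ̄ - m|)²` for every constant `m`. Among densities with given integral and given `L¹` deviation
`∫ 1 / ρ̄` is smallest for a density with two values, which is seen by minorising `1 / x` by the
larger of its tangent lines at these values.
-/
open Set Topology

section Calculus

section Prod

variable {E F : Type*} [NormedAddCommGroup E] [NormedSpace ℝ E] [NormedAddCommGroup F]
  [NormedSpace ℝ F] {f : ℝ → E × F} {f' : E × F} {s : Set ℝ} {t : ℝ}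

lemma hasDerivWithinAt_fst (hf : HasDerivWithinAt f f' s t) :
    HasDerivWithinAt (fun t => (f t).1) f'.1 s t :=
  (ContinuousLinearMap.fst ℝ E F).hasFDerivAt.comp_hasDerivWithinAt t hf

lemma hasDerivWithinAt_snd (hf : HasDerivWithinAt f f' s t) :
    HasDerivWithinAt (fun t => (f t).2) f'.2 s t :=
  (ContinuousLinearMap.snd ℝ E F).hasFDerivAt.comp_hasDerivWithinAt t hf

lemma hasDerivAt_fst (hf : HasDerivAt f f' t) : HasDerivAt (fun t => (f t).1) f'.1 t :=
  (ContinuousLinearMap.fst ℝ E F).hasFDerivAt.comp_hasDerivAt t hf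

lemma hasDerivAt_snd (hf : HasDerivAt f f' t) : HasDerivAt (fun t => (f t).2) f'.2 t :=
  (ContinuousLinearMap.snd ℝ E F).hasFDerivAt.comp_hasDerivAt t hf

end Prod

lemma periodic_deriv_s18 {E : Type*} [NormedAddCommGroup E] [NormedSpace ℝ E] {f : ℝ → E} {c : ℝ}
    (hf : Function.Periodic f c) : Function.Periodic (deriv f) c := fun s => by
  rw [← deriv_comp_add_const, hf.funext]

lemma hasDerivAt_of_contDiff_two {h : ℝ → ℝ} (hh : ContDiff ℝ 2 h) (s : ℝ) :
    HasDerivAt h (deriv h s) s :=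
  (hh.differentiable two_ne_zero s).hasDerivAt

lemma hasDerivAt_deriv_of_contDiff_two {h : ℝ → ℝ} (hh : ContDiff ℝ 2 h) (s : ℝ) :
    HasDerivAt (deriv h) (deriv (deriv h) s) s :=
  (hh.differentiable_deriv_two s).hasDerivAt

lemma eq_or_eq_of_forall_eq_or_eq {X Y : Type*} [TopologicalSpace X] [PreconnectedSpace X]
    [TopologicalSpace Y] [T2Space Y] {y p q : X → Y} (hy : Continuous y) (hp : Continuous p)
    (hq : Continuous q) (hpq : ∀ x, p x ≠ q x) (hor : ∀ x, y x = p x ∨ y x = q x) :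
    y = p ∨ y = q := by
  have hcompl : {x | y x = p x}ᶜ = {x | y x = q x} := by
    ext x
    exact ⟨(hor x).resolve_left, fun hxq hxp => hpq x (hxp.symm.trans hxq)⟩
  have hclopen : IsClopen {x | y x = p x} :=
    ⟨isClosed_eq hy hp, isClosed_compl_iff.1 (hcompl ▸ isClosed_eq hy hq)⟩
  rcases isClopen_iff.1 hclopen with hempty | huniv
  · refine Or.inr (funext fun x => (hor x).resolve_left fun hx => ?_)
    exact (hempty ▸ hx : x ∈ (∅ : Set X))
  · exact Or.inl (funext fun x => (huniv ▸ mem_univ x : x ∈ {x | y x = p x}))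

/-- The radius of curvature `h + h''` of the convex curve with support function `h`, as a function
of the tangent angle. -/
noncomputable def curvatureRadius (h : ℝ → ℝ) (s : ℝ) : ℝ :=
  h s + deriv (deriv h) s

/-- The height of `p` above the line through the origin with tangent angle `θ`, measured along the
outward normal `(sin θ, -cos θ)`. -/
noncomputable def height (θ : ℝ) (p : ℝ × ℝ) : ℝ :=
  p.1 * sin θ - p.2 * cos θ

lemma hasDerivAt_height {y : ℝ → ℝ × ℝ} {c φ u : ℝ} (θ : ℝ)
    (hy : HasDerivAt y (c • (cos φ, sin φ)) u) :
    HasDerivAt (fun v => height θ (y v)) (-(c * sin (φ - θ))) u := by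
  refine (((hasDerivAt_fst hy).mul_const (sin θ)).sub
    ((hasDerivAt_snd hy).mul_const (cos θ))).congr_deriv ?_
  simp only [Prod.smul_mk, smul_eq_mul, sin_sub]
  ring

end Calculus

section WulffPoint

variable {h : ℝ → ℝ} (hh : ContDiff ℝ 2 h) (hper : Function.Periodic h (2 * π))

lemma curvatureRadius_const_mul_add_const (a b s : ℝ) :
    curvatureRadius (fun s => a * h s + b) s = a * curvatureRadius h s + b := by
  simp only [curvatureRadius, deriv_add_const', deriv_const_mul_field']
  ring

lemma curvatureRadius_sub_const (m s : ℝ) :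
    curvatureRadius (fun s => h s - m) s = curvatureRadius h s - m := by
  simpa only [one_mul, ← sub_eq_add_neg] using
    curvatureRadius_const_mul_add_const (h := h) 1 (-m) s

include hper in
lemma periodic_curvatureRadius : Function.Periodic (curvatureRadius h) (2 * π) := fun s => by
  simp only [curvatureRadius, hper s, periodic_deriv_s18 (periodic_deriv_s18 hper) s]

include hper in
lemma periodic_wulffPoint : Function.Periodic (wulffPoint h) (2 * π) := fun s => by
  simp only [wulffPoint, hper s, periodic_deriv_s18 hper s, sin_add_two_pi, cos_add_two_pi]

lemma height_wulffPoint (θ φ : ℝ) :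
    height θ (wulffPoint h φ) = h φ * cos (φ - θ) - deriv h φ * sin (φ - θ) := by
  simp only [height, wulffPoint, Prod.fst_add, Prod.snd_add, Prod.smul_fst, Prod.smul_snd,
    smul_eq_mul, cos_sub, sin_sub]
  ring

lemma height_wulffPoint_self (θ : ℝ) : height θ (wulffPoint h θ) = h θ := by
  simp [height_wulffPoint]

lemma height_wulffPoint_add_pi (θ : ℝ) : height θ (wulffPoint h (θ + π)) = -h (θ + π) := by
  simp [height_wulffPoint]

include hh

lemma continuous_curvatureRadius : Continuous (curvatureRadius h) :=
  hh.continuous.add (hh.deriv' (n := 1)).continuous_deriv_one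

lemma hasDerivAt_wulffPoint (s : ℝ) :
    HasDerivAt (wulffPoint h) (curvatureRadius h s • (cos s, sin s)) s := by
  have hnormal : HasDerivAt (fun s => (-sin s, cos s)) (-cos s, -sin s) s :=
    (hasDerivAt_sin s).neg.prodMk (hasDerivAt_cos s)
  have htangent : HasDerivAt (fun s => (cos s, sin s)) (-sin s, cos s) s :=
    (hasDerivAt_cos s).prodMk (hasDerivAt_sin s)
  refine (((hasDerivAt_of_contDiff_two hh s).neg.smul hnormal).add
    ((hasDerivAt_deriv_of_contDiff_two hh s).smul htangent)).congr_deriv ?_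
  ext <;> simp [curvatureRadius] <;> ring

lemma hasDerivAt_height_wulffPoint (θ φ : ℝ) :
    HasDerivAt (fun φ => height θ (wulffPoint h φ)) (-(curvatureRadius h φ * sin (φ - θ))) φ :=
  hasDerivAt_height θ (hasDerivAt_wulffPoint hh φ)

include hper

lemma integral_curvatureRadius :
    ∫ s in (0 : ℝ)..(2 * π), curvatureRadius h s = ∫ s in (0 : ℝ)..(2 * π), h s := by
  have hcont : Continuous (deriv (deriv h)) := (hh.deriv' (n := 1)).continuous_deriv_one
  have hzero : ∫ s in (0 : ℝ)..(2 * π), deriv (deriv h) s = 0 := by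
    rw [intervalIntegral.integral_eq_sub_of_hasDerivAt
      (fun s _ => hasDerivAt_deriv_of_contDiff_two hh s) (hcont.intervalIntegrable _ _),
      (periodic_deriv_s18 hper).eq, sub_self]
  simp only [curvatureRadius]
  rw [intervalIntegral.integral_add (hh.continuous.intervalIntegrable _ _)
    (hcont.intervalIntegrable _ _), hzero, add_zero]

lemma integral_curvatureRadius_mul_cos :
    ∫ s in (0 : ℝ)..(2 * π), curvatureRadius h s * cos s = 0 := by
  have hcont := continuous_curvatureRadius hh
  rw [intervalIntegral.integral_eq_sub_of_hasDerivAt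
    (f' := fun s => curvatureRadius h s * cos s)
    (fun s _ => hasDerivAt_fst (hasDerivAt_wulffPoint hh s))
    (Continuous.intervalIntegrable (by fun_prop) _ _), (periodic_wulffPoint hper).eq, sub_self]

lemma integral_curvatureRadius_mul_sin :
    ∫ s in (0 : ℝ)..(2 * π), curvatureRadius h s * sin s = 0 := by
  have hcont := continuous_curvatureRadius hh
  rw [intervalIntegral.integral_eq_sub_of_hasDerivAt
    (f' := fun s => curvatureRadius h s * sin s)
    (fun s _ => hasDerivAt_snd (hasDerivAt_wulffPoint hh s))
    (Continuous.intervalIntegrable (by fun_prop) _ _), (periodic_wulffPoint hper).eq, sub_self]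

end WulffPoint

section Support

variable {h : ℝ → ℝ} (hh : ContDiff ℝ 2 h) (hρ : ∀ s, 0 < curvatureRadius h s)

include hh hρ

lemma strictAntiOn_height_wulffPoint (θ : ℝ) :
    StrictAntiOn (fun φ => height θ (wulffPoint h φ)) (Icc θ (θ + π)) := by
  have hderiv := hasDerivAt_height_wulffPoint hh θ
  refine strictAntiOn_of_deriv_neg (convex_Icc _ _)
    (fun φ _ => (hderiv φ).continuousAt.continuousWithinAt) fun φ hφ => ?_
  rw [interior_Icc] at hφ
  rw [(hderiv φ).deriv, neg_lt_zero]
  exact mul_pos (hρ φ) (sin_pos_of_pos_of_lt_pi (by linarith [hφ.1]) (by linarith [hφ.2]))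

lemma strictMonoOn_height_wulffPoint (θ : ℝ) :
    StrictMonoOn (fun φ => height θ (wulffPoint h φ)) (Icc (θ - π) θ) := by
  have hderiv := hasDerivAt_height_wulffPoint hh θ
  refine strictMonoOn_of_deriv_pos (convex_Icc _ _)
    (fun φ _ => (hderiv φ).continuousAt.continuousWithinAt) fun φ hφ => ?_
  rw [interior_Icc] at hφ
  rw [(hderiv φ).deriv, ← mul_neg]
  exact mul_pos (hρ φ) (neg_pos.2
    (sin_neg_of_neg_of_neg_pi_lt (by linarith [hφ.2]) (by linarith [hφ.1])))

lemma support_add_support_add_pi_pos (θ : ℝ) : 0 < h θ + h (θ + π) := by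
  have hlt := strictAntiOn_height_wulffPoint hh hρ θ (left_mem_Icc.2 (by linarith [pi_pos]))
    (right_mem_Icc.2 (by linarith [pi_pos])) (by linarith [pi_pos])
  simp only [height_wulffPoint_add_pi, height_wulffPoint_self] at hlt
  linarith

lemma wulffPoint_ne_wulffPoint_add_pi (θ : ℝ) : wulffPoint h θ ≠ wulffPoint h (θ + π) := by
  intro heq
  have hheight := congrArg (height θ) heq
  rw [height_wulffPoint_self, height_wulffPoint_add_pi] at hheight
  linarith [support_add_support_add_pi_pos hh hρ θ]

variable (hper : Function.Periodic h (2 * π))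

include hper

lemma height_wulffPoint_le (θ φ : ℝ) : height θ (wulffPoint h φ) ≤ h θ := by
  obtain ⟨ψ, hψ, hφψ⟩ := (periodic_wulffPoint hper).exists_mem_Ico two_pi_pos φ (θ - π)
  rw [hφψ, ← height_wulffPoint_self (h := h) θ]
  rcases le_total ψ θ with hle | hle
  · exact (strictMonoOn_height_wulffPoint hh hρ θ).monotoneOn ⟨hψ.1, hle⟩
      (right_mem_Icc.2 (by linarith [pi_pos])) hle
  · exact (strictAntiOn_height_wulffPoint hh hρ θ).antitoneOn
      (left_mem_Icc.2 (by linarith [pi_pos])) ⟨hle, by linarith [hψ.2]⟩ hle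

-- Translating the origin to the boundary point `wulffPoint h 0` makes the support function
-- nonnegative and does not change the area.
lemma wulffArea_pos_s18 : 0 < wulffArea h := by
  have hρc := continuous_curvatureRadius hh
  have hhc := hh.continuous
  have hle (θ : ℝ) : 0 ≤ (h θ - height θ (wulffPoint h 0)) * curvatureRadius h θ :=
    mul_nonneg (sub_nonneg.2 (height_wulffPoint_le hh hρ hper θ 0)) (hρ θ).le
  have hpos : 0 < (h π - height π (wulffPoint h 0)) * curvatureRadius h π := by
    refine mul_pos ?_ (hρ π)
    have hwidth := support_add_support_add_pi_pos hh hρ 0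
    simp only [zero_add, height_wulffPoint, zero_sub, cos_neg, sin_neg, cos_pi, sin_pi] at hwidth ⊢
    linarith
  have hsplit (θ : ℝ) : (h θ - height θ (wulffPoint h 0)) * curvatureRadius h θ =
      h θ * curvatureRadius h θ - (wulffPoint h 0).1 * (curvatureRadius h θ * sin θ) +
        (wulffPoint h 0).2 * (curvatureRadius h θ * cos θ) := by
    simp only [height]; ring
  have htranslate :
      ∫ θ in (0 : ℝ)..(2 * π), (h θ - height θ (wulffPoint h 0)) * curvatureRadius h θ =
        ∫ θ in (0 : ℝ)..(2 * π), h θ * curvatureRadius h θ := by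
    simp_rw [hsplit]
    rw [intervalIntegral.integral_add, intervalIntegral.integral_sub,
      intervalIntegral.integral_const_mul, intervalIntegral.integral_const_mul,
      integral_curvatureRadius_mul_sin hh hper, integral_curvatureRadius_mul_cos hh hper]
    · ring
    all_goals exact Continuous.intervalIntegrable (by fun_prop) _ _
  have hint : 0 < ∫ θ in (0 : ℝ)..(2 * π), h θ * curvatureRadius h θ := by
    rw [← htranslate]
    refine intervalIntegral.integral_pos two_pi_pos ?_ (fun θ _ => hle θ)
      ⟨π, ⟨pi_pos.le, by linarith [pi_pos]⟩, hpos⟩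
    simp_rw [hsplit]
    fun_prop
  exact mul_pos one_half_pos hint

end Support
section Gage

lemma mul_sin_le_two {y : ℝ} (hy : 0 ≤ y) (hyπ : y ≤ π) : y * sin y ≤ 2 := by
  have hsin : sin y ≤ 1 / √((y - π / 2) ^ 2 + 1) := by
    rw [← cos_sub_pi_div_two]
    exact cos_le_one_div_sqrt_sq_add_one (by linarith [pi_pos]) (by linarith)
  have hπ : (π / 2) ^ 2 ≤ 3 := by nlinarith [pi_lt_d2, pi_pos]
  have hsqrt : 0 < √((y - π / 2) ^ 2 + 1) := sqrt_pos.2 (by positivity)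
  refine (mul_le_mul_of_nonneg_left hsin hy).trans ?_
  rw [mul_one_div, div_le_iff₀ hsqrt, ← div_le_iff₀' two_pos]
  refine le_sqrt_of_sq_le ?_
  -- Cauchy–Schwarz for `y = 1 * (y - π / 2) + (π / 2) * 1`.
  nlinarith [sq_nonneg ((y - π / 2) * (π / 2) - 1), sq_nonneg (y - π / 2)]

lemma abs_one_sub_pi_sub_mul_sin_le_one {s : ℝ} (hs : s ∈ Icc 0 (2 * π)) :
    |1 - (π - s) * sin s| ≤ 1 := by
  have habs₀ := abs_nonneg (π - s)
  have habs : |π - s| ≤ π := abs_le.2 ⟨by linarith [hs.2], by linarith [hs.1]⟩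
  have hfold : (π - s) * sin s = |π - s| * sin |π - s| := by
    rcases abs_cases (π - s) with ⟨h, -⟩ | ⟨h, -⟩
    · rw [h, sin_pi_sub]
    · rw [h, neg_sub, sin_sub_pi]
      ring
  have hnonneg := mul_nonneg habs₀ (sin_nonneg_of_nonneg_of_le_pi habs₀ habs)
  have hle := mul_sin_le_two habs₀ habs
  rw [hfold, abs_le]
  constructor <;> linarith

lemma integral_periodic_comp_add_left {E : Type*} [NormedAddCommGroup E] [NormedSpace ℝ E]
    {f : ℝ → E} {c : ℝ} (hf : Function.Periodic f c) (θ : ℝ) :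
    ∫ s in (0 : ℝ)..c, f (θ + s) = ∫ s in (0 : ℝ)..c, f s := by
  simpa only [intervalIntegral.integral_comp_add_left, add_zero, zero_add]
    using hf.intervalIntegral_add_eq θ 0

lemma integral_cos_mul_comp_add_left {h : ℝ → ℝ} (hh : Continuous h)
    (hper : Function.Periodic h (2 * π)) (θ : ℝ) :
    ∫ s in (0 : ℝ)..(2 * π), cos s * h (θ + s) =
      (∫ s in (0 : ℝ)..(2 * π), h s * cos s) * cos θ +
        (∫ s in (0 : ℝ)..(2 * π), h s * sin s) * sin θ := by
  have hshift := integral_periodic_comp_add_left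
    (f := fun φ => cos (φ - θ) * h φ) (c := 2 * π) (fun s => by
      simp only [hper s, add_sub_right_comm, cos_add_two_pi]) θ
  simp only [add_sub_cancel_left] at hshift
  rw [hshift, ← intervalIntegral.integral_mul_const, ← intervalIntegral.integral_mul_const,
    ← intervalIntegral.integral_add (Continuous.intervalIntegrable (by fun_prop) _ _)
      (Continuous.intervalIntegrable (by fun_prop) _ _)]
  congr 1 with s
  rw [cos_sub]
  ring

lemma two_mul_wulffArea (h : ℝ → ℝ) :
    2 * wulffArea h = ∫ s in (0 : ℝ)..(2 * π), h s * curvatureRadius h s := by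
  simp only [wulffArea, curvatureRadius]
  ring

/-- The isoperimetric deficit `L² - 4πA` of the (hedgehog) curve with support function `h`. -/
noncomputable def isoperimetricDeficit (h : ℝ → ℝ) : ℝ :=
  (∫ s in (0 : ℝ)..(2 * π), h s) ^ 2 - 4 * π * wulffArea h

variable {h : ℝ → ℝ} (hh : ContDiff ℝ 2 h) (hper : Function.Periodic h (2 * π))

include hh hper

-- `(π - s) sin s` inverts `h ↦ h + h''` on `2π`-periodic functions, up to first harmonics.
lemma integral_pi_sub_mul_sin_mul_curvatureRadius (θ : ℝ) :
    ∫ s in (0 : ℝ)..(2 * π), (π - s) * sin s * curvatureRadius h (θ + s) =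
      2 * π * h θ - 2 * ∫ s in (0 : ℝ)..(2 * π), cos s * h (θ + s) := by
  have hhc := hh.continuous
  have hρc := continuous_curvatureRadius hh
  have hprimitive (s : ℝ) : HasDerivAt
      (fun s => (π - s) * sin s * deriv h (θ + s) - (-sin s + (π - s) * cos s) * h (θ + s))
      ((π - s) * sin s * curvatureRadius h (θ + s) + 2 * (cos s * h (θ + s))) s := by
    have hlin : HasDerivAt (fun s : ℝ => π - s) (-1) s := (hasDerivAt_id s).const_sub π
    have dh := (hasDerivAt_of_contDiff_two hh (θ + s)).comp_const_add θ s
    have dh' := (hasDerivAt_deriv_of_contDiff_two hh (θ + s)).comp_const_add θ s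
    refine (((hlin.mul (hasDerivAt_sin s)).mul dh').sub
      (((hasDerivAt_sin s).neg.add (hlin.mul (hasDerivAt_cos s))).mul dh)).congr_deriv ?_
    simp only [curvatureRadius, Pi.mul_apply, Pi.add_apply, Pi.neg_apply]
    ring
  have hint : ∫ s in (0 : ℝ)..(2 * π),
      ((π - s) * sin s * curvatureRadius h (θ + s) + 2 * (cos s * h (θ + s))) =
        2 * π * h θ := by
    rw [intervalIntegral.integral_eq_sub_of_hasDerivAt (fun s _ => hprimitive s)
      (Continuous.intervalIntegrable (by fun_prop) _ _), hper θ]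
    simp only [sin_two_pi, cos_two_pi, sin_zero, cos_zero, add_zero]
    ring
  rw [intervalIntegral.integral_add (Continuous.intervalIntegrable (by fun_prop) _ _)
    (Continuous.intervalIntegrable (by fun_prop) _ _),
    intervalIntegral.integral_const_mul] at hint
  linarith

lemma exists_integral_kernel_mul_curvatureRadius_eq : ∃ c₁ c₂ : ℝ, ∀ θ,
    ∫ s in (0 : ℝ)..(2 * π), (1 - (π - s) * sin s) * curvatureRadius h (θ + s) =
      (∫ s in (0 : ℝ)..(2 * π), h s) - 2 * π * h θ + c₁ * cos θ + c₂ * sin θ := by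
  refine ⟨2 * ∫ s in (0 : ℝ)..(2 * π), h s * cos s, 2 * ∫ s in (0 : ℝ)..(2 * π), h s * sin s,
    fun θ => ?_⟩
  have hρc := continuous_curvatureRadius hh
  simp_rw [sub_mul (1 : ℝ), one_mul]
  rw [intervalIntegral.integral_sub (Continuous.intervalIntegrable (by fun_prop) _ _)
      (Continuous.intervalIntegrable (by fun_prop) _ _),
    integral_periodic_comp_add_left (periodic_curvatureRadius hper),
    integral_curvatureRadius hh hper, integral_pi_sub_mul_sin_mul_curvatureRadius hh hper,
    integral_cos_mul_comp_add_left hh.continuous hper]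
  ring

lemma isoperimetricDeficit_eq_integral_mul_curvatureRadius (c₁ c₂ : ℝ) :
    isoperimetricDeficit h = ∫ θ in (0 : ℝ)..(2 * π),
      ((∫ s in (0 : ℝ)..(2 * π), h s) - 2 * π * h θ + c₁ * cos θ + c₂ * sin θ) *
        curvatureRadius h θ := by
  have hhc := hh.continuous
  have hρc := continuous_curvatureRadius hh
  set L := ∫ s in (0 : ℝ)..(2 * π), h s with hL
  have hsplit (θ : ℝ) : (L - 2 * π * h θ + c₁ * cos θ + c₂ * sin θ) * curvatureRadius h θ =
      L * curvatureRadius h θ - 2 * π * (h θ * curvatureRadius h θ) +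
        c₁ * (curvatureRadius h θ * cos θ) + c₂ * (curvatureRadius h θ * sin θ) := by ring
  simp_rw [hsplit]
  rw [intervalIntegral.integral_add, intervalIntegral.integral_add, intervalIntegral.integral_sub]
  · simp only [intervalIntegral.integral_const_mul, integral_curvatureRadius hh hper,
      integral_curvatureRadius_mul_cos hh hper, integral_curvatureRadius_mul_sin hh hper,
      ← two_mul_wulffArea, isoperimetricDeficit, ← hL]
    ring
  all_goals exact Continuous.intervalIntegrable (by fun_prop) _ _

-- The deficit is `∫∫ (1 - (π - s) sin s) ρ(θ) ρ(θ + s)`, with a kernel bounded by `1`.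
lemma isoperimetricDeficit_le_sq_integral_abs :
    isoperimetricDeficit h ≤ (∫ s in (0 : ℝ)..(2 * π), |curvatureRadius h s|) ^ 2 := by
  have hhc := hh.continuous
  have hρc := continuous_curvatureRadius hh
  have hρper := periodic_curvatureRadius hper
  obtain ⟨c₁, c₂, hkernel⟩ := exists_integral_kernel_mul_curvatureRadius_eq hh hper
  set L := ∫ s in (0 : ℝ)..(2 * π), h s
  set I := ∫ s in (0 : ℝ)..(2 * π), |curvatureRadius h s|
  have hinner (θ : ℝ) : |L - 2 * π * h θ + c₁ * cos θ + c₂ * sin θ| ≤ I := by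
    have hshift : ∫ s in (0 : ℝ)..(2 * π), |curvatureRadius h (θ + s)| = I :=
      integral_periodic_comp_add_left (hρper.comp abs) θ
    rw [← hkernel θ, ← hshift]
    refine (intervalIntegral.abs_integral_le_integral_abs two_pi_pos.le).trans
      (intervalIntegral.integral_mono_on two_pi_pos.le
        (Continuous.intervalIntegrable (by fun_prop) _ _)
        (Continuous.intervalIntegrable (by fun_prop) _ _) fun s hs => ?_)
    rw [abs_mul]
    exact mul_le_of_le_one_left (abs_nonneg _) (abs_one_sub_pi_sub_mul_sin_le_one hs)
  rw [isoperimetricDeficit_eq_integral_mul_curvatureRadius hh hper c₁ c₂, sq,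
    ← intervalIntegral.integral_const_mul]
  refine intervalIntegral.integral_mono_on two_pi_pos.le
    (Continuous.intervalIntegrable (by fun_prop) _ _)
    (Continuous.intervalIntegrable (by fun_prop) _ _) fun θ _ => ?_
  refine (le_abs_self _).trans ?_
  rw [abs_mul]
  exact mul_le_mul_of_nonneg_right (hinner θ) (abs_nonneg _)

lemma isoperimetricDeficit_sub_const (m : ℝ) :
    isoperimetricDeficit (fun s => h s - m) = isoperimetricDeficit h := by
  have hhc := hh.continuous
  have hρc := continuous_curvatureRadius hh
  have hlen : ∫ s in (0 : ℝ)..(2 * π), (h s - m) =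
      (∫ s in (0 : ℝ)..(2 * π), h s) - 2 * π * m := by
    rw [intervalIntegral.integral_sub (hhc.intervalIntegrable _ _)
      (continuous_const.intervalIntegrable _ _), intervalIntegral.integral_const, smul_eq_mul,
      sub_zero]
  have hexpand (s : ℝ) : (h s - m) * (curvatureRadius h s - m) =
      h s * curvatureRadius h s - m * curvatureRadius h s - m * (h s - m) := by ring
  have harea : 2 * wulffArea (fun s => h s - m) = 2 * wulffArea h -
      2 * m * (∫ s in (0 : ℝ)..(2 * π), h s) + 2 * π * m ^ 2 := by
    simp_rw [two_mul_wulffArea, curvatureRadius_sub_const, hexpand]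
    rw [intervalIntegral.integral_sub, intervalIntegral.integral_sub,
      intervalIntegral.integral_const_mul, intervalIntegral.integral_const_mul,
      integral_curvatureRadius hh hper, hlen]
    · ring
    all_goals exact Continuous.intervalIntegrable (by fun_prop) _ _
  simp only [isoperimetricDeficit, hlen]
  linear_combination -2 * π * harea

-- The parallel curve at distance `-m` has the same deficit and radius of curvature `ρ - m`.
lemma isoperimetricDeficit_le_sq_integral_abs_sub (m : ℝ) :
    isoperimetricDeficit h ≤ (∫ s in (0 : ℝ)..(2 * π), |curvatureRadius h s - m|) ^ 2 := by
  have hle := isoperimetricDeficit_le_sq_integral_abs (h := fun s => h s - m)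
    (hh.sub contDiff_const) fun s => by simp only [hper s]
  simpa only [isoperimetricDeficit_sub_const hh hper, curvatureRadius_sub_const] using hle

end Gage

section Optimization

lemma tangent_line_le_one_div {x : ℝ} (hx : 0 < x) (β : ℝ) : 2 * β - β ^ 2 * x ≤ 1 / x := by
  rw [le_div_iff₀ hx]
  nlinarith [sq_nonneg (1 - β * x)]

lemma tangent_line_lt_one_div {x β : ℝ} (hx : 0 < x) (hβ : x ≠ β⁻¹) :
    2 * β - β ^ 2 * x < 1 / x := by
  have hne : 1 - β * x ≠ 0 := fun h => hβ (eq_inv_of_mul_eq_one_right (by linarith))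
  rw [lt_div_iff₀ hx]
  nlinarith [sq_pos_of_ne_zero hne]

/-- The larger of the tangent lines to `x ↦ 1 / x` at `α⁻¹` and at `β⁻¹` (for `0 < β ≤ α`); they
cross at `x = 2 / (α + β)`. -/
noncomputable def tangentMax (α β x : ℝ) : ℝ :=
  α + β - (α ^ 2 + β ^ 2) / 2 * x + (α ^ 2 - β ^ 2) / 2 * |x - 2 / (α + β)|

lemma tangentMax_eq_or {α β : ℝ} (hαβ : α + β ≠ 0) (x : ℝ) :
    tangentMax α β x = 2 * α - α ^ 2 * x ∨ tangentMax α β x = 2 * β - β ^ 2 * x := by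
  rcases abs_cases (x - 2 / (α + β)) with ⟨h, -⟩ | ⟨h, -⟩
  · refine Or.inr ?_
    rw [tangentMax, h]
    field_simp
    ring
  · refine Or.inl ?_
    rw [tangentMax, h]
    field_simp
    ring

lemma tangentMax_le_one_div {α β x : ℝ} (hαβ : α + β ≠ 0) (hx : 0 < x) :
    tangentMax α β x ≤ 1 / x := by
  rcases tangentMax_eq_or hαβ x with h | h <;> rw [h] <;> exact tangent_line_le_one_div hx _

lemma tangentMax_lt_one_div {α β x : ℝ} (hαβ : α + β ≠ 0) (hx : 0 < x) (hα : x ≠ α⁻¹)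
    (hβ : x ≠ β⁻¹) : tangentMax α β x < 1 / x := by
  rcases tangentMax_eq_or hαβ x with h | h <;> rw [h]
  exacts [tangent_line_lt_one_div hx hα, tangent_line_lt_one_div hx hβ]

variable {p q : ℝ} {ρ : ℝ → ℝ}

lemma exists_ne_and_ne_of_continuousOn_Icc (hρc : ContinuousOn ρ (Icc p q))
    (hne : ∃ s ∈ Icc p q, ∃ t ∈ Icc p q, ρ s ≠ ρ t) (c d : ℝ) :
    ∃ s ∈ Icc p q, ρ s ≠ c ∧ ρ s ≠ d := by
  obtain ⟨s, hs, t, ht, hst⟩ := hne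
  have hinf : (ρ '' Icc p q).Infinite :=
    (isPreconnected_Icc.image ρ hρc).infinite_of_nontrivial
      ⟨ρ s, mem_image_of_mem ρ hs, ρ t, mem_image_of_mem ρ ht, hst⟩
  obtain ⟨-, ⟨r, hr, rfl⟩, hnot⟩ := hinf.exists_notMem_finite (toFinite {c, d})
  simp only [mem_insert_iff, mem_singleton_iff, not_or] at hnot
  exact ⟨r, hr, hnot⟩

variable (hpq : p < q) (hρc : ContinuousOn ρ (Icc p q)) (hρ : ∀ s ∈ Icc p q, 0 < ρ s)

include hpq hρc

lemma integral_tangentMax (α β : ℝ) :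
    ∫ s in p..q, tangentMax α β (ρ s) =
      (α + β) * (q - p) - (α ^ 2 + β ^ 2) / 2 * (∫ s in p..q, ρ s) +
        (α ^ 2 - β ^ 2) / 2 * ∫ s in p..q, |ρ s - 2 / (α + β)| := by
  simp only [tangentMax]
  rw [intervalIntegral.integral_add, intervalIntegral.integral_sub,
    intervalIntegral.integral_const_mul, intervalIntegral.integral_const_mul,
    intervalIntegral.integral_const, smul_eq_mul, mul_comm (q - p)]
  all_goals exact ContinuousOn.intervalIntegrable_of_Icc hpq.le (by fun_prop)

include hρ

lemma integral_tangentMax_lt_integral_one_div {α β : ℝ} (hαβ : α + β ≠ 0)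
    (hne : ∃ s ∈ Icc p q, ∃ t ∈ Icc p q, ρ s ≠ ρ t) :
    ∫ s in p..q, tangentMax α β (ρ s) < ∫ s in p..q, 1 / ρ s := by
  obtain ⟨s, hs, hα, hβ⟩ := exists_ne_and_ne_of_continuousOn_Icc hρc hne α⁻¹ β⁻¹
  refine intervalIntegral.integral_lt_integral_of_continuousOn_of_le_of_exists_lt hpq ?_
    (continuousOn_const.div hρc fun s hs => (hρ s hs).ne')
    (fun s hs => tangentMax_le_one_div hαβ (hρ s (Ioc_subset_Icc_self hs)))
    ⟨s, hs, tangentMax_lt_one_div hαβ (hρ s hs) hα hβ⟩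
  simp only [tangentMax]
  fun_prop

-- The tangent points `α⁻¹` and `β⁻¹` are the two values of the extremal density, which equals
-- `(L - D) / (q - p)` on one half of the interval and `(L + D) / (q - p)` on the other.
lemma sq_mul_integral_div_lt_integral_one_div {D : ℝ} (hD : 0 ≤ D)
    (hDL : D < ∫ s in p..q, ρ s) (hdev : ∀ m, D ≤ ∫ s in p..q, |ρ s - m|)
    (hne : ∃ s ∈ Icc p q, ∃ t ∈ Icc p q, ρ s ≠ ρ t) :
    (q - p) ^ 2 * (∫ s in p..q, ρ s) / ((∫ s in p..q, ρ s) ^ 2 - D ^ 2) <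
      ∫ s in p..q, 1 / ρ s := by
  set L := ∫ s in p..q, ρ s
  have hℓ : 0 < q - p := sub_pos.2 hpq
  have hminus : 0 < L - D := sub_pos.2 hDL
  have hplus : 0 < L + D := by linarith
  set α := (q - p) / (L - D) with hα
  set β := (q - p) / (L + D) with hβ
  have hβpos : 0 < β := div_pos hℓ hplus
  have hβα : β ≤ α := div_le_div_of_nonneg_left hℓ.le hminus (by linarith)
  have hcoeff : 0 ≤ (α ^ 2 - β ^ 2) / 2 := by nlinarith
  calc (q - p) ^ 2 * L / (L ^ 2 - D ^ 2)
      = (α + β) * (q - p) - (α ^ 2 + β ^ 2) / 2 * L + (α ^ 2 - β ^ 2) / 2 * D := by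
        have hfactor : L ^ 2 - D ^ 2 = (L - D) * (L + D) := by ring
        rw [hfactor, hα, hβ]
        field_simp
        ring
    _ ≤ ∫ s in p..q, tangentMax α β (ρ s) := by
        rw [integral_tangentMax hpq hρc]
        gcongr
        exact hdev _
    _ < ∫ s in p..q, 1 / ρ s :=
        integral_tangentMax_lt_integral_one_div hpq hρc hρ (by linarith) hne

end Optimization

section StrictGage

variable {h : ℝ → ℝ} (hh : ContDiff ℝ 2 h)

include hh

-- The curve parallel to `h` at distance `-c` degenerates to a point.
lemma exists_eq_const_add_cos_add_sin {c : ℝ} (hc : ∀ s, curvatureRadius h s = c) :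
    ∃ c₀ c₁ c₂ : ℝ, ∀ s, h s = c₀ + c₁ * cos s + c₂ * sin s := by
  set w := wulffPoint (fun s => h s - c)
  have hw (s : ℝ) : HasDerivAt w 0 s := by
    simpa only [curvatureRadius_sub_const, hc, sub_self, zero_smul] using
      hasDerivAt_wulffPoint (hh.sub (contDiff_const (c := c))) s
  refine ⟨c, -(w 0).2, (w 0).1, fun s => ?_⟩
  have hself : height s (w s) = h s - c := height_wulffPoint_self (h := fun s => h s - c) s
  rw [is_const_of_deriv_eq_zero (fun s => (hw s).differentiableAt) (fun s => (hw s).deriv) s 0,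
    height] at hself
  linarith

variable (hρ : ∀ s, 0 < curvatureRadius h s) (hper : Function.Periodic h (2 * π))

include hper

lemma exists_curvatureRadius_ne
    (hround : ¬∃ c₀ c₁ c₂ : ℝ, ∀ s, h s = c₀ + c₁ * cos s + c₂ * sin s) :
    ∃ s ∈ Icc 0 (2 * π), ∃ t ∈ Icc 0 (2 * π), curvatureRadius h s ≠ curvatureRadius h t := by
  by_contra! hconst
  refine hround (exists_eq_const_add_cos_add_sin hh (c := curvatureRadius h 0) fun s => ?_)
  obtain ⟨t, ht, hst⟩ := (periodic_curvatureRadius hper).exists_mem_Ico₀ two_pi_pos s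
  rw [hst]
  exact hconst t (Ico_subset_Icc_self ht) 0 (left_mem_Icc.2 two_pi_pos.le)

include hρ

theorem gage_inequality_strict
    (hround : ¬∃ c₀ c₁ c₂ : ℝ, ∀ s, h s = c₀ + c₁ * cos s + c₂ * sin s) :
    π * (∫ s in (0 : ℝ)..(2 * π), h s) / wulffArea h <
      ∫ s in (0 : ℝ)..(2 * π), 1 / curvatureRadius h s := by
  have hρc := continuous_curvatureRadius hh
  have harea := wulffArea_pos_s18 hh hρ hper
  set L := ∫ s in (0 : ℝ)..(2 * π), h s
  have hρL : ∫ s in (0 : ℝ)..(2 * π), curvatureRadius h s = L := integral_curvatureRadius hh hper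
  have hL : 0 < L := hρL ▸ intervalIntegral.intervalIntegral_pos_of_pos
    (hρc.intervalIntegrable _ _) hρ two_pi_pos
  set D := √(isoperimetricDeficit h)
  have hDL : D < L := (sqrt_lt' hL).2 (sub_lt_self _ (by positivity))
  have hdeficit : L ^ 2 - D ^ 2 ≤ 4 * π * wulffArea h := by
    have hle : L ^ 2 - 4 * π * wulffArea h ≤ D ^ 2 := by
      rw [sq_sqrt']
      exact le_max_left _ _
    linarith
  have hdev (m : ℝ) : D ≤ ∫ s in (0 : ℝ)..(2 * π), |curvatureRadius h s - m| :=
    sqrt_le_iff.2 ⟨intervalIntegral.integral_nonneg two_pi_pos.le fun _ _ => abs_nonneg _,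
      isoperimetricDeficit_le_sq_integral_abs_sub hh hper m⟩
  calc π * L / wulffArea h = (2 * π - 0) ^ 2 * L / (4 * π * wulffArea h) := by
        field_simp
        ring
    _ ≤ (2 * π - 0) ^ 2 * L / (L ^ 2 - D ^ 2) :=
        div_le_div_of_nonneg_left (by positivity)
          (sub_pos.2 (pow_lt_pow_left₀ hDL (sqrt_nonneg _) two_ne_zero)) hdeficit
    _ < ∫ s in (0 : ℝ)..(2 * π), 1 / curvatureRadius h s := by
        rw [← hρL] at hDL ⊢
        exact sq_mul_integral_div_lt_integral_one_div two_pi_pos hρc.continuousOn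
          (fun s _ => hρ s) (sqrt_nonneg _) hDL hdev (exists_curvatureRadius_ne hh hper hround)

end StrictGage

section TangentAngle

lemma cos_sin_ne_zero (θ : ℝ) : (cos θ, sin θ) ≠ 0 := fun h0 => by
  have hsq := cos_sq_add_sin_sq θ
  rw [(Prod.mk.inj h0).1, (Prod.mk.inj h0).2] at hsq
  norm_num at hsq

lemma periodic_eq_or_eq_add_pi_of_sin_sub_eq_zero {α : Type*} {f : ℝ → α}
    (hf : Function.Periodic f (2 * π)) {φ θ : ℝ} (hsin : sin (φ - θ) = 0) :
    f θ = f φ ∨ f θ = f (φ + π) := by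
  obtain ⟨n, hn⟩ := sin_eq_zero_iff.1 hsin
  obtain ⟨k, rfl | rfl⟩ := n.even_or_odd'
  · refine Or.inl ?_
    rw [← hf.int_mul k θ]
    congr 1
    push_cast at hn
    linarith
  · refine Or.inr ?_
    rw [← hf.int_mul (k + 1) θ]
    congr 1
    push_cast at hn ⊢
    linarith

variable {h : ℝ → ℝ} (hh : ContDiff ℝ 2 h)

include hh

lemma speed_wulffPoint_comp {ν : ℝ → ℝ} {c ν' u : ℝ} (hν : HasDerivAt ν ν' u)
    (hw : HasDerivAt (fun u => wulffPoint h (ν u)) (c • (cos (ν u), sin (ν u))) u) :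
    c = curvatureRadius h (ν u) * ν' := by
  have hchain := (hasDerivAt_wulffPoint hh (ν u)).scomp u hν
  rw [smul_smul] at hchain
  rw [mul_comm]
  exact smul_left_injective ℝ (cos_sin_ne_zero (ν u)) (hw.unique hchain)

lemma continuous_deriv_tangentAngle {g ν ν' : ℝ → ℝ} (hρ : ∀ s, curvatureRadius h s ≠ 0)
    (hν : Continuous ν) (hg : Continuous g) (hspeed : ∀ u, g u = curvatureRadius h (ν u) * ν' u) :
    Continuous ν' := by
  have hquot : ν' = fun u => g u / curvatureRadius h (ν u) := by
    ext u
    rw [hspeed, mul_div_cancel_left₀ _ (hρ (ν u))]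
  rw [hquot]
  exact hg.div ((continuous_curvatureRadius hh).comp hν) fun u => hρ (ν u)

variable (hρ : ∀ s, 0 < curvatureRadius h s) (hper : Function.Periodic h (2 * π))
  {y : ℝ → ℝ × ℝ} {g ν ν' : ℝ → ℝ} (hg : ∀ u, 0 < g u)
  (hy : ∀ u, HasDerivAt y (g u • (cos (ν u), sin (ν u))) u)
  (hrange : range y = range (wulffPoint h))

include hρ hper hg hy hrange

-- If `y u = wulffPoint h θ`, then `y u` maximises the height over the tangent line at angle `θ`.
lemma eq_wulffPoint_or_eq_wulffPoint_add_pi (u : ℝ) :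
    y u = wulffPoint h (ν u) ∨ y u = wulffPoint h (ν u + π) := by
  obtain ⟨θ, hθ⟩ : y u ∈ range (wulffPoint h) := hrange ▸ mem_range_self u
  have hmax : IsLocalMax (fun v => height θ (y v)) u := Filter.Eventually.of_forall fun v => by
    obtain ⟨φ, hφ⟩ : y v ∈ range (wulffPoint h) := hrange ▸ mem_range_self v
    simp only [← hφ, ← hθ, height_wulffPoint_self]
    exact height_wulffPoint_le hh hρ hper θ φ
  have hsin : sin (ν u - θ) = 0 :=
    (mul_eq_zero.1 (neg_eq_zero.1
      (hmax.hasDerivAt_eq_zero (hasDerivAt_height θ (hy u))))).resolve_left (hg u).ne'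
  rw [← hθ]
  exact periodic_eq_or_eq_add_pi_of_sin_sub_eq_zero (periodic_wulffPoint hper) hsin

theorem eq_wulffPoint_comp_of_range_eq (hν : ∀ u, HasDerivAt ν (ν' u) u)
    {u₀ u₁ : ℝ} (hu : u₀ < u₁) (hlt : ν u₀ < ν u₁) (u : ℝ) : y u = wulffPoint h (ν u) := by
  have hνc : Continuous ν := continuous_iff_continuousAt.2 fun u => (hν u).continuousAt
  have hyc : Continuous y := continuous_iff_continuousAt.2 fun u => (hy u).continuousAt
  have hwc : Continuous (wulffPoint h) :=
    continuous_iff_continuousAt.2 fun s => (hasDerivAt_wulffPoint hh s).continuousAt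
  rcases eq_or_eq_of_forall_eq_or_eq hyc (hwc.comp hνc) (hwc.comp (hνc.add_const π))
    (fun u => wulffPoint_ne_wulffPoint_add_pi hh hρ (ν u))
    (eq_wulffPoint_or_eq_wulffPoint_add_pi hh hρ hper hg hy hrange) with hcase | hcase
  · exact congrFun hcase u
  · have hneg (u : ℝ) : ν' u < 0 := by
      have hy' := hy u
      rw [hcase, ← neg_smul_neg, Prod.neg_mk, ← cos_add_pi, ← sin_add_pi] at hy'
      have hspeed := speed_wulffPoint_comp hh ((hν u).add_const π) hy'
      exact neg_of_mul_neg_right (hspeed ▸ neg_neg_of_pos (hg u)) (hρ _).le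
    have hanti : StrictAnti ν := strictAnti_of_deriv_neg fun u => (hν u).deriv ▸ hneg u
    exact absurd (hanti hu) hlt.not_gt

end TangentAngle

section ParametricIntegral

variable {α E : Type*} [TopologicalSpace α] [NormedAddCommGroup E] [NormedSpace ℝ E]
  {F F' : α → ℝ → E} {K : Set α} {s : Set ℝ} {t₀ : ℝ}

lemma eventually_norm_sub_sub_smul_le_of_isCompact (hK : IsCompact K) (hs : Convex ℝ s)
    (ht₀ : t₀ ∈ s) (hF' : ContinuousOn (Function.uncurry F') (K ×ˢ s))
    (hF : ∀ u ∈ K, ∀ t ∈ s, HasDerivWithinAt (F u) (F' u t) s t) {ε : ℝ} (hε : 0 < ε) :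
    ∀ᶠ t in 𝓝[s] t₀, ∀ u ∈ K, ‖F u t - F u t₀ - (t - t₀) • F' u t₀‖ ≤ ε * ‖t - t₀‖ := by
  obtain ⟨v, hv, huniform⟩ := hK.mem_uniformity_of_prod (f := fun t u => F' u t)
    (hF'.comp continuous_swap.continuousOn fun p hp => ⟨hp.2, hp.1⟩) ht₀
    (Metric.dist_mem_uniformity hε)
  obtain ⟨r, hr, hball⟩ := Metric.mem_nhdsWithin_iff.1 hv
  filter_upwards [inter_mem_nhdsWithin s (Metric.ball_mem_nhds t₀ hr)] with t ht u hu
  have hconvex : Convex ℝ (s ∩ Metric.ball t₀ r) := hs.inter (convex_ball t₀ r)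
  have hderiv (τ : ℝ) (hτ : τ ∈ s ∩ Metric.ball t₀ r) : HasDerivWithinAt
      (fun τ => F u τ - τ • F' u t₀) (F' u τ - F' u t₀) (s ∩ Metric.ball t₀ r) τ := by
    refine (((hF u hu τ hτ.1).mono inter_subset_left).sub
      ((hasDerivWithinAt_id τ _).smul_const (F' u t₀))).congr_deriv ?_
    rw [one_smul]
  have hbound (τ : ℝ) (hτ : τ ∈ s ∩ Metric.ball t₀ r) : ‖F' u τ - F' u t₀‖ ≤ ε := by
    rw [← dist_eq_norm]
    exact (huniform τ (hball hτ.symm) u hu).le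
  convert hconvex.norm_image_sub_le_of_norm_hasDerivWithin_le hderiv hbound
    ⟨ht₀, Metric.mem_ball_self hr⟩ ht using 2
  rw [sub_smul]
  abel

end ParametricIntegral

section MixedPartials

variable {E : Type*} [NormedAddCommGroup E] [NormedSpace ℝ E] {F F' : ℝ → ℝ → E} {s : Set ℝ}
  {t₀ : ℝ}

theorem hasDerivWithinAt_intervalIntegral_of_continuousOn_s18 {a b : ℝ} (hs : Convex ℝ s)
    (ht₀ : t₀ ∈ s) (hFint : ∀ t ∈ s, IntervalIntegrable (fun u => F u t) MeasureTheory.volume a b)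
    (hF' : ContinuousOn (Function.uncurry F') (uIcc a b ×ˢ s))
    (hF : ∀ u ∈ uIcc a b, ∀ t ∈ s, HasDerivWithinAt (F u) (F' u t) s t) :
    HasDerivWithinAt (fun t => ∫ u in a..b, F u t) (∫ u in a..b, F' u t₀) s t₀ := by
  have hF'int : IntervalIntegrable (fun u => F' u t₀) MeasureTheory.volume a b :=
    (hF'.comp (Continuous.prodMk_left t₀).continuousOn fun u hu => ⟨hu, ht₀⟩).intervalIntegrable
  rw [hasDerivWithinAt_iff_isLittleO, Asymptotics.isLittleO_iff]
  intro ε hε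
  have hpos : 0 < |b - a| + 1 := by positivity
  filter_upwards [eventually_norm_sub_sub_smul_le_of_isCompact isCompact_uIcc hs ht₀ hF' hF
    (div_pos hε hpos), self_mem_nhdsWithin] with t hle ht
  have hlinear : IntervalIntegrable (fun u => (t - t₀) • F' u t₀) MeasureTheory.volume a b :=
    hF'int.smul (t - t₀)
  rw [← intervalIntegral.integral_sub (hFint t ht) (hFint t₀ ht₀),
    ← intervalIntegral.integral_smul,
    ← intervalIntegral.integral_sub ((hFint t ht).sub (hFint t₀ ht₀)) hlinear]
  refine (intervalIntegral.norm_integral_le_of_norm_le_const fun u hu =>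
    hle u (uIoc_subset_uIcc hu)).trans ?_
  calc ε / (|b - a| + 1) * ‖t - t₀‖ * |b - a| = ε * ‖t - t₀‖ * (|b - a| / (|b - a| + 1)) := by ring
    _ ≤ ε * ‖t - t₀‖ :=
        mul_le_of_le_one_right (by positivity) (div_le_one_of_le₀ (by linarith) hpos.le)

lemma hasDerivAt_comp_prodMk_left {G : ℝ × ℝ → E} {G' : ℝ × ℝ →L[ℝ] E} {u t : ℝ} (ht : t ∈ s)
    (hG : HasFDerivWithinAt G G' (univ ×ˢ s) (u, t)) :
    HasDerivAt (fun u => G (u, t)) (G' (1, 0)) u := by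
  have hmaps : MapsTo (fun u => (u, t)) univ ((univ : Set ℝ) ×ˢ s) := fun v _ => ⟨mem_univ v, ht⟩
  rw [← hasDerivWithinAt_univ]
  exact hG.comp_hasDerivWithinAt u
    ((hasDerivWithinAt_id u univ).prodMk (hasDerivWithinAt_const u univ t)) hmaps

lemma hasDerivWithinAt_comp_prodMk_right {G : ℝ × ℝ → E} {G' : ℝ × ℝ →L[ℝ] E} {u t : ℝ}
    (hG : HasFDerivWithinAt G G' (univ ×ˢ s) (u, t)) :
    HasDerivWithinAt (fun t => G (u, t)) (G' (0, 1)) s t :=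
  hG.comp_hasDerivWithinAt t ((hasDerivWithinAt_const t s u).prodMk (hasDerivWithinAt_id t s))
    fun _ hτ => ⟨mem_univ u, hτ⟩

variable (hs : Convex ℝ s) (hsi : (interior s).Nonempty)

include hs hsi

lemma uniqueDiffOn_univ_prod : UniqueDiffOn ℝ ((univ : Set ℝ) ×ˢ s) :=
  uniqueDiffOn_univ.prod (uniqueDiffOn_convex hs hsi)

lemma hasDerivWithinAt_intervalIntegral_of_contDiffOn (a b : ℝ) (ht₀ : t₀ ∈ s)
    (hF : ContDiffOn ℝ 1 (Function.uncurry F) (univ ×ˢ s)) :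
    HasDerivWithinAt (fun t => ∫ u in a..b, F u t) (∫ u in a..b, derivWithin (F u) s t₀) s t₀ := by
  have hpartial (u t : ℝ) (ht : t ∈ s) : HasDerivWithinAt (F u)
      (fderivWithin ℝ (Function.uncurry F) (univ ×ˢ s) (u, t) (0, 1)) s t :=
    hasDerivWithinAt_comp_prodMk_right
      (hF.differentiableOn one_ne_zero (u, t) ⟨mem_univ u, ht⟩).hasFDerivWithinAt
  have hcont : ContinuousOn
      (fun p => fderivWithin ℝ (Function.uncurry F) (univ ×ˢ s) p (0, 1)) (univ ×ˢ s) :=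
    (hF.continuousOn_fderivWithin (uniqueDiffOn_univ_prod hs hsi) le_rfl).clm_apply
      continuousOn_const
  have hderivWithin (u : ℝ) := (hpartial u t₀ ht₀).derivWithin (uniqueDiffOn_convex hs hsi t₀ ht₀)
  simp_rw [hderivWithin]
  refine hasDerivWithinAt_intervalIntegral_of_continuousOn_s18
    (F' := fun u t => fderivWithin ℝ (Function.uncurry F) (univ ×ˢ s) (u, t) (0, 1)) hs ht₀
    (fun t ht => ?_) (hcont.mono (prod_mono_left (subset_univ _))) fun u _ t ht => hpartial u t ht
  exact (hF.continuousOn.comp_continuous (Continuous.prodMk_left t)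
    fun u => ⟨mem_univ u, ht⟩).intervalIntegrable a b

variable {Fu : ℝ → ℝ → E} (hF : ContDiffOn ℝ 2 (Function.uncurry F) (univ ×ˢ s))
  (hFu : ∀ u, ∀ t ∈ s, HasDerivAt (fun u => F u t) (Fu u t) u)

include hF hFu

omit hs hsi in
lemma uncurry_eq_fderivWithin_one_zero {p : ℝ × ℝ} (hp : p ∈ univ ×ˢ s) :
    Function.uncurry Fu p = fderivWithin ℝ (Function.uncurry F) (univ ×ˢ s) p (1, 0) :=
  (hFu p.1 p.2 hp.2).unique (hasDerivAt_comp_prodMk_left hp.2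
    (hF.differentiableOn two_ne_zero p hp).hasFDerivWithinAt)

lemma contDiffOn_uncurry_partial_left : ContDiffOn ℝ 1 (Function.uncurry Fu) (univ ×ˢ s) :=
  ((hF.fderivWithin (uniqueDiffOn_univ_prod hs hsi) one_add_one_eq_two.le).clm_apply
    contDiffOn_const).congr fun _ hp => uncurry_eq_fderivWithin_one_zero hF hFu hp

theorem hasDerivAt_derivWithin_partial_left {V : ℝ → E} {t : ℝ} (ht : t ∈ s)
    (hV : ∀ u, HasDerivWithinAt (F u) (V u) s t) (u : ℝ) :
    HasDerivAt V (derivWithin (Fu u) s t) u := by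
  set S := (univ : Set ℝ) ×ˢ s
  set DF := fderivWithin ℝ (Function.uncurry F) S
  have hunique := uniqueDiffOn_univ_prod hs hsi
  have hp (u : ℝ) : (u, t) ∈ S := ⟨mem_univ u, ht⟩
  have hDF : HasFDerivWithinAt DF (fderivWithin ℝ DF S (u, t)) S (u, t) :=
    ((hF.fderivWithin hunique one_add_one_eq_two.le).differentiableOn one_ne_zero _
      (hp u)).hasFDerivWithinAt
  have hVeq (u : ℝ) : V u = DF (u, t) (0, 1) :=
    (uniqueDiffOn_convex hs hsi t ht).eq_deriv _ (hV u) (hasDerivWithinAt_comp_prodMk_right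
      (hF.differentiableOn two_ne_zero _ (hp u)).hasFDerivWithinAt)
  have hFut : HasDerivWithinAt (Fu u) (fderivWithin ℝ DF S (u, t) (0, 1) (1, 0)) s t := by
    have hDFt := (hasDerivWithinAt_comp_prodMk_right hDF).clm_apply
      (hasDerivWithinAt_const t s ((1, 0) : ℝ × ℝ))
    simp only [map_zero, add_zero] at hDFt
    exact hDFt.congr
      (fun τ hτ => uncurry_eq_fderivWithin_one_zero hF hFu (p := (u, τ)) ⟨mem_univ u, hτ⟩)
      (uncurry_eq_fderivWithin_one_zero hF hFu (hp u))
  have hVu : HasDerivAt V (fderivWithin ℝ DF S (u, t) (1, 0) (0, 1)) u := by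
    have hDFu := (hasDerivAt_comp_prodMk_left ht hDF).clm_apply
      (hasDerivAt_const u ((0, 1) : ℝ × ℝ))
    simp only [map_zero, add_zero] at hDFu
    exact funext hVeq ▸ hDFu
  have hclosure : (u, t) ∈ closure (interior S) := by
    rw [interior_prod_eq, closure_prod_eq, interior_univ, closure_univ,
      hs.closure_interior_eq_closure_of_nonempty_interior hsi]
    exact ⟨mem_univ u, subset_closure ht⟩
  have hsymm : IsSymmSndFDerivWithinAt ℝ (Function.uncurry F) S (u, t) :=
    (hF _ (hp u)).isSymmSndFDerivWithinAt (by simp) hunique hclosure (hp u)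
  rw [hFut.derivWithin (uniqueDiffOn_convex hs hsi t ht), hsymm]
  exact hVu

end MixedPartials

section FirstVariation

lemma contDiffOn_of_contDiffOn_smul_cos_sin {E : Type*} [NormedAddCommGroup E] [NormedSpace ℝ E]
    {r θ : E → ℝ} {S : Set E} {n : WithTop ℕ∞} (hr : ∀ p ∈ S, 0 < r p)
    (h : ContDiffOn ℝ n (fun p => r p • (cos (θ p), sin (θ p))) S) : ContDiffOn ℝ n r S := by
  have hsq (p : E) : (r p * cos (θ p)) ^ 2 + (r p * sin (θ p)) ^ 2 = r p ^ 2 := by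
    linear_combination r p ^ 2 * cos_sq_add_sin_sq (θ p)
  have hsqrt := ((h.fst.pow 2).add (h.snd.pow 2)).sqrt fun p hp => by
    simpa only [Prod.smul_fst, Prod.smul_snd, smul_eq_mul, hsq] using (pow_pos (hr p hp) 2).ne'
  refine hsqrt.congr fun p hp => ?_
  simp only [Prod.smul_fst, Prod.smul_snd, smul_eq_mul, hsq, sqrt_sq (hr p hp).le]

lemma eq_dot_of_hasDerivWithinAt_smul_cos_sin {r θ : ℝ → ℝ} {r' t : ℝ} {v : ℝ × ℝ} {s : Set ℝ}
    (hs : UniqueDiffWithinAt ℝ s t) (hrt : r t ≠ 0) (hr : HasDerivWithinAt r r' s t)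
    (hv : HasDerivWithinAt (fun t => r t • (cos (θ t), sin (θ t))) v s t) :
    r' = v.1 * cos (θ t) + v.2 * sin (θ t) := by
  have hsq (t : ℝ) : (r t * cos (θ t)) ^ 2 + (r t * sin (θ t)) ^ 2 = r t ^ 2 := by
    linear_combination r t ^ 2 * cos_sq_add_sin_sq (θ t)
  have hcomponents := ((hasDerivWithinAt_fst hv).pow 2).add ((hasDerivWithinAt_snd hv).pow 2)
  have heq := hs.eq_deriv _ hcomponents ((hr.pow 2).congr (fun t _ => hsq t) (hsq t))
  simp only [Prod.smul_fst, Prod.smul_snd, smul_eq_mul, Nat.add_one_sub_one, pow_one] at heq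
  refine mul_left_cancel₀ hrt ?_
  push_cast at heq
  linarith

lemma dot_hasDerivAt_smul_normal {κ θ : ℝ → ℝ} {θ' u : ℝ} {v : ℝ × ℝ} (hθ : HasDerivAt θ θ' u)
    (hv : HasDerivAt (fun u => κ u • (-sin (θ u), cos (θ u))) v u) :
    v.1 * cos (θ u) + v.2 * sin (θ u) = -(κ u * θ') := by
  have hdot := ((hasDerivAt_fst hv).mul hθ.cos).add ((hasDerivAt_snd hv).mul hθ.sin)
  have hzero : (fun u => κ u * -sin (θ u) * cos (θ u) + κ u * cos (θ u) * sin (θ u)) =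
      fun _ => 0 := by
    ext u
    ring
  have heq := hdot.unique (hzero ▸ hasDerivAt_const u 0)
  simp only [Prod.smul_fst, Prod.smul_snd, smul_eq_mul] at heq
  linear_combination heq - κ u * θ' * cos_sq_add_sin_sq (θ u)

section Speed

variable {x : ℝ → ℝ → ℝ × ℝ} {g νf : ℝ → ℝ → ℝ} {s : Set ℝ} {t : ℝ} (hs : Convex ℝ s)
  (hsi : (interior s).Nonempty) (ht : t ∈ s)
  (hx : ContDiffOn ℝ 2 (Function.uncurry x) (univ ×ˢ s)) (hg : ∀ u, ∀ t ∈ s, 0 < g u t)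
  (htang : ∀ u, ∀ t ∈ s, HasDerivAt (fun u => x u t) (g u t • (cos (νf u t), sin (νf u t))) u)

include hs hsi hx hg htang

lemma contDiffOn_speed : ContDiffOn ℝ 1 (Function.uncurry g) (univ ×ˢ s) :=
  contDiffOn_of_contDiffOn_smul_cos_sin (fun p hp => hg p.1 p.2 hp.2)
    (contDiffOn_uncurry_partial_left hs hsi hx htang)

include ht

lemma continuous_speed : Continuous fun u => g u t :=
  (contDiffOn_speed hs hsi hx hg htang).continuousOn.comp_continuous (Continuous.prodMk_left t)
    fun u => ⟨mem_univ u, ht⟩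

theorem hasDerivWithinAt_lenF_of_normal_velocity {κ ν' : ℝ → ℝ}
    (hν : ∀ u, HasDerivAt (fun u => νf u t) (ν' u) u)
    (hvel : ∀ u, HasDerivWithinAt (x u) (κ u • (-sin (νf u t), cos (νf u t))) s t) :
    HasDerivWithinAt (lenF g) (∫ u in (0 : ℝ)..1, -(κ u * ν' u)) s t := by
  have hgC := contDiffOn_speed hs hsi hx hg htang
  have hxuC := contDiffOn_uncurry_partial_left hs hsi hx htang
  have hslice (u : ℝ) : MapsTo (fun t => (u, t)) s ((univ : Set ℝ) ×ˢ s) :=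
    fun _ ht => ⟨mem_univ u, ht⟩
  have hgt (u : ℝ) : derivWithin (g u) s t = -(κ u * ν' u) := by
    have hg' : HasDerivWithinAt (g u) (derivWithin (g u) s t) s t :=
      ((hgC.differentiableOn one_ne_zero).comp (by fun_prop) (hslice u) t ht).hasDerivWithinAt
    have hxut := ((hxuC.differentiableOn one_ne_zero).comp (by fun_prop) (hslice u) t
      ht).hasDerivWithinAt
    rw [eq_dot_of_hasDerivWithinAt_smul_cos_sin (uniqueDiffOn_convex hs hsi t ht) (hg u t ht).ne'
      hg' hxut]
    exact dot_hasDerivAt_smul_normal (hν u)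
      (hasDerivAt_derivWithin_partial_left hs hsi hx htang ht hvel u)
  simp_rw [← hgt]
  exact hasDerivWithinAt_intervalIntegral_of_contDiffOn hs hsi 0 1 ht hgC

end Speed

end FirstVariation

section WulffInitialCurve

lemma integral_comp_mul_deriv_of_periodic {φ ν ν' : ℝ → ℝ} {c p q : ℝ} (hφ : Continuous φ)
    (hper : Function.Periodic φ c) (hν : ∀ u, HasDerivAt ν (ν' u) u) (hν' : Continuous ν')
    (hturn : ν q = ν p + c) : ∫ u in p..q, φ (ν u) * ν' u = ∫ s in (0 : ℝ)..c, φ s := by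
  have hsubst := intervalIntegral.integral_comp_mul_deriv (a := p) (b := q) (fun u _ => hν u)
    hν'.continuousOn hφ
  simp only [Function.comp_apply] at hsubst
  rw [hsubst, hturn, hper.intervalIntegral_add_eq (ν p) 0, zero_add]

variable {h : ℝ → ℝ} (hh : ContDiff ℝ 2 h) (hper : Function.Periodic h (2 * π))
  {g νf : ℝ → ℝ → ℝ} {ν' : ℝ → ℝ} {t : ℝ}
  (hspeed : ∀ u, g u t = curvatureRadius h (νf u t) * ν' u)
  (hν : ∀ u, HasDerivAt (fun u => νf u t) (ν' u) u) (hν' : Continuous ν')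
  (hturn : νf 1 t = νf 0 t + 2 * π)

include hh hper hspeed hν hν' hturn

lemma aLenF_eq_integral_mul_curvatureRadius {σ : ℝ → ℝ} (hσ : Continuous σ)
    (hσper : Function.Periodic σ (2 * π)) :
    aLenF σ g νf t = ∫ s in (0 : ℝ)..(2 * π), σ s * curvatureRadius h s := by
  simp only [aLenF, hspeed, ← mul_assoc]
  exact integral_comp_mul_deriv_of_periodic (hσ.mul (continuous_curvatureRadius hh))
    (hσper.mul (periodic_curvatureRadius hper)) hν hν' hturn

lemma areaF_eq_wulffArea {x : ℝ → ℝ → ℝ × ℝ} (hx : ∀ u, x u t = wulffPoint h (νf u t)) :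
    areaF x g νf t = wulffArea h := by
  have hdet (u : ℝ) : (x u t).1 * (g u t * sin (νf u t)) - (x u t).2 * (g u t * cos (νf u t)) =
      h (νf u t) * g u t := by
    rw [← height_wulffPoint_self (h := h) (νf u t), ← hx, height]
    ring
  simp only [areaF, hdet]
  rw [← aLenF, aLenF_eq_integral_mul_curvatureRadius hh hper hspeed hν hν' hturn hh.continuous hper,
    wulffArea]
  rfl

lemma integral_mul_div_speed_sub_const_mul {σ : ℝ → ℝ} (hσ : ContDiff ℝ 2 σ)
    (hσper : Function.Periodic σ (2 * π)) (hρ : ∀ s, curvatureRadius h s ≠ 0)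
    (hg : ∀ u, g u t ≠ 0) (c : ℝ) :
    ∫ u in (0 : ℝ)..1, -((curvatureRadius σ (νf u t) * (ν' u / g u t) - c) * ν' u) =
      ∫ s in (0 : ℝ)..(2 * π), -(curvatureRadius σ s / curvatureRadius h s - c) := by
  have hcurvature (u : ℝ) : ν' u / g u t = 1 / curvatureRadius h (νf u t) := by
    have hgu := hg u
    rw [hspeed] at hgu ⊢
    rw [div_mul_cancel_right₀ (right_ne_zero_of_mul hgu), one_div]
  simp only [hcurvature, mul_one_div, ← neg_mul]
  refine integral_comp_mul_deriv_of_periodic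
    (φ := fun s => -(curvatureRadius σ s / curvatureRadius h s - c)) ?_ (fun s => ?_) hν hν' hturn
  · exact (((continuous_curvatureRadius hσ).div (continuous_curvatureRadius hh) hρ).sub
      continuous_const).neg
  · simp only [periodic_curvatureRadius hσper s, periodic_curvatureRadius hper s]

end WulffInitialCurve

section ModAniso

variable {σ : ℝ → ℝ} {a b : ℝ}

lemma curvatureRadius_modAniso (s : ℝ) :
    curvatureRadius (modAniso σ a b) s = a * curvatureRadius σ s + b :=
  curvatureRadius_const_mul_add_const a b s

lemma modAniso_not_round (ha : a ≠ 0)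
    (hround : ¬∃ c₀ c₁ c₂ : ℝ, ∀ s, σ s = c₀ + c₁ * cos s + c₂ * sin s) :
    ¬∃ c₀ c₁ c₂ : ℝ, ∀ s, modAniso σ a b s = c₀ + c₁ * cos s + c₂ * sin s := by
  rintro ⟨c₀, c₁, c₂, hc⟩
  refine hround ⟨(c₀ - b) / a, c₁ / a, c₂ / a, fun s => mul_left_cancel₀ ha ?_⟩
  have hcs := hc s
  simp only [modAniso] at hcs
  field_simp
  linarith

variable (hσ : ContDiff ℝ 2 σ) (hper : Function.Periodic σ (2 * π))

include hσ in
lemma contDiff_modAniso (a b : ℝ) : ContDiff ℝ 2 (modAniso σ a b) :=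
  (contDiff_const.mul hσ).add contDiff_const

include hper in
lemma periodic_modAniso (a b : ℝ) : Function.Periodic (modAniso σ a b) (2 * π) := fun s => by
  simp only [modAniso, hper s]

include hσ hper

lemma mul_integral_mul_curvatureRadius_modAniso :
    a * ∫ s in (0 : ℝ)..(2 * π), σ s * curvatureRadius (modAniso σ a b) s =
      2 * wulffArea (modAniso σ a b) - b * ∫ s in (0 : ℝ)..(2 * π), modAniso σ a b s := by
  have hh := contDiff_modAniso hσ a b
  have hρ := continuous_curvatureRadius hh
  have hprod : Continuous fun s => modAniso σ a b s * curvatureRadius (modAniso σ a b) s :=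
    hh.continuous.mul hρ
  rw [two_mul_wulffArea, ← integral_curvatureRadius hh (periodic_modAniso hper a b),
    ← intervalIntegral.integral_const_mul, ← intervalIntegral.integral_const_mul,
    ← intervalIntegral.integral_sub (hprod.intervalIntegrable _ _)
      ((hρ.const_mul b).intervalIntegrable _ _)]
  congr 1 with s
  simp only [modAniso]
  ring

lemma integral_neg_anisoperimetric_velocity (ha : a ≠ 0)
    (hρ : ∀ s, 0 < curvatureRadius (modAniso σ a b) s) :
    ∫ s in (0 : ℝ)..(2 * π), -(curvatureRadius σ s / curvatureRadius (modAniso σ a b) s -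
        (∫ s in (0 : ℝ)..(2 * π), σ s * curvatureRadius (modAniso σ a b) s) /
          (2 * wulffArea (modAniso σ a b))) =
      b / a * ((∫ s in (0 : ℝ)..(2 * π), 1 / curvatureRadius (modAniso σ a b) s) -
        π * (∫ s in (0 : ℝ)..(2 * π), modAniso σ a b s) / wulffArea (modAniso σ a b)) := by
  have hh := contDiff_modAniso hσ a b
  have harea := wulffArea_pos_s18 hh hρ (periodic_modAniso hper a b)
  have hρc := continuous_curvatureRadius hh
  have hlength := mul_integral_mul_curvatureRadius_modAniso (a := a) (b := b) hσ hper
  set c := (∫ s in (0 : ℝ)..(2 * π), σ s * curvatureRadius (modAniso σ a b) s) /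
    (2 * wulffArea (modAniso σ a b)) with hc
  have hpointwise (s : ℝ) : -(curvatureRadius σ s / curvatureRadius (modAniso σ a b) s - c) =
      b / a * (1 / curvatureRadius (modAniso σ a b) s) + (c - 1 / a) := by
    have hρs := (hρ s).ne'
    have hσs : curvatureRadius σ s = (curvatureRadius (modAniso σ a b) s - b) / a := by
      rw [curvatureRadius_modAniso, add_sub_cancel_right, mul_div_cancel_left₀ _ ha]
    rw [hσs]
    field_simp
    ring
  have hinv : Continuous fun s => 1 / curvatureRadius (modAniso σ a b) s :=
    continuous_const.div hρc fun s => (hρ s).ne'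
  simp_rw [hpointwise]
  rw [intervalIntegral.integral_add ((hinv.const_mul _).intervalIntegrable _ _)
    (continuous_const.intervalIntegrable _ _), intervalIntegral.integral_const_mul,
    intervalIntegral.integral_const, sub_zero, smul_eq_mul, hc]
  field_simp
  linear_combination π * hlength

end ModAniso

section AnisoperimetricFlow

variable {σ : ℝ → ℝ} {a b : ℝ} {x : ℝ → ℝ → ℝ × ℝ} {g νf : ℝ → ℝ → ℝ} {ν' : ℝ → ℝ}

theorem hasDerivWithinAt_lenF_of_anisoperimetric_velocity {s : Set ℝ} {t : ℝ}
    (hσ : ContDiff ℝ 2 σ) (hσper : Function.Periodic σ (2 * π)) (ha : a ≠ 0)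
    (hρ : ∀ θ, 0 < curvatureRadius (modAniso σ a b) θ)
    (hs : Convex ℝ s) (hsi : (interior s).Nonempty) (ht : t ∈ s)
    (hx : ContDiffOn ℝ 2 (Function.uncurry x) (univ ×ˢ s)) (hg : ∀ u, ∀ t ∈ s, 0 < g u t)
    (htang : ∀ u, ∀ t ∈ s,
      HasDerivAt (fun u => x u t) (g u t • (cos (νf u t), sin (νf u t))) u)
    (hν : ∀ u, HasDerivAt (fun u => νf u t) (ν' u) u) (hturn : νf 1 t = νf 0 t + 2 * π)
    (hflow : ∀ u, HasDerivWithinAt (x u)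
      ((curvatureRadius σ (νf u t) * (ν' u / g u t) - aLenF σ g νf t / (2 * areaF x g νf t)) •
        (-sin (νf u t), cos (νf u t))) s t)
    (hrange : range (fun u => x u t) = range (wulffPoint (modAniso σ a b))) :
    HasDerivWithinAt (lenF g)
      (b / a * ((∫ θ in (0 : ℝ)..(2 * π), 1 / curvatureRadius (modAniso σ a b) θ) -
        π * (∫ θ in (0 : ℝ)..(2 * π), modAniso σ a b θ) / wulffArea (modAniso σ a b))) s t := by
  have hh := contDiff_modAniso hσ a b
  have hper := periodic_modAniso hσper a b
  have hxw (u : ℝ) : x u t = wulffPoint (modAniso σ a b) (νf u t) :=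
    eq_wulffPoint_comp_of_range_eq hh hρ hper (fun u => hg u t ht) (fun u => htang u t ht) hrange
      hν zero_lt_one (hturn ▸ lt_add_of_pos_right _ two_pi_pos) u
  have htangw (u : ℝ) := htang u t ht
  simp only [hxw] at htangw
  have hspeed (u : ℝ) := speed_wulffPoint_comp (ν := fun u => νf u t) hh (hν u) (htangw u)
  have hν' : Continuous ν' := continuous_deriv_tangentAngle hh (fun θ => (hρ θ).ne')
    (continuous_iff_continuousAt.2 fun u => (hν u).continuousAt)
    (continuous_speed hs hsi ht hx hg htang) hspeed
  have hlength := hasDerivWithinAt_lenF_of_normal_velocity hs hsi ht hx hg htang hν hflow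
  rw [areaF_eq_wulffArea hh hper hspeed hν hν' hturn hxw,
    aLenF_eq_integral_mul_curvatureRadius hh hper hspeed hν hν' hturn hσ.continuous hσper,
    integral_mul_div_speed_sub_const_mul hh hper hspeed hν hν' hturn hσ hσper (fun θ => (hρ θ).ne')
      fun u => (hg u t ht).ne',
    integral_neg_anisoperimetric_velocity hσ hσper ha hρ] at hlength
  exact hlength

theorem initial_length_increase_anisoperimetric_flow_general
    (hσ : ContDiff ℝ 2 σ) (hσper : Function.Periodic σ (2 * π))
    (hσconv : ∀ θ, 0 < curvatureRadius σ θ)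
    (hround : ¬∃ c₀ c₁ c₂ : ℝ, ∀ θ, σ θ = c₀ + c₁ * cos θ + c₂ * sin θ)
    (ha : 0 < a) (hb : 0 < b) {T : ℝ} (hT : 0 < T)
    (hx : ContDiffOn ℝ 2 (Function.uncurry x) (univ ×ˢ Ico 0 T))
    (hg : ∀ u, ∀ t ∈ Ico 0 T, 0 < g u t)
    (htang : ∀ u, ∀ t ∈ Ico 0 T,
      HasDerivAt (fun u => x u t) (g u t • (cos (νf u t), sin (νf u t))) u)
    (hν : ∀ u, HasDerivAt (fun u => νf u 0) (ν' u) u) (hturn : νf 1 0 = νf 0 0 + 2 * π)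
    (hflow : ∀ u, HasDerivWithinAt (x u)
      ((curvatureRadius σ (νf u 0) * (ν' u / g u 0) - aLenF σ g νf 0 / (2 * areaF x g νf 0)) •
        (-sin (νf u 0), cos (νf u 0))) (Ico 0 T) 0)
    (hrange : range (fun u => x u 0) = range (wulffPoint (modAniso σ a b))) :
    HasDerivWithinAt (lenF g)
      (b / a * ((∫ θ in (0 : ℝ)..(2 * π), 1 / curvatureRadius (modAniso σ a b) θ) -
        π * (∫ θ in (0 : ℝ)..(2 * π), modAniso σ a b θ) / wulffArea (modAniso σ a b)))
      (Ico 0 T) 0 ∧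
    0 < b / a * ((∫ θ in (0 : ℝ)..(2 * π), 1 / curvatureRadius (modAniso σ a b) θ) -
      π * (∫ θ in (0 : ℝ)..(2 * π), modAniso σ a b θ) / wulffArea (modAniso σ a b)) := by
  have hρ (θ : ℝ) : 0 < curvatureRadius (modAniso σ a b) θ :=
    curvatureRadius_modAniso (σ := σ) θ ▸ add_pos (mul_pos ha (hσconv θ)) hb
  have hinterior : (interior (Ico 0 T)).Nonempty := by
    rw [interior_Ico]
    exact nonempty_Ioo.2 hT
  refine ⟨hasDerivWithinAt_lenF_of_anisoperimetric_velocity hσ hσper ha.ne' hρ (convex_Ico 0 T)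
    hinterior (left_mem_Ico.2 hT) hx hg htang hν hturn hflow hrange, ?_⟩
  exact mul_pos (div_pos hb ha) (sub_pos.2 (gage_inequality_strict (contDiff_modAniso hσ a b) hρ
    (periodic_modAniso hσper a b) (modAniso_not_round ha.ne' hround)))

end AnisoperimetricFlow

/-- Initial length increase for the anisoperimetric ratio gradient flow started from the
modified Wulff shape `∂W_{σ̄}`, `σ̄ = a·σ + b`:
`(d/dt) L(t)|₀ = (b/a)·(∫_{∂W_{σ̄}} k² ds − π·L(∂W_{σ̄})/|W_{σ̄}|) > 0`, where
`∫_{∂W_{σ̄}} k² ds = ∫₀^{2π} dν/(σ̄+σ̄'')` and `L(∂W_{σ̄}) = ∫₀^{2π} σ̄ dν`. -/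
theorem initial_length_increase_anisoperimetric_flow
    (σ : ℝ → ℝ)
    (hσs : ContDiff ℝ (⊤ : ℕ∞) σ) (hσper : ∀ ν, σ (ν + 2 * π) = σ ν)
    (hσpos : ∀ ν, 0 < σ ν) (hσconv : ∀ ν, 0 < σ ν + deriv (deriv σ) ν)
    -- σ is nonconstant and not of the form c₀ + c₁ cos ν + c₂ sin ν
    (hnc : ¬∃ c : ℝ, ∀ s, σ s = c)
    (hnr : ¬∃ c₀ c₁ c₂ : ℝ, ∀ s, σ s = c₀ + c₁ * Real.cos s + c₂ * Real.sin s)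
    (a b : ℝ) (ha : 0 < a) (hb : 0 < b)
    (T : ℝ) (hT : 0 < T) (x : ℝ → ℝ → ℝ × ℝ) (g νf νu : ℝ → ℝ → ℝ)
    (hxs : ContDiffOn ℝ (⊤ : ℕ∞) (fun p : ℝ × ℝ => x p.1 p.2)
      ((Set.univ : Set ℝ) ×ˢ Set.Ico (0:ℝ) T))
    (hνs : ContDiffOn ℝ (⊤ : ℕ∞) (fun p : ℝ × ℝ => νf p.1 p.2)
      ((Set.univ : Set ℝ) ×ˢ Set.Ico (0:ℝ) T))
    (hper : ∀ u, ∀ t ∈ Set.Ico (0:ℝ) T, x (u + 1) t = x u t)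
    (hνper : ∀ u, ∀ t ∈ Set.Ico (0:ℝ) T, νf (u + 1) t = νf u t + 2 * π)
    (hg : ∀ u, ∀ t ∈ Set.Ico (0:ℝ) T, 0 < g u t)
    (htang : ∀ u, ∀ t ∈ Set.Ico (0:ℝ) T,
      HasDerivAt (fun u' => x u' t)
        (g u t • ((Real.cos (νf u t), Real.sin (νf u t)) : ℝ × ℝ)) u)
    (hνu : ∀ u, ∀ t ∈ Set.Ico (0:ℝ) T, HasDerivAt (fun u' => νf u' t) (νu u t) u)
    (hinj : ∀ t ∈ Set.Ico (0:ℝ) T, Set.InjOn (fun u => x u t) (Set.Ico 0 1))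
    (hA : ∀ t ∈ Set.Ico (0:ℝ) T, 0 < areaF x g νf t)
    -- the anisoperimetric ratio gradient flow equation `∂_t x = (k_σ − L_σ/(2A))·N`
    (hflow : ∀ u, ∀ t ∈ Set.Ico (0:ℝ) T,
      HasDerivWithinAt (fun t' => x u t')
        ((((σ (νf u t) + deriv (deriv σ) (νf u t)) * (νu u t / g u t) -
            aLenF σ g νf t / (2 * areaF x g νf t)) •
          ((-Real.sin (νf u t), Real.cos (νf u t)) : ℝ × ℝ)))
        (Set.Ico 0 T) t)
    -- the initial curve parameterizes the Wulff boundary ∂W_{σ̄}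
    (hinit : Set.range (fun u => x u 0) = Set.range (wulffPoint (modAniso σ a b))) :
    HasDerivWithinAt (lenF g)
      ((b / a) *
        ((∫ s in (0:ℝ)..(2 * π),
            1 / (modAniso σ a b s + deriv (deriv (modAniso σ a b)) s)) -
          π * (∫ s in (0:ℝ)..(2 * π), modAniso σ a b s) / wulffArea (modAniso σ a b)))
      (Set.Ico 0 T) 0 ∧
    0 < (b / a) *
        ((∫ s in (0:ℝ)..(2 * π),
            1 / (modAniso σ a b s + deriv (deriv (modAniso σ a b)) s)) -
          π * (∫ s in (0:ℝ)..(2 * π), modAniso σ a b s) / wulffArea (modAniso σ a b)) := by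
  have hzero : (0 : ℝ) ∈ Ico 0 T := left_mem_Ico.2 hT
  exact initial_length_increase_anisoperimetric_flow_general (hσs.of_le (by norm_cast)) hσper
    hσconv hnr ha hb hT (hxs.of_le (by norm_cast)) hg htang (fun u => hνu u 0 hzero)
    (zero_add (1 : ℝ) ▸ hνper 0 0 hzero) (fun u => hflow u 0 hzero) hinit
end
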